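/- arXiv:math/0009183 — 3 statements merged into one kernel-verified Lean document; each statement's English description precedes it below -/
import Mathlib

section
/- Suppose the Y(gl_n)-module L(λ^{(1)})⊗L(λ^{(2)})⊗⋯⊗L(λ^{(k)}) is irreducible, where λ^{(1)},…,λ^{(k)} are gl_n-highest weights. Then for every permutation σ of {1,…,k} there exists a linear isomorphism L(λ^{(1)})⊗⋯⊗L(λ^{(k)}) → L(λ^{(σ(1))})⊗⋯⊗L(λ^{(σ(k))}) intertwining the actions of all the Yangian generators t_{ij}^{(r)}; i.e., any permutation of the tensor factors gives an isomorphic representation of Y(gl_n). -/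
open scoped TensorProduct

/-- An `n`-tuple of complex numbers is a `gl_n`-highest weight if the consecutive
differences `λ_i - λ_{i+1}` are non-negative integers. -/
def IsGLHighestWeight (n : ℕ) (lam : Fin n → ℂ) : Prop :=
  ∀ i : Fin n, ∀ h : (i : ℕ) + 1 < n, ∃ N : ℕ, lam i - lam ⟨(i : ℕ) + 1, h⟩ = N

/-- A realization of the irreducible finite-dimensional `gl_n`-module `L(λ)`
with highest weight `lam`, given by the action of the matrix units `E i j`. -/
structure GLRep (n : ℕ) (lam : Fin n → ℂ) where
  V : Type
  [instAddCommGroup : AddCommGroup V]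
  [instModule : Module ℂ V]
  [instFiniteDimensional : FiniteDimensional ℂ V]
  E : Fin n → Fin n → (V →ₗ[ℂ] V)
  commRel : ∀ i j k l : Fin n,
    E i j ∘ₗ E k l - E k l ∘ₗ E i j
      = (if j = k then E i l else 0) - (if l = i then E k j else 0)
  hv : V
  hv_ne : hv ≠ 0
  hv_upper : ∀ i j : Fin n, i < j → E i j hv = 0
  hv_diag : ∀ i : Fin n, E i i hv = lam i • hv
  irreducible : ∀ U : Submodule ℂ V,
    (∀ i j : Fin n, ∀ v ∈ U, E i j v ∈ U) → U = ⊥ ∨ U = ⊤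

attribute [instance] GLRep.instAddCommGroup GLRep.instModule GLRep.instFiniteDimensional

/-- The action of the Yangian generator `t_{ij}^{(1)}` on `L(λ) ⊗ L(μ)`
(both evaluation modules evaluated at `0`). -/
noncomputable def t1 {n : ℕ} {lam mu : Fin n → ℂ} (A : GLRep n lam) (B : GLRep n mu)
    (i j : Fin n) : A.V ⊗[ℂ] B.V →ₗ[ℂ] A.V ⊗[ℂ] B.V :=
  TensorProduct.map (A.E i j) LinearMap.id + TensorProduct.map LinearMap.id (B.E i j)

/-- The action of the Yangian generator `t_{ij}^{(2)}` on `L(λ) ⊗ L(μ)`. -/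
noncomputable def t2 {n : ℕ} {lam mu : Fin n → ℂ} (A : GLRep n lam) (B : GLRep n mu)
    (i j : Fin n) : A.V ⊗[ℂ] B.V →ₗ[ℂ] A.V ⊗[ℂ] B.V :=
  ∑ a : Fin n, TensorProduct.map (A.E i a) (B.E a j)

/-- Irreducibility of `L(λ) ⊗ L(μ)` as a module over the Yangian `Y(gl_n)`:
the only subspaces invariant under all the operators `t1` and `t2`
(the generators `t_{ij}^{(r)}` with `r ≥ 3` acting as zero) are `⊥` and `⊤`. -/
def YangianIrred2 {n : ℕ} {lam mu : Fin n → ℂ} (A : GLRep n lam) (B : GLRep n mu) : Prop :=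
  ∀ U : Submodule ℂ (A.V ⊗[ℂ] B.V),
    (∀ i j : Fin n, ∀ v ∈ U, t1 A B i j v ∈ U) →
    (∀ i j : Fin n, ∀ v ∈ U, t2 A B i j v ∈ U) →
    U = ⊥ ∨ U = ⊤

attribute [local instance] Classical.propDecidable

/-- The action of the Yangian generator `t_{ij}^{(r)}` on the tensor product
`L(λ^{(1)}) ⊗ ⋯ ⊗ L(λ^{(k)})` of evaluation modules (all evaluated at `0`):
the sum over `1 ≤ p_1 < ⋯ < p_r ≤ k` and over all sequences
`i = a_0, a_1, …, a_r = j` of the operator acting by `E_{a_{s−1} a_s}` in the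
`p_s`-th tensor factor and by the identity in the remaining factors
(the empty sum, hence `0`, when `r > k`). -/
noncomputable def tMulti {k n : ℕ} {lam : Fin k → Fin n → ℂ}
    (M : ∀ p : Fin k, GLRep n (lam p)) (r : ℕ) (i j : Fin n) :
    (⨂[ℂ] p : Fin k, (M p).V) →ₗ[ℂ] ⨂[ℂ] p : Fin k, (M p).V :=
  ∑ p : {p : Fin r → Fin k // StrictMono p},
    ∑ a : {g : Fin (r + 1) → Fin n // g 0 = i ∧ g (Fin.last r) = j},
      PiTensorProduct.map fun q : Fin k =>
        if h : ∃ s : Fin r, p.1 s = q then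
          (M q).E (a.1 h.choose.castSucc) (a.1 h.choose.succ)
        else LinearMap.id

/-- Irreducibility of `L(λ^{(1)}) ⊗ ⋯ ⊗ L(λ^{(k)})` as a `Y(gl_n)`-module:
the only subspaces invariant under the action of all generators `t_{ij}^{(r)}`,
`r ≥ 1`, are `⊥` and `⊤`. -/
def YangianIrredMulti {k n : ℕ} {lam : Fin k → Fin n → ℂ}
    (M : ∀ p : Fin k, GLRep n (lam p)) : Prop :=
  ∀ U : Submodule ℂ (⨂[ℂ] p : Fin k, (M p).V),
    (∀ r : ℕ, 1 ≤ r → ∀ i j : Fin n, ∀ v ∈ U, tMulti M r i j v ∈ U) →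
    U = ⊥ ∨ U = ⊤

section AbstractRTT
open Polynomial

variable {A : Type*} [Ring A] {n : ℕ}

/-- `δ_{ij} + X e_{ij}`. -/
noncomputable def lpoly (e : Fin n → Fin n → A) (i j : Fin n) : A[X] :=
  (if i = j then 1 else 0) + X * C (e i j)

/-- Ordered product of the matrices `1 + X e_p`, `p < m`. -/
noncomputable def tpoly (e : ℕ → Fin n → Fin n → A) : ℕ → Fin n → Fin n → A[X]
  | 0, i, j => if i = j then 1 else 0
  | m + 1, i, j => ∑ a, tpoly e m i a * lpoly (e m) a j

theorem tpoly_succ_eq (e : ℕ → Fin n → Fin n → A) (m : ℕ) (i j : Fin n) :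
    tpoly e (m + 1) i j = tpoly e m i j + ∑ a, tpoly e m i a * X * C (e m a j) := by
  simp [tpoly, lpoly, mul_add, Finset.sum_add_distrib, mul_assoc]

theorem tpoly_coeff_zero (e : ℕ → Fin n → Fin n → A) (m : ℕ) (i j : Fin n) :
    (tpoly e m i j).coeff 0 = if i = j then 1 else 0 := by
  induction m generalizing i j with
  | zero => simp only [tpoly]; split_ifs <;> simp
  | succ m ih => rw [tpoly_succ_eq]; simp [ih]

theorem tpoly_coeff_succ (e : ℕ → Fin n → Fin n → A) (m r : ℕ) (i j : Fin n) :
    (tpoly e (m + 1) i j).coeff (r + 1) =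
      (tpoly e m i j).coeff (r + 1) + ∑ a, (tpoly e m i a).coeff r * e m a j := by
  rw [tpoly_succ_eq]; simp [coeff_mul_X]

theorem tpoly_zero_coeff_succ (e : ℕ → Fin n → Fin n → A) (r : ℕ) (i j : Fin n) :
    (tpoly e 0 i j).coeff (r + 1) = 0 := by
  simp only [tpoly]; split_ifs <;> simp [coeff_one]

theorem tpoly_commute (e : ℕ → Fin n → Fin n → A)
    (hc : ∀ p q, p ≠ q → ∀ i j k l, Commute (e p i j) (e q k l))
    (m p : ℕ) (hp : m ≤ p) (r : ℕ) (i j k l : Fin n) :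
    Commute ((tpoly e m i j).coeff r) (e p k l) := by
  induction m generalizing r i j with
  | zero =>
    cases r with
    | zero => rw [tpoly_coeff_zero]; split_ifs <;> simp
    | succ r => rw [tpoly_zero_coeff_succ]; simp
  | succ m ih =>
    cases r with
    | zero => rw [tpoly_coeff_zero]; split_ifs <;> simp
    | succ r =>
      rw [tpoly_coeff_succ]
      refine Commute.add_left (ih (by omega) _ _ _) (Commute.sum_left _ _ _ fun a _ => ?_)
      exact (ih (by omega) _ _ _).mul_left (hc _ _ (by omega) _ _ _ _)

/-- two-variable RTT relation for a pair of matrices. -/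
def RTT {B : Type*} [Ring B] (x y : B) (t t' : Fin n → Fin n → B) : Prop :=
  ∀ i j k l, (y - x) * (t i j * t' k l - t' k l * t i j)
    = x * y * (t k j * t' i l - t' k j * t i l)

theorem RTT_mul {B : Type*} [Ring B] (x y : B) (hx : ∀ b, Commute x b) (hy : ∀ b, Commute y b)
    (t t' u u' : Fin n → Fin n → B) (h : RTT x y t t') (h' : RTT x y u u')
    (h1 : ∀ i j k l, Commute (t i j) (u' k l))
    (h2 : ∀ i j k l, Commute (t' i j) (u k l)) :
    RTT x y (fun i j => ∑ a, t i a * u a j) (fun i j => ∑ a, t' i a * u' a j) := by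
  intro i j k l
  have e1 : ∀ i j k l, (∑ a, t i a * u a j) * (∑ b, t' k b * u' b l)
      = ∑ a, ∑ b, t i a * t' k b * (u a j * u' b l) := by
    intro i j k l
    rw [Finset.sum_mul_sum]
    refine Finset.sum_congr rfl fun a _ => Finset.sum_congr rfl fun b _ => ?_
    have := (h2 k b a j).eq
    calc _ = t i a * (u a j * t' k b) * u' b l := by noncomm_ring
      _ = _ := by rw [← this]; noncomm_ring
  have e2 : ∀ i j k l, (∑ b, t' k b * u' b l) * (∑ a, t i a * u a j)
      = ∑ a, ∑ b, t' k b * t i a * (u' b l * u a j) := by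
    intro i j k l
    rw [Finset.sum_mul_sum, Finset.sum_comm]
    refine Finset.sum_congr rfl fun a _ => Finset.sum_congr rfl fun b _ => ?_
    have := (h1 i a b l).eq
    calc _ = t' k b * (u' b l * t i a) * u a j := by noncomm_ring
      _ = _ := by rw [← this]; noncomm_ring
  have hyx : ∀ b, Commute (y - x) b := fun b => (hy b).sub_left (hx b)
  have hxy : ∀ b, Commute (x * y) b := fun b => (hx b).mul_left (hy b)
  simp only [e1, e2]
  have key : ∀ a b, (y - x) * (t i a * t' k b * (u a j * u' b l) - t' k b * t i a * (u' b l * u a j))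
     = x * y * (t k a * t' i b * (u a j * u' b l) - t' k a * t i b * (u a j * u' b l)
        + (t' k b * t i a * (u b j * u' a l) - t' k b * t i a * (u' b j * u a l))) := by
    intro a b
    have g1 := h i a k b
    have g2 := h' a j b l
    calc _ = ((y - x) * (t i a * t' k b - t' k b * t i a)) * (u a j * u' b l)
          + ((y - x) * (t' k b * t i a)) * (u a j * u' b l - u' b l * u a j) := by noncomm_ring
      _ = _ := by
        rw [g1, (hyx _).eq, mul_assoc (t' k b * t i a), g2, ← mul_assoc (t' k b * t i a),
          ← (hxy _).eq]
        noncomm_ring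
  rw [← Finset.sum_sub_distrib, Finset.mul_sum, ← Finset.sum_sub_distrib, Finset.mul_sum]
  simp only [← Finset.sum_sub_distrib, Finset.mul_sum, key]
  simp only [mul_add, mul_sub, Finset.sum_add_distrib, Finset.sum_sub_distrib]
  rw [Finset.sum_comm (f := fun a b => x * y * (t' k b * t i a * (u b j * u' a l)))]
  abel

theorem RTT_base {B : Type*} [Ring B] (x y : B) (hx : ∀ b, x * b = b * x)
    (hy : ∀ b, y * b = b * y) (e : Fin n → Fin n → B)
    (he : ∀ i j k l, e i j * e k l - e k l * e i j
      = (if j = k then e i l else 0) - (if l = i then e k j else 0)) :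
    RTT x y (fun i j => (if i = j then 1 else 0) + x * e i j)
      (fun i j => (if i = j then 1 else 0) + y * e i j) := by
  intro i j k l
  have hd : ∀ (i j : Fin n) (b : B), Commute (if i = j then (1 : B) else 0) b := by
    intro i j b; split_ifs <;> simp
  have c1 : ∀ d d' a b : B, Commute d b → Commute d' a →
      Commute d d' → (d + x * a) * (d' + y * b) - (d' + y * b) * (d + x * a)
        = x * y * (a * b - b * a) := by
    intro d d' a b h1 h2 h3
    have i1 : x * a * (y * b) = x * y * (a * b) := by
      rw [mul_assoc, ← mul_assoc a, ← hy a]; simp only [mul_assoc]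
    have i2 : y * b * (x * a) = x * y * (b * a) := by
      rw [mul_assoc, ← mul_assoc b, ← hx b, hx y]; simp only [mul_assoc]
    have i3 : d * (y * b) = y * b * d := by
      rw [← mul_assoc, ← hy d, mul_assoc, h1.eq, mul_assoc]
    have i4 : d' * (x * a) = x * a * d' := by
      rw [← mul_assoc, ← hx d', mul_assoc, h2.eq, mul_assoc]
    simp only [mul_add, add_mul, i1, i2, i3, i4, h3.eq, mul_sub]
    abel
  have c2 : ∀ d d' a b : B, Commute d b → Commute d' a →
      (d + x * a) * (d' + y * b) - (d + y * a) * (d' + x * b)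
        = (y - x) * (d * b - d' * a) := by
    intro d d' a b h1 h2
    have i1 : x * a * (y * b) = y * a * (x * b) := by
      rw [mul_assoc, mul_assoc, ← mul_assoc a y, ← mul_assoc a x, ← hx a, ← hy a]
      simp only [← mul_assoc, hx y]
    have i3 : d * (y * b) = y * (d * b) := by
      rw [← mul_assoc, ← hy d, mul_assoc]
    have i4 : d * (x * b) = x * (d * b) := by
      rw [← mul_assoc, ← hx d, mul_assoc]
    simp only [mul_add, add_mul, i1, i3, i4, mul_sub, sub_mul, h2.eq, mul_assoc]
    abel
  simp only [c1 _ _ _ _ (hd _ _ _) (hd _ _ _) (hd _ _ _), c2 _ _ _ _ (hd _ _ _) (hd _ _ _), he]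
  have c3 : (y - x) * (x * y) = x * y * (y - x) := by
    rw [sub_mul, mul_sub, hy (x * y), hx (x * y)]
  rw [← mul_assoc (y - x), c3, mul_assoc (x * y)]
  congr 2
  simp [eq_comm]

theorem RTT_lpoly (e : Fin n → Fin n → A)
    (he : ∀ i j k l, e i j * e k l - e k l * e i j
      = (if j = k then e i l else 0) - (if l = i then e k j else 0)) :
    RTT (C X : A[X][X]) X (fun i j => C (lpoly e i j)) (fun i j => (lpoly e i j).map C) := by
  intro i j k l
  have hX : ∀ b : A[X][X], (X : A[X][X]) * b = b * X := fun b => (commute_X b).eq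
  have hCX : ∀ b : A[X][X], (C X : A[X][X]) * b = b * C X := by
    intro b; ext s r; simp [X_mul]
  have d : ∀ i j, (C (lpoly e i j) : A[X][X]) = (if i = j then 1 else 0) + C X * C (C (e i j)) := by
    intro i j; simp only [lpoly]; split_ifs <;> simp [C_mul, -X_mul_C]
  have d' : ∀ i j, ((lpoly e i j).map C : A[X][X]) = (if i = j then 1 else 0) + X * C (C (e i j)) := by
    intro i j; simp only [lpoly]; split_ifs <;> simp
  simp only [d, d']
  refine RTT_base (C X) X hCX hX (fun i j => C (C (e i j))) ?_ i j k l
  intro i j k l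
  rw [← C_mul, ← C_mul, ← C_mul, ← C_mul, ← C_sub, ← C_sub, he]
  split_ifs <;> simp

theorem RTT_tpoly (e : ℕ → Fin n → Fin n → A)
    (hc : ∀ p q, p ≠ q → ∀ i j k l, Commute (e p i j) (e q k l))
    (he : ∀ p i j k l, e p i j * e p k l - e p k l * e p i j
      = (if j = k then e p i l else 0) - (if l = i then e p k j else 0)) (m : ℕ) :
    RTT (C X : A[X][X]) X (fun i j => C (tpoly e m i j)) (fun i j => (tpoly e m i j).map C) := by
  have hCX : ∀ b : A[X][X], Commute (C X : A[X][X]) b := by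
    intro b; ext s r; simp [X_mul]
  have hcc : ∀ p q : A[X], (∀ r s, Commute (p.coeff r) (q.coeff s)) →
      Commute (C p : A[X][X]) (q.map C) := by
    intro p q h; ext s r; simpa using (h r s).eq
  induction m with
  | zero =>
    intro i j k l
    simp only [tpoly]
    split_ifs <;> simp_all
  | succ m ih =>
    have := RTT_mul (C X : A[X][X]) X hCX commute_X _ _ _ _ ih (RTT_lpoly (e m) (he m)) ?_ ?_
    · simpa [tpoly, Polynomial.map_sum, Polynomial.map_mul] using this
    all_goals
      intro i j k l
      have hl : ∀ r s, Commute ((tpoly e m i j).coeff r) ((lpoly (e m) k l).coeff s) := by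
        intro r s
        simp only [lpoly, coeff_add]
        refine Commute.add_right ?_ ?_
        · split_ifs
          · rw [coeff_one]; split_ifs <;> simp
          · simp
        · rcases s with _ | s
          · simp
          · simp only [coeff_X_mul, coeff_C]
            split_ifs
            · exact tpoly_commute e hc m m le_rfl _ _ _ _ _
            · simp
    · exact hcc _ _ hl
    · exact (hcc _ _ fun r s => (hl s r).symm).symm

theorem tpoly_rel (e : ℕ → Fin n → Fin n → A)
    (hc : ∀ p q, p ≠ q → ∀ i j k l, Commute (e p i j) (e q k l))
    (he : ∀ p i j k l, e p i j * e p k l - e p k l * e p i j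
      = (if j = k then e p i l else 0) - (if l = i then e p k j else 0)) (m : ℕ)
    (r s : ℕ) (i j k l : Fin n) :
    ((tpoly e m i j).coeff (r+1) * (tpoly e m k l).coeff s
      - (tpoly e m k l).coeff s * (tpoly e m i j).coeff (r+1))
    - ((tpoly e m i j).coeff r * (tpoly e m k l).coeff (s+1)
      - (tpoly e m k l).coeff (s+1) * (tpoly e m i j).coeff r)
    = (tpoly e m k j).coeff r * (tpoly e m i l).coeff s
      - (tpoly e m k j).coeff s * (tpoly e m i l).coeff r := by
  have h := RTT_tpoly e hc he m i j k l
  have h2 := congrArg (fun p => (p.coeff (s+1)).coeff (r+1)) h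
  have h3 : ∀ b : A[X][X], C X * X * b = X * (C X * b) := by
    intro b; rw [← mul_assoc, X_mul]
  simp only [h3, sub_mul, coeff_sub, coeff_X_mul, coeff_C_mul, coeff_mul_C, coeff_map] at h2
  rw [← h2]
  try abel
end AbstractRTT

section Words
variable {n : ℕ} {D : Type*} [AddCommGroup D] [Module ℂ D]

/-- product of the generators along a word -/
noncomputable def wprod (t : ℕ → Fin n → Fin n → Module.End ℂ D)
    (w : List (ℕ × Fin n × Fin n)) : Module.End ℂ D :=
  (w.map fun x => t x.1 x.2.1 x.2.2).prod

/-- degree of a word -/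
def wdeg (w : List (ℕ × Fin n × Fin n)) : ℕ := (w.map fun x => x.1).sum

/-- span of words of degree `< d` -/
noncomputable def wspan (t : ℕ → Fin n → Fin n → Module.End ℂ D) (d : ℕ) :
    Submodule ℂ (Module.End ℂ D) :=
  Submodule.span ℂ {x | ∃ w, wdeg w < d ∧ wprod t w = x}

variable (t : ℕ → Fin n → Fin n → Module.End ℂ D)

theorem wprod_append (u v : List (ℕ × Fin n × Fin n)) :
    wprod t (u ++ v) = wprod t u * wprod t v := by simp [wprod]

theorem wdeg_append (u v : List (ℕ × Fin n × Fin n)) :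
    wdeg (u ++ v) = wdeg u + wdeg v := by simp [wdeg]

theorem wprod_mem (w : List (ℕ × Fin n × Fin n)) (d : ℕ) (h : wdeg w < d) :
    wprod t w ∈ wspan t d := Submodule.subset_span ⟨w, h, rfl⟩

theorem wspan_mul_left (u : List (ℕ × Fin n × Fin n)) (d d' : ℕ) (hd : wdeg u + d ≤ d')
    (x : Module.End ℂ D) (hx : x ∈ wspan t d) : wprod t u * x ∈ wspan t d' := by
  induction hx using Submodule.span_induction with
  | mem x h =>
    obtain ⟨w, hw, rfl⟩ := h
    rw [← wprod_append]
    exact wprod_mem _ _ _ (by rw [wdeg_append]; omega)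
  | zero => simp
  | add x y _ _ hx hy => rw [mul_add]; exact add_mem hx hy
  | smul a x _ hx => rw [mul_smul_comm]; exact Submodule.smul_mem _ _ hx

theorem wspan_mul_right (u : List (ℕ × Fin n × Fin n)) (d d' : ℕ) (hd : d + wdeg u ≤ d')
    (x : Module.End ℂ D) (hx : x ∈ wspan t d) : x * wprod t u ∈ wspan t d' := by
  induction hx using Submodule.span_induction with
  | mem x h =>
    obtain ⟨w, hw, rfl⟩ := h
    rw [← wprod_append]
    exact wprod_mem _ _ _ (by rw [wdeg_append]; omega)
  | zero => simp
  | add x y _ _ hx hy => rw [add_mul]; exact add_mem hx hy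
  | smul a x _ hx => rw [smul_mul_assoc]; exact Submodule.smul_mem _ _ hx

/-- The defining relations of the Yangian. -/
def YRel : Prop := ∀ (r s : ℕ) (i j k l : Fin n),
    (t (r + 1) i j * t s k l - t s k l * t (r + 1) i j)
    - (t r i j * t (s + 1) k l - t (s + 1) k l * t r i j)
    = t r k j * t s i l - t s k j * t r i l

theorem comm_mem (h0 : ∀ i j, t 0 i j = if i = j then 1 else 0) (hR : YRel t)
    (r s : ℕ) (i j k l : Fin n) :
    t r i j * t s k l - t s k l * t r i j ∈ wspan t (r + s) := by
  induction r generalizing s with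
  | zero => rw [h0]; split_ifs <;> simp
  | succ r ih =>
    have h := hR r s i j k l
    rw [sub_eq_iff_eq_add] at h
    rw [h]
    have m : ∀ r' s' i j k l, r' + s' = r + s → t r' i j * t s' k l ∈ wspan t (r + 1 + s) := by
      intro r' s' i j k l hrs
      have := wprod_mem t [(r', i, j), (s', k, l)] (r + 1 + s) (by simp [wdeg]; omega)
      simpa [wprod] using this
    refine add_mem (sub_mem (m _ _ _ _ _ _ rfl) (m _ _ _ _ _ _ (by omega))) ?_
    have := ih (s + 1)
    rwa [show r + (s + 1) = r + 1 + s by omega] at this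

theorem perm_mem (h0 : ∀ i j, t 0 i j = if i = j then 1 else 0) (hR : YRel t)
    (w w' : List (ℕ × Fin n × Fin n)) (h : w.Perm w') :
    wdeg w = wdeg w' ∧ wprod t w - wprod t w' ∈ wspan t (wdeg w) := by
  induction h with
  | nil => simp
  | @cons x u v _ ih =>
    refine ⟨by simpa [wdeg] using ih.1, ?_⟩
    have := wspan_mul_left t [x] (wdeg u) (wdeg (x :: u)) (by simp [wdeg]) _ ih.2
    simpa [wprod, mul_sub] using this
  | swap x y u =>
    refine ⟨by simp [wdeg]; omega, ?_⟩
    have := wspan_mul_right t u (y.1 + x.1) (wdeg (y :: x :: u)) (by simp [wdeg]; omega) _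
      (comm_mem t h0 hR y.1 x.1 y.2.1 y.2.2 x.2.1 x.2.2)
    simpa [wprod, sub_mul, mul_assoc] using this
  | trans _ _ ih1 ih2 =>
    refine ⟨ih1.1.trans ih2.1, ?_⟩
    have := add_mem ih1.2 (ih1.1 ▸ ih2.2)
    simpa using this

theorem word_vanish (h0 : ∀ i j, t 0 i j = if i = j then 1 else 0) (hR : YRel t)
    (η : D) (g : D →ₗ[ℂ] ℂ) (hup : ∀ r i j, i < j → t r i j η = 0)
    (hdiag : ∀ r i, ∃ c : ℂ, t r i i η = c • η)
    (hlow : ∀ r i j, j < i → ∀ x, g (t r i j x) = 0) (hg : g η = 0)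
    (w : List (ℕ × Fin n × Fin n)) : g (wprod t w η) = 0 := by
  obtain ⟨d, hd⟩ : ∃ d, wdeg w = d := ⟨_, rfl⟩
  induction d using Nat.strong_induction_on generalizing w with
  | _ d ih =>
    have hspan : ∀ x ∈ wspan t d, g (x η) = 0 := by
      intro x hx
      induction hx using Submodule.span_induction with
      | mem x h =>
        obtain ⟨w, hw, rfl⟩ := h
        exact ih _ hw w rfl
      | zero => simp
      | add x y _ _ hx hy => simp [hx, hy]
      | smul a x _ hx => simp [hx]
    have hperm : ∀ w', w.Perm w' → g (wprod t w' η) = 0 → g (wprod t w η) = 0 := by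
      intro w' h h'
      have := hspan _ (hd ▸ (perm_mem t h0 hR w w' h).2)
      simpa [h'] using this
    by_cases c1 : ∃ x ∈ w, x.2.1 < x.2.2
    · obtain ⟨x, hx, hlt⟩ := c1
      refine hperm (w.erase x ++ [x]) ?_ ?_
      · exact (List.perm_cons_erase hx).trans (List.perm_append_singleton _ _).symm
      · rw [wprod_append]
        simp [wprod, hup _ _ _ hlt]
    by_cases c2 : ∃ x ∈ w, x.2.2 < x.2.1
    · obtain ⟨x, hx, hlt⟩ := c2
      refine hperm (x :: w.erase x) (List.perm_cons_erase hx) ?_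
      simp [wprod, hlow _ _ _ hlt]
    push Not at c1 c2
    have : ∃ c : ℂ, wprod t w η = c • η := by
      clear hperm hd
      induction w with
      | nil => exact ⟨1, by simp [wprod]⟩
      | cons x u ihu =>
        obtain ⟨c, hc⟩ := ihu (fun y hy => c1 y (by simp [hy])) (fun y hy => c2 y (by simp [hy]))
        have e : x.2.1 = x.2.2 := le_antisymm (c2 x (by simp)) (c1 x (by simp))
        obtain ⟨c', hc'⟩ := hdiag x.1 x.2.2
        refine ⟨c * c', ?_⟩
        have : wprod t (x :: u) = t x.1 x.2.1 x.2.2 * wprod t u := by simp [wprod]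
        rw [this, Module.End.mul_apply, hc, e, map_smul, hc', smul_smul]
    obtain ⟨c, hc⟩ := this
    rw [hc]; simp [hg]

/-- Two modules with the same highest weight, the first irreducible, of the same dimension. -/
theorem iso_of_irred {T T' : Type*} [AddCommGroup T] [Module ℂ T] [AddCommGroup T'] [Module ℂ T']
    [FiniteDimensional ℂ T] [FiniteDimensional ℂ T']
    (hdim : Module.finrank ℂ T = Module.finrank ℂ T')
    (t : ℕ → Fin n → Fin n → Module.End ℂ T) (t' : ℕ → Fin n → Fin n → Module.End ℂ T')
    (h0 : ∀ i j, t 0 i j = if i = j then 1 else 0) (h0' : ∀ i j, t' 0 i j = if i = j then 1 else 0)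
    (hR : YRel t) (hR' : YRel t')
    (ξ : T) (ξ' : T') (f : T →ₗ[ℂ] ℂ) (f' : T' →ₗ[ℂ] ℂ) (c : ℕ → Fin n → ℂ)
    (hup : ∀ r i j, i < j → t r i j ξ = 0) (hup' : ∀ r i j, i < j → t' r i j ξ' = 0)
    (hdiag : ∀ r i, t r i i ξ = c r i • ξ) (hdiag' : ∀ r i, t' r i i ξ' = c r i • ξ')
    (hlow : ∀ r i j, j < i → ∀ x, f (t r i j x) = 0)
    (hlow' : ∀ r i j, j < i → ∀ x, f' (t' r i j x) = 0)
    (hf : f ξ = 1) (hf' : f' ξ' = 1)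
    (hirr : ∀ U : Submodule ℂ T, (∀ r, 1 ≤ r → ∀ i j, ∀ v ∈ U, t r i j v ∈ U) → U = ⊥ ∨ U = ⊤) :
    ∃ φ : T ≃ₗ[ℂ] T', ∀ r i j x, φ (t r i j x) = t' r i j (φ x) := by
  let τ : ℕ → Fin n → Fin n → Module.End ℂ (T × T') := fun r i j => (t r i j).prodMap (t' r i j)
  have τ0 : ∀ i j, τ 0 i j = if i = j then 1 else 0 := by
    intro i j
    simp only [τ, h0, h0']
    split_ifs <;> rfl
  have τR : YRel τ := by
    intro r s i j k l
    refine LinearMap.ext fun x => Prod.ext ?_ ?_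
    · exact congrArg (fun m => m x.1) (hR r s i j k l)
    · exact congrArg (fun m => m x.2) (hR' r s i j k l)
  let g : T × T' →ₗ[ℂ] ℂ := f.coprod (-f')
  have hg : ∀ x, g x = f x.1 - f' x.2 := by intro x; simp [g, sub_eq_add_neg]
  have hv := word_vanish τ τ0 τR (ξ, ξ') g
    (by intro r i j h; simp [τ, hup _ _ _ h, hup' _ _ _ h])
    (by intro r i; exact ⟨c r i, by simp [τ, hdiag, hdiag']⟩)
    (by intro r i j h x; rw [hg]; simp [τ, hlow _ _ _ h, hlow' _ _ _ h])
    (by rw [hg]; simp [hf, hf'])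
  let N : Submodule ℂ (T × T') := Submodule.span ℂ (Set.range fun w => wprod τ w (ξ, ξ'))
  have hN : ∀ r i j, ∀ x ∈ N, τ r i j x ∈ N := by
    intro r i j x hx
    induction hx using Submodule.span_induction with
    | mem x h =>
      obtain ⟨w, rfl⟩ := h
      refine Submodule.subset_span ⟨(r, i, j) :: w, ?_⟩
      simp [wprod]
    | zero => simp
    | add x y _ _ hx hy => rw [map_add]; exact add_mem hx hy
    | smul a x _ hx => rw [map_smul]; exact Submodule.smul_mem _ _ hx
  have hgN : ∀ x ∈ N, f x.1 = f' x.2 := by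
    intro x hx
    rw [← sub_eq_zero, ← hg]
    induction hx using Submodule.span_induction with
    | mem x h =>
      obtain ⟨w, rfl⟩ := h
      exact hv w
    | zero => simp
    | add x y _ _ hx hy => rw [map_add, hx, hy, add_zero]
    | smul a x _ hx => rw [map_smul, hx, smul_zero]
  have hξN : (ξ, ξ') ∈ N := Submodule.subset_span ⟨[], by simp [wprod]⟩
  let p1 : N →ₗ[ℂ] T := LinearMap.fst ℂ T T' ∘ₗ N.subtype
  let p2 : N →ₗ[ℂ] T' := LinearMap.snd ℂ T T' ∘ₗ N.subtype
  have hs1 : Function.Surjective p1 := by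
    rw [← LinearMap.range_eq_top]
    refine (hirr _ ?_).resolve_left ?_
    · rintro r _ i j _ ⟨⟨x, hx⟩, rfl⟩
      exact ⟨⟨τ r i j x, hN _ _ _ _ hx⟩, rfl⟩
    · intro h
      have : ξ ∈ LinearMap.range p1 := ⟨⟨_, hξN⟩, rfl⟩
      rw [h, Submodule.mem_bot] at this
      rw [this] at hf
      simp at hf
  have hi2 : Function.Injective p2 := by
    let R : Submodule ℂ T := N.comap (LinearMap.inl ℂ T T')
    have hR0 : R = ⊥ := by
      refine (hirr R ?_).resolve_right ?_
      · intro r _ i j v hv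
        have := hN r i j _ hv
        simpa [R, τ] using this
      · intro h
        have : ξ ∈ R := by rw [h]; trivial
        have := hgN _ this
        simp [hf] at this
    rw [← LinearMap.ker_eq_bot, LinearMap.ker_eq_bot']
    rintro ⟨⟨x, y⟩, hx⟩ h
    have hy : y = 0 := h
    subst hy
    have : x ∈ R := hx
    rw [hR0, Submodule.mem_bot] at this
    subst this
    rfl
  have d1 := LinearMap.finrank_le_finrank_of_injective hi2
  have d2 := LinearMap.finrank_le_finrank_of_surjective hs1
  have dN1 : Module.finrank ℂ N = Module.finrank ℂ T := by omega
  have dN2 : Module.finrank ℂ N = Module.finrank ℂ T' := by omega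
  have hi1 : Function.Injective p1 :=
    (LinearMap.injective_iff_surjective_of_finrank_eq_finrank dN1).2 hs1
  have hs2 : Function.Surjective p2 :=
    (LinearMap.injective_iff_surjective_of_finrank_eq_finrank dN2).1 hi2
  let e1 := LinearEquiv.ofBijective p1 ⟨hi1, hs1⟩
  let e2 := LinearEquiv.ofBijective p2 ⟨hi2, hs2⟩
  refine ⟨e1.symm.trans e2, ?_⟩
  intro r i j x
  obtain ⟨z, rfl⟩ := e1.surjective x
  have : t r i j (e1 z) = e1 ⟨τ r i j z.1, hN _ _ _ _ z.2⟩ := rfl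
  rw [this]
  simp only [LinearEquiv.trans_apply, LinearEquiv.symm_apply_apply]
  rfl
end Words

section GLFunctional
variable {n : ℕ} {lam : Fin n → ℂ} (G : GLRep n lam)

theorem GLRep.exists_functional : ∃ f : G.V →ₗ[ℂ] ℂ, f G.hv = 1 ∧
    ∀ i j : Fin n, j < i → ∀ x, f (G.E i j x) = 0 := by
  let H : Module.End ℂ G.V := ∑ i : Fin n, (-(i : ℂ)) • G.E i i
  have hcomm : ∀ i j k l x, G.E i j (G.E k l x) = G.E k l (G.E i j x)
      + ((if j = k then G.E i l x else 0) - (if l = i then G.E k j x else 0)) := by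
    intro i j k l x
    have h := congrArg (fun f => f x) (G.commRel i j k l)
    simp only [LinearMap.sub_apply, LinearMap.comp_apply] at h
    rw [sub_eq_iff_eq_add'] at h
    rw [h]
    split_ifs <;> simp
  have hH : ∀ i j x, H (G.E i j x) = G.E i j (H x) + ((j : ℂ) - i) • G.E i j x := by
    intro i j x
    simp only [H, LinearMap.sum_apply, LinearMap.smul_apply, map_sum, map_smul]
    have : ∀ k : Fin n, (-(k : ℂ)) • G.E k k (G.E i j x) = (-(k : ℂ)) • G.E i j (G.E k k x)
        + ((if k = i then (-(k : ℂ)) • G.E k j x else 0)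
          - (if j = k then (-(k : ℂ)) • G.E i k x else 0)) := by
      intro k
      rw [hcomm k k i j x]
      simp only [smul_add, smul_sub, smul_ite, smul_zero]
    rw [Finset.sum_congr rfl fun k _ => this k, Finset.sum_add_distrib, Finset.sum_sub_distrib]
    rw [Finset.sum_ite_eq', Finset.sum_ite_eq]
    simp [sub_smul]
    abel
  obtain ⟨μ, hμ⟩ : ∃ μ : ℂ, H G.hv = μ • G.hv := by
    refine ⟨∑ i : Fin n, (-(i : ℂ)) * lam i, ?_⟩
    simp [H, LinearMap.sum_apply, G.hv_diag, Finset.sum_smul, smul_smul]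
  -- eigenspace pieces
  have hlow : ∀ (i j : Fin n) (d : ℕ) x, j < i → x ∈ Module.End.eigenspace H (μ - d) →
      ∃ d' : ℕ, 1 ≤ d' ∧ G.E i j x ∈ Module.End.eigenspace H (μ - d') := by
    intro i j d x hij hx
    rw [Module.End.mem_eigenspace_iff] at hx
    refine ⟨d + ((i : ℕ) - (j : ℕ)), by omega, ?_⟩
    rw [Module.End.mem_eigenspace_iff, hH, hx, map_smul, ← add_smul]
    congr 1
    have : (j : ℕ) ≤ i := by omega
    push_cast [this]
    ring
  let W : Submodule ℂ G.V := ⨆ d : ℕ, Module.End.eigenspace H (μ - d)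
  let F : Submodule ℂ G.V := ⨆ d : ℕ, Module.End.eigenspace H (μ - (d + 1 : ℕ))
  have hWF : ∀ i j : Fin n, j < i → ∀ x ∈ W, G.E i j x ∈ F := by
    intro i j hij x hx
    induction hx using Submodule.iSup_induction' with
    | mem d x hx =>
      obtain ⟨d', h1, h2⟩ := hlow i j d x hij hx
      obtain ⟨d'', rfl⟩ : ∃ d'', d' = d'' + 1 := ⟨d' - 1, by omega⟩
      exact Submodule.mem_iSup_of_mem d'' h2
    | zero => simp
    | add x y _ _ hx hy => rw [map_add]; exact add_mem hx hy
  have hFW : F ≤ W := iSup_le fun d => le_iSup (fun d : ℕ => Module.End.eigenspace H (μ - d)) (d + 1)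
  -- filtration by word length
  let Z : ℕ → Submodule ℂ G.V := fun d => Nat.rec (Submodule.span ℂ {G.hv})
    (fun _ P => P ⊔ ⨆ (p : {p : Fin n × Fin n // p.2 < p.1}), P.map (G.E p.1.1 p.1.2)) d
  have Zs : ∀ d, Z (d + 1) = Z d ⊔ ⨆ (p : {p : Fin n × Fin n // p.2 < p.1}),
      (Z d).map (G.E p.1.1 p.1.2) := fun d => rfl
  have Zlow : ∀ d i j x, j < i → x ∈ Z d → G.E i j x ∈ Z (d + 1) := by
    intro d i j x hij hx
    rw [Zs]
    refine Submodule.mem_sup_right ?_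
    exact Submodule.mem_iSup_of_mem ⟨(i, j), hij⟩ ⟨x, hx, rfl⟩
  have Zmono : ∀ d, Z d ≤ Z (d + 1) := fun d => by rw [Zs]; exact le_sup_left
  have Zup : ∀ d i j x, i ≤ j → x ∈ Z d → G.E i j x ∈ Z d := by
    intro d
    induction d with
    | zero =>
      intro i j x hij hx
      obtain ⟨a, rfl⟩ := Submodule.mem_span_singleton.1 hx
      rw [map_smul]
      refine Submodule.smul_mem _ _ ?_
      rcases hij.eq_or_lt with rfl | h
      · rw [G.hv_diag]; exact Submodule.smul_mem _ _ (Submodule.mem_span_singleton_self _)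
      · rw [G.hv_upper _ _ h]; exact zero_mem _
    | succ d ih =>
      intro i j x hij hx
      have hany : ∀ k l y, y ∈ Z d → G.E k l y ∈ Z (d + 1) := by
        intro k l y hy
        rcases le_or_gt k l with h | h
        · exact Zmono d (ih k l y h hy)
        · exact Zlow d k l y h hy
      have : Z (d + 1) ≤ (Z (d + 1)).comap (G.E i j) := by
        conv_lhs => rw [Zs]
        refine sup_le (fun y hy => hany _ _ _ hy) (iSup_le ?_)
        rintro ⟨⟨k, l⟩, hkl⟩ _ ⟨y, hy, rfl⟩
        change G.E i j (G.E k l y) ∈ Z (d + 1)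
        rw [hcomm]
        refine add_mem (Zlow _ _ _ _ hkl (ih _ _ _ hij hy)) (sub_mem ?_ ?_)
        · split_ifs
          · exact hany _ _ _ hy
          · exact zero_mem _
        · split_ifs
          · exact hany _ _ _ hy
          · exact zero_mem _
      exact this hx
  have ZW : ∀ d, Z d ≤ W := by
    intro d
    induction d with
    | zero =>
      refine (Submodule.span_singleton_le_iff_mem _ _).2 (Submodule.mem_iSup_of_mem 0 ?_)
      rw [Module.End.mem_eigenspace_iff, hμ]; simp
    | succ d ih =>
      rw [Zs]
      refine sup_le ih (iSup_le ?_)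
      rintro ⟨⟨k, l⟩, hkl⟩ _ ⟨y, hy, rfl⟩
      exact hFW (hWF _ _ hkl _ (ih hy))
  have hW : W = ⊤ := by
    have hdir : Monotone Z := monotone_nat_of_le_succ Zmono
    have hZ : (⨆ d, Z d) = ⊤ := by
      refine (G.irreducible _ ?_).resolve_left ?_
      · intro i j v hv
        rw [Submodule.mem_iSup_of_directed _ hdir.directed_le] at hv ⊢
        obtain ⟨d, hd⟩ := hv
        refine ⟨d + 1, ?_⟩
        rcases le_or_gt i j with h | h
        · exact Zmono d (Zup d i j v h hd)
        · exact Zlow d i j v h hd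
      · intro h
        have : G.hv ∈ ⨆ d, Z d :=
          Submodule.mem_iSup_of_mem 0 (Submodule.mem_span_singleton_self _)
        rw [h, Submodule.mem_bot] at this
        exact G.hv_ne this
    exact top_le_iff.1 (hZ ▸ iSup_le ZW)
  have hnot : G.hv ∉ F := by
    intro hF
    have hind := Module.End.eigenspaces_iSupIndep H μ
    have h1 : G.hv ∈ Module.End.eigenspace H μ := Module.End.mem_eigenspace_iff.2 hμ
    have h2 : F ≤ ⨆ (ν : ℂ) (_ : ν ≠ μ), Module.End.eigenspace H ν := by
      refine iSup_le fun d => ?_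
      refine le_iSup₂_of_le (μ - (d + 1 : ℕ)) ?_ le_rfl
      intro h
      rw [sub_eq_self] at h
      exact Nat.succ_ne_zero d (by exact_mod_cast h)
    exact G.hv_ne (Submodule.disjoint_def.1 hind _ h1 (h2 hF))
  obtain ⟨f, hf, hfF⟩ := Submodule.exists_le_ker_of_notMem hnot
  refine ⟨(f G.hv)⁻¹ • f, by simp [hf], ?_⟩
  intro i j hij x
  have : G.E i j x ∈ F := hWF i j hij x (hW ▸ Submodule.mem_top)
  have := hfF this
  rw [LinearMap.mem_ker] at this
  simp [this]
end GLFunctional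

section Slots
variable {k n : ℕ} {lam : Fin k → Fin n → ℂ} (M : ∀ p : Fin k, GLRep n (lam p))

/-- The operator acting by `x` in the `q`-th tensor factor. -/
noncomputable def slot (q : Fin k) (x : Module.End ℂ (M q).V) :
    Module.End ℂ (⨂[ℂ] p : Fin k, (M p).V) :=
  PiTensorProduct.map (Function.update (fun p => (LinearMap.id : (M p).V →ₗ[ℂ] (M p).V)) q x)

theorem slot_mul (q : Fin k) (x y : Module.End ℂ (M q).V) :
    slot M q (x * y) = slot M q x * slot M q y := by
  rw [slot, slot, slot, ← PiTensorProduct.map_mul]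
  congr 1
  funext p
  by_cases h : p = q
  · subst h; simp
  · simp [h]; rfl

theorem slot_add (q : Fin k) (x y : Module.End ℂ (M q).V) :
    slot M q (x + y) = slot M q x + slot M q y :=
  PiTensorProduct.map_update_add _ _ _ _

theorem slot_smul (q : Fin k) (c : ℂ) (x : Module.End ℂ (M q).V) :
    slot M q (c • x) = c • slot M q x :=
  PiTensorProduct.map_update_smul _ _ _ _

theorem slot_zero (q : Fin k) : slot M q 0 = 0 := by
  have := slot_smul M q 0 0
  simpa using this

theorem slot_sub (q : Fin k) (x y : Module.End ℂ (M q).V) :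
    slot M q (x - y) = slot M q x - slot M q y := by
  rw [eq_sub_iff_add_eq, ← slot_add, sub_add_cancel]

theorem slot_commute (p q : Fin k) (h : p ≠ q) (x : Module.End ℂ (M p).V)
    (y : Module.End ℂ (M q).V) : Commute (slot M p x) (slot M q y) := by
  rw [Commute, SemiconjBy, slot, slot, ← PiTensorProduct.map_mul, ← PiTensorProduct.map_mul]
  congr 1
  funext a
  by_cases h1 : a = p
  · subst h1; simp [h]; rfl
  · by_cases h2 : a = q
    · subst h2; simp [h1]; rfl
    · simp [h1, h2]

theorem slot_tprod (q : Fin k) (x : Module.End ℂ (M q).V) (v : ∀ p, (M p).V) :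
    slot M q x (PiTensorProduct.tprod ℂ v)
      = PiTensorProduct.tprod ℂ (Function.update v q (x (v q))) := by
  rw [slot, PiTensorProduct.map_tprod]
  congr 1
  funext p
  by_cases h : p = q
  · subst h; simp
  · simp [h]

/-- `E_{ij}` acting in the `p`-th factor (zero if there is no such factor). -/
noncomputable def eM (p : ℕ) (i j : Fin n) : Module.End ℂ (⨂[ℂ] p : Fin k, (M p).V) :=
  if h : p < k then slot M ⟨p, h⟩ ((M ⟨p, h⟩).E i j) else 0

theorem eM_commute (p q : ℕ) (h : p ≠ q) (i j a b : Fin n) :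
    Commute (eM M p i j) (eM M q a b) := by
  unfold eM
  split_ifs
  · exact slot_commute _ _ _ (by simpa using h) _ _
  all_goals simp

theorem eM_rel (p : ℕ) (i j a b : Fin n) :
    eM M p i j * eM M p a b - eM M p a b * eM M p i j
      = (if j = a then eM M p i b else 0) - (if b = i then eM M p a j else 0) := by
  unfold eM
  by_cases h : p < k
  · simp only [h, dite_true]
    rw [← slot_mul, ← slot_mul, ← slot_sub]
    have := (M ⟨p, h⟩).commRel i j a b
    rw [Module.End.mul_eq_comp, Module.End.mul_eq_comp, this, slot_sub]
    split_ifs <;> simp [slot_zero]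
  · simp [h]

/-- The highest vector of the tensor product. -/
noncomputable def hvM : ⨂[ℂ] p : Fin k, (M p).V := PiTensorProduct.tprod ℂ fun p => (M p).hv

theorem eM_up (p : ℕ) (i j : Fin n) (h : i < j) : eM M p i j (hvM M) = 0 := by
  unfold eM
  split_ifs with hp
  · rw [hvM, slot_tprod, (M ⟨p, hp⟩).hv_upper i j h]
    exact (PiTensorProduct.tprod ℂ).map_update_zero _ _
  · simp

theorem eM_diag (p : ℕ) (hp : p < k) (i : Fin n) :
    eM M p i i (hvM M) = lam ⟨p, hp⟩ i • hvM M := by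
  unfold eM
  rw [dif_pos hp, hvM, slot_tprod, (M ⟨p, hp⟩).hv_diag i,
    (PiTensorProduct.tprod ℂ).map_update_smul, Function.update_eq_self]

theorem exists_functional_M : ∃ f : (⨂[ℂ] p : Fin k, (M p).V) →ₗ[ℂ] ℂ, f (hvM M) = 1 ∧
    ∀ p (i j : Fin n), j < i → ∀ x, f (eM M p i j x) = 0 := by
  choose f hf hlow using fun p => (M p).exists_functional
  refine ⟨PiTensorProduct.lift ((MultilinearMap.mkPiAlgebra ℂ (Fin k) ℂ).compLinearMap f), ?_, ?_⟩
  · simp [hvM, hf]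
  · intro p i j hij x
    unfold eM
    split_ifs with hp
    · induction x using PiTensorProduct.induction_on with
      | smul_tprod c v =>
        rw [map_smul, map_smul, slot_tprod]
        simp only [PiTensorProduct.lift.tprod, MultilinearMap.compLinearMap_apply,
          MultilinearMap.mkPiAlgebra_apply, smul_eq_mul, mul_eq_zero]
        right
        refine Finset.prod_eq_zero (Finset.mem_univ (⟨p, hp⟩ : Fin k)) ?_
        simp [hlow _ i j hij]
      | add x y hx hy => simp [hx, hy]
    · simp

theorem tM_up (m r : ℕ) (i j : Fin n) (h : i < j) :
    (tpoly (eM M) m i j).coeff r (hvM M) = 0 := by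
  induction m generalizing r i j with
  | zero =>
    cases r with
    | zero => rw [tpoly_coeff_zero, if_neg h.ne]; rfl
    | succ r => rw [tpoly_zero_coeff_succ]; rfl
  | succ m ih =>
    cases r with
    | zero => rw [tpoly_coeff_zero, if_neg h.ne]; rfl
    | succ r =>
      rw [tpoly_coeff_succ, LinearMap.add_apply, ih _ _ _ h, LinearMap.sum_apply, zero_add]
      refine Finset.sum_eq_zero fun a _ => ?_
      rcases lt_or_ge a j with ha | ha
      · rw [Module.End.mul_apply, eM_up M m a j ha, map_zero]
      · rw [(tpoly_commute _ (eM_commute M) m m le_rfl r i a a j).eq, Module.End.mul_apply,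
          ih _ _ _ (h.trans_le ha), map_zero]

theorem tM_low (f : (⨂[ℂ] p : Fin k, (M p).V) →ₗ[ℂ] ℂ)
    (hf : ∀ p (i j : Fin n), j < i → ∀ x, f (eM M p i j x) = 0)
    (m r : ℕ) (i j : Fin n) (h : j < i) (x : ⨂[ℂ] p : Fin k, (M p).V) :
    f ((tpoly (eM M) m i j).coeff r x) = 0 := by
  induction m generalizing r i j x with
  | zero =>
    cases r with
    | zero => rw [tpoly_coeff_zero, if_neg h.ne']; simp
    | succ r => rw [tpoly_zero_coeff_succ]; simp
  | succ m ih =>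
    cases r with
    | zero => rw [tpoly_coeff_zero, if_neg h.ne']; simp
    | succ r =>
      rw [tpoly_coeff_succ, LinearMap.add_apply, map_add, ih _ _ _ h, LinearMap.sum_apply, zero_add,
        map_sum]
      refine Finset.sum_eq_zero fun a _ => ?_
      rcases lt_or_ge a i with ha | ha
      · rw [Module.End.mul_apply, ih _ _ _ ha]
      · rw [(tpoly_commute _ (eM_commute M) m m le_rfl r i a a j).eq, Module.End.mul_apply,
          hf _ _ _ (h.trans_le ha)]

/-- The highest weight polynomial. -/
noncomputable def hwPoly (lam : Fin k → Fin n → ℂ) (m : ℕ) (i : Fin n) : Polynomial ℂ :=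
  ∏ p : Fin k, if (p : ℕ) < m then 1 + Polynomial.X * Polynomial.C (lam p i) else 1

theorem hwPoly_succ (m : ℕ) (hm : m < k) (i : Fin n) :
    hwPoly lam (m + 1) i =
      hwPoly lam m i * (1 + Polynomial.X * Polynomial.C (lam ⟨m, hm⟩ i)) := by
  have : (1 + Polynomial.X * Polynomial.C (lam ⟨m, hm⟩ i)) = ∏ p : Fin k,
      if p = ⟨m, hm⟩ then 1 + Polynomial.X * Polynomial.C (lam p i) else 1 := by
    rw [Finset.prod_ite_eq']; simp
  rw [this, hwPoly, hwPoly, ← Finset.prod_mul_distrib]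
  refine Finset.prod_congr rfl fun p _ => ?_
  by_cases h1 : (p : ℕ) < m
  · have : p ≠ ⟨m, hm⟩ := by rintro rfl; simp at h1
    simp [h1, this, Nat.lt_succ_of_lt h1]
  · by_cases h2 : p = ⟨m, hm⟩
    · subst h2; simp
    · have : ¬ (p : ℕ) < m + 1 := by
        intro h3; exact h2 (Fin.ext (by simp; omega))
      simp [h1, h2, this]

theorem tM_diag (m : ℕ) (hm : m ≤ k) (r : ℕ) (i : Fin n) :
    (tpoly (eM M) m i i).coeff r (hvM M) = (hwPoly lam m i).coeff r • hvM M := by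
  induction m generalizing r with
  | zero =>
    cases r with
    | zero => rw [tpoly_coeff_zero]; simp [hwPoly]
    | succ r => rw [tpoly_zero_coeff_succ]; simp [hwPoly, Polynomial.coeff_one]
  | succ m ih =>
    rw [hwPoly_succ m hm]
    cases r with
    | zero =>
      rw [mul_add, ← mul_assoc, mul_comm _ Polynomial.X, mul_assoc, mul_one, Polynomial.coeff_add,
        Polynomial.coeff_X_mul_zero, add_zero, ← ih (by omega) 0, tpoly_coeff_zero,
        tpoly_coeff_zero]
    | succ r =>
      rw [tpoly_coeff_succ, LinearMap.add_apply, ih (by omega), LinearMap.sum_apply,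
        Finset.sum_eq_single i]
      · rw [Module.End.mul_apply, eM_diag M m hm, map_smul, ih (by omega), smul_smul, ← add_smul]
        congr 1
        rw [mul_add, ← mul_assoc, mul_comm _ Polynomial.X, mul_assoc, mul_one,
          Polynomial.coeff_add, Polynomial.coeff_X_mul, Polynomial.coeff_mul_C, mul_comm]
      · intro a _ ha
        rcases lt_or_ge a i with h | h
        · rw [Module.End.mul_apply, eM_up M m a i h, map_zero]
        · rw [(tpoly_commute _ (eM_commute M) m m le_rfl r i a a i).eq, Module.End.mul_apply,
            tM_up M _ _ _ _ (lt_of_le_of_ne h ha.symm), map_zero]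
      · simp

/-- Local factor in the definition of `tMulti`. -/
noncomputable def loc {r : ℕ} (p : Fin r → Fin k) (g : Fin (r + 1) → Fin n) (q : Fin k) :
    (M q).V →ₗ[ℂ] (M q).V :=
  if h : ∃ s : Fin r, p s = q then
    (M q).E (g h.choose.castSucc) (g h.choose.succ)
  else LinearMap.id

theorem loc_eq {r : ℕ} (p : Fin r → Fin k) (hp : Function.Injective p) (g : Fin (r + 1) → Fin n)
    (q : Fin k) (s : Fin r) (hs : p s = q) :
    loc M p g q = (M q).E (g s.castSucc) (g s.succ) := by
  have h : ∃ s : Fin r, p s = q := ⟨s, hs⟩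
  have hc : h.choose = s := hp (h.choose_spec.trans hs.symm)
  rw [loc, dif_pos h, hc]

theorem loc_id {r : ℕ} (p : Fin r → Fin k) (g : Fin (r + 1) → Fin n)
    (q : Fin k) (hs : ∀ s, p s ≠ q) : loc M p g q = LinearMap.id := by
  rw [loc, dif_neg]; push Not; exact hs

/-- One summand of `tMulti`. -/
noncomputable def term {r : ℕ} (p : Fin r → Fin k) (g : Fin (r + 1) → Fin n) :
    Module.End ℂ (⨂[ℂ] p : Fin k, (M p).V) :=
  PiTensorProduct.map (loc M p g)

theorem term_snoc {r : ℕ} (p : Fin r → Fin k) (hp : Function.Injective p)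
    (g : Fin (r + 1) → Fin n) (x : Fin k) (hx : ∀ s, p s ≠ x) (b : Fin n) :
    term M (Fin.snoc p x : Fin (r + 1) → Fin k) (Fin.snoc g b : Fin (r + 2) → Fin n)
      = term M p g * slot M x ((M x).E (g (Fin.last r)) b) := by
  have hinj : Function.Injective (Fin.snoc p x : Fin (r + 1) → Fin k) := by
    intro s s' h
    induction s using Fin.lastCases with
    | last =>
      induction s' using Fin.lastCases with
      | last => rfl
      | cast s' => simp at h; exact absurd h.symm (hx _)
    | cast s =>
      induction s' using Fin.lastCases with
      | last => simp at h; exact absurd h (hx _)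
      | cast s' => simp at h; rw [hp h]
  rw [term, term, slot, ← PiTensorProduct.map_mul]
  congr 1
  funext q
  by_cases hq : x = q
  · subst hq
    rw [loc_id M p g x hx, loc_eq M _ hinj _ x (Fin.last r) (by simp)]
    simp
    rfl
  · rw [Function.update_of_ne (Ne.symm hq)]
    by_cases h : ∃ s, p s = q
    · obtain ⟨s, hs⟩ := h
      rw [loc_eq M p hp g q s hs, loc_eq M _ hinj _ q s.castSucc (by simpa using hs)]
      rw [Fin.succ_castSucc, Fin.snoc_castSucc, Fin.snoc_castSucc]
      rfl
    · push Not at h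
      rw [loc_id M p g q h, loc_id]
      · rfl
      · intro s
        induction s using Fin.lastCases with
        | last => simpa using hq
        | cast s => simpa using h s

/-- Truncated version of `tMulti`, using only the first `m` factors. -/
noncomputable def qsum (m r : ℕ) (i j : Fin n) : Module.End ℂ (⨂[ℂ] p : Fin k, (M p).V) :=
  ∑ p : Fin r → Fin k, if StrictMono p ∧ ∀ s, (p s : ℕ) < m then
    ∑ g : Fin (r + 1) → Fin n, if g 0 = i ∧ g (Fin.last r) = j then term M p g else 0
  else 0

theorem tMulti_eq_qsum (r : ℕ) (i j : Fin n) : tMulti M r i j = qsum M k r i j := by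
  have h : ∀ p : Fin r → Fin k, (StrictMono p ∧ ∀ s, (p s : ℕ) < k) ↔ StrictMono p :=
    fun p => ⟨fun h => h.1, fun h => ⟨h, fun s => (p s).2⟩⟩
  simp only [qsum, h]
  rw [← Finset.sum_filter, Finset.sum_subtype (F := inferInstance) (p := fun p => StrictMono p) _ (by simp), tMulti]
  refine Finset.sum_congr (by ext; simp) fun p _ => ?_
  rw [← Finset.sum_filter,
    Finset.sum_subtype (F := inferInstance) (p := fun g : Fin (r + 1) → Fin n => g 0 = i ∧ g (Fin.last r) = j) _
      (by simp)]
  exact Finset.sum_congr (by ext; simp) fun g _ => rfl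

theorem qsum_zero (m : ℕ) (i j : Fin n) : qsum M m 0 i j = if i = j then 1 else 0 := by
  have ht : ∀ (p : Fin 0 → Fin k) (g : Fin 1 → Fin n), term M p g = 1 := by
    intro p g
    have : loc M p g = fun q => (1 : (M q).V →ₗ[ℂ] (M q).V) := by
      funext q; exact loc_id M p g q (fun s => s.elim0)
    rw [term, this, PiTensorProduct.map_one]
  rw [qsum, Fintype.sum_unique, if_pos ⟨Subsingleton.strictMono _, fun s => s.elim0⟩]
  simp only [ht]
  rw [Fintype.sum_equiv (Equiv.funUnique (Fin 1) (Fin n)) _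
    (fun a => if a = i ∧ a = j then 1 else 0) (by intro g; rfl)]
  by_cases h : i = j
  · subst h; simp
  · rw [if_neg h]
    refine Finset.sum_eq_zero fun a _ => if_neg ?_
    rintro ⟨rfl, rfl⟩; exact h rfl

theorem qsum_nil (r : ℕ) (i j : Fin n) : qsum M 0 (r + 1) i j = 0 := by
  refine Finset.sum_eq_zero fun p _ => if_neg ?_
  rintro ⟨_, h⟩
  exact absurd (h 0) (by omega)

theorem qsum_succ (m : ℕ) (hm : m < k) (r : ℕ) (i j : Fin n) :
    qsum M (m + 1) (r + 1) i j = qsum M m (r + 1) i j + ∑ a, qsum M m r i a * eM M m a j := by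
  let S : (Fin (r + 1) → Fin k) → Module.End ℂ (⨂[ℂ] p : Fin k, (M p).V) := fun p =>
    ∑ g : Fin (r + 2) → Fin n, if g 0 = i ∧ g (Fin.last (r + 1)) = j then term M p g else 0
  have hsplit : ∀ p : Fin (r + 1) → Fin k,
      (if StrictMono p ∧ ∀ s, (p s : ℕ) < m + 1 then S p else 0)
      = (if StrictMono p ∧ ∀ s, (p s : ℕ) < m then S p else 0)
        + (if StrictMono p ∧ p (Fin.last r) = ⟨m, hm⟩ then S p else 0) := by
    intro p
    by_cases hp : StrictMono p
    · have hle : ∀ s, (p s : ℕ) ≤ p (Fin.last r) := fun s => hp.monotone (Fin.le_last s)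
      by_cases h1 : (p (Fin.last r) : ℕ) < m
      · have a1 : ∀ s, (p s : ℕ) < m := fun s => (hle s).trans_lt h1
        have a2 : ∀ s, (p s : ℕ) < m + 1 := fun s => (a1 s).trans (by omega)
        have a3 : p (Fin.last r) ≠ ⟨m, hm⟩ := by intro h; rw [h] at h1; simp at h1
        simp [hp, a1, a2, a3]
      · have a1 : ¬ ∀ s, (p s : ℕ) < m := fun h => h1 (h _)
        by_cases h2 : p (Fin.last r) = ⟨m, hm⟩
        · have a2 : ∀ s, (p s : ℕ) < m + 1 := fun s => by
            have := hle s; rw [h2] at this; simp at this; omega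
          rw [if_pos ⟨hp, a2⟩, if_neg (fun h => a1 h.2), if_pos ⟨hp, h2⟩, zero_add]
        · have a2 : ¬ ∀ s, (p s : ℕ) < m + 1 := fun h => by
            have := h (Fin.last r)
            exact h2 (Fin.ext (by simp; omega))
          rw [if_neg (fun h => a2 h.2), if_neg (fun h => a1 h.2), if_neg (fun h => h2 h.2),
            zero_add]
    · simp [hp]
  have e1 : qsum M (m + 1) (r + 1) i j = ∑ p : Fin (r + 1) → Fin k,
      (if StrictMono p ∧ ∀ s, (p s : ℕ) < m + 1 then S p else 0) := rfl
  have e2 : qsum M m (r + 1) i j = ∑ p : Fin (r + 1) → Fin k,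
      (if StrictMono p ∧ ∀ s, (p s : ℕ) < m then S p else 0) := rfl
  rw [e1, e2, Finset.sum_congr rfl fun p _ => hsplit p, Finset.sum_add_distrib]
  congr 1
  -- the part with last index `m`
  have hsm : ∀ p : Fin r → Fin k, StrictMono (Fin.snoc p ⟨m, hm⟩ : Fin (r + 1) → Fin k) ↔
      (StrictMono p ∧ ∀ s, (p s : ℕ) < m) := by
    intro p
    constructor
    · intro h
      refine ⟨fun s s' hs => ?_, fun s => ?_⟩
      · have := h (Fin.castSucc_lt_castSucc_iff.2 hs)
        simpa using this
      · have := h (Fin.castSucc_lt_last s)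
        simpa [Fin.lt_def] using this
    · rintro ⟨h, h'⟩ s s' hs
      induction s' using Fin.lastCases with
      | last =>
        induction s using Fin.lastCases with
        | last => exact absurd hs (lt_irrefl _)
        | cast s => simpa [Fin.lt_def] using h' s
      | cast s' =>
        induction s using Fin.lastCases with
        | last => exact absurd hs (not_lt.2 (Fin.le_last _))
        | cast s => simpa using h (Fin.castSucc_lt_castSucc_iff.1 hs)
  have e3 : ∑ p : Fin (r + 1) → Fin k,
      (if StrictMono p ∧ p (Fin.last r) = ⟨m, hm⟩ then S p else 0)
      = ∑ p : Fin r → Fin k, (if StrictMono p ∧ ∀ s, (p s : ℕ) < m then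
          S (Fin.snoc p ⟨m, hm⟩) else 0) := by
    rw [← Fintype.sum_equiv (Fin.snocEquiv (fun _ : Fin (r + 1) => Fin k))
      (fun x => if StrictMono (Fin.snoc x.2 x.1 : Fin (r + 1) → Fin k) ∧ x.1 = ⟨m, hm⟩ then
        S (Fin.snoc x.2 x.1) else 0) _ ?_]
    · rw [Fintype.sum_prod_type, Finset.sum_eq_single (⟨m, hm⟩ : Fin k)]
      · refine Finset.sum_congr rfl fun p _ => ?_
        simp only [hsm, and_true]
      · intro b _ hb
        exact Finset.sum_eq_zero fun p _ => if_neg fun h => hb h.2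
      · simp
    · rintro ⟨x, p⟩
      simp [Fin.snocEquiv]
  have e4 : ∀ p : Fin r → Fin k, StrictMono p → (∀ s, (p s : ℕ) < m) →
      S (Fin.snoc p ⟨m, hm⟩) = ∑ g : Fin (r + 1) → Fin n, if g 0 = i then
        term M p g * eM M m (g (Fin.last r)) j else 0 := by
    intro p hp hpm
    simp only [S]
    rw [← Fintype.sum_equiv (Fin.snocEquiv (fun _ : Fin (r + 2) => Fin n))
      (fun x => if x.2 0 = i ∧ x.1 = j then
        term M (Fin.snoc p ⟨m, hm⟩ : Fin (r + 1) → Fin k) (Fin.snoc x.2 x.1) else 0) _ ?_]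
    · rw [Fintype.sum_prod_type, Finset.sum_eq_single j]
      · refine Finset.sum_congr rfl fun g _ => ?_
        simp only [and_true]
        rw [term_snoc M p hp.injective g ⟨m, hm⟩ _ j, eM, dif_pos hm]
        intro s h
        have := hpm s
        rw [h] at this
        simp at this
      · intro b _ hb
        exact Finset.sum_eq_zero fun p _ => if_neg fun h => hb h.2
      · simp
    · rintro ⟨x, g⟩
      have z : (Fin.snoc g x : Fin (r + 2) → Fin n) 0 = g 0 := by
        rw [← Fin.castSucc_zero, Fin.snoc_castSucc]
      simp only [Fin.snocEquiv, Equiv.coe_fn_mk]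
      change _ = if (Fin.snoc g x : Fin (r + 2) → Fin n) 0 = i ∧
        (Fin.snoc g x : Fin (r + 2) → Fin n) (Fin.last (r + 1)) = j then _ else _
      rw [z, Fin.snoc_last]
  rw [e3]
  simp only [qsum, Finset.sum_mul]
  rw [Finset.sum_comm]
  refine Finset.sum_congr rfl fun p _ => ?_
  by_cases hp : StrictMono p ∧ ∀ s, (p s : ℕ) < m
  · simp only [if_pos hp, Finset.sum_mul]
    rw [e4 p hp.1 hp.2, Finset.sum_comm]
    refine Finset.sum_congr rfl fun g _ => ?_
    rw [Finset.sum_eq_single (g (Fin.last r))]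
    · by_cases h : g 0 = i <;> simp [h]
    · intro b _ hb
      rw [if_neg (fun h => hb h.2.symm), zero_mul]
    · simp
  · simp only [if_neg hp, zero_mul, Finset.sum_const_zero]

theorem qsum_eq (m : ℕ) (hm : m ≤ k) (r : ℕ) (i j : Fin n) :
    qsum M m r i j = (tpoly (eM M) m i j).coeff r := by
  induction m generalizing r i j with
  | zero =>
    cases r with
    | zero => rw [qsum_zero, tpoly_coeff_zero]
    | succ r => rw [qsum_nil, tpoly_zero_coeff_succ]
  | succ m ih =>
    cases r with
    | zero => rw [qsum_zero, tpoly_coeff_zero]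
    | succ r =>
      rw [qsum_succ M m hm, tpoly_coeff_succ, ih (by omega)]
      congr 1
      exact Finset.sum_congr rfl fun a _ => by rw [ih (by omega)]

theorem tMulti_eq (r : ℕ) (i j : Fin n) : tMulti M r i j = (tpoly (eM M) k i j).coeff r :=
  (tMulti_eq_qsum M r i j).trans (qsum_eq M k le_rfl r i j)

end Slots

/-- If the `Y(gl_n)`-module `L(λ^{(1)}) ⊗ ⋯ ⊗ L(λ^{(k)})` is
irreducible, then any permutation of the tensor factors gives an isomorphic
representation of `Y(gl_n)`: there is a linear isomorphism intertwining the
actions of all Yangian generators `t_{ij}^{(r)}`. -/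
theorem tensorMulti_permute_isomorphic
    (k n : ℕ) (lam : Fin k → Fin n → ℂ)
    (hlam : ∀ p : Fin k, IsGLHighestWeight n (lam p))
    (M : ∀ p : Fin k, GLRep n (lam p))
    (hirr : YangianIrredMulti M) (σ : Equiv.Perm (Fin k)) :
    ∃ φ : (⨂[ℂ] p : Fin k, (M p).V) ≃ₗ[ℂ] ⨂[ℂ] p : Fin k, (M (σ p)).V,
      ∀ r : ℕ, 1 ≤ r → ∀ i j : Fin n, ∀ x : ⨂[ℂ] p : Fin k, (M p).V,
        φ (tMulti M r i j x) = tMulti (fun p : Fin k => M (σ p)) r i j (φ x) := by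
  obtain ⟨f, hf, hlow⟩ := exists_functional_M M
  obtain ⟨f', hf', hlow'⟩ := exists_functional_M (fun p => M (σ p))
  have hw : ∀ i, hwPoly (fun p => lam (σ p)) k i = hwPoly lam k i := by
    intro i
    simp only [hwPoly, Fin.is_lt, if_true]
    exact Equiv.prod_comp σ fun p => 1 + Polynomial.X * Polynomial.C (lam p i)
  have e : (⨂[ℂ] p : Fin k, (M p).V) ≃ₗ[ℂ] ⨂[ℂ] p : Fin k, (M (σ p)).V :=
    PiTensorProduct.reindex ℂ (fun p => (M p).V) σ.symm
  obtain ⟨φ, hφ⟩ := iso_of_irred e.finrank_eq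
    (fun r i j => (tpoly (eM M) k i j).coeff r)
    (fun r i j => (tpoly (eM fun p => M (σ p)) k i j).coeff r)
    (fun i j => tpoly_coeff_zero _ _ _ _) (fun i j => tpoly_coeff_zero _ _ _ _)
    (tpoly_rel _ (eM_commute M) (eM_rel M) k)
    (tpoly_rel _ (eM_commute fun p => M (σ p)) (eM_rel fun p => M (σ p)) k)
    (hvM M) (hvM fun p => M (σ p)) f f' (fun r i => (hwPoly lam k i).coeff r)
    (fun r i j h => tM_up M k r i j h)
    (fun r i j h => tM_up (fun p => M (σ p)) k r i j h)
    (fun r i => tM_diag M k le_rfl r i)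
    (fun r i => by
      rw [← hw]
      exact tM_diag (fun p => M (σ p)) k le_rfl r i)
    (fun r i j h x => tM_low M f hlow k r i j h x)
    (fun r i j h x => tM_low (fun p => M (σ p)) f' hlow' k r i j h x)
    hf hf'
    (fun U hU => hirr U fun r hr i j v hv => by
      rw [tMulti_eq]; exact hU r hr i j v hv)
  refine ⟨φ, fun r _ i j x => ?_⟩
  rw [tMulti_eq, tMulti_eq]
  exact hφ r i j x
end

section
/- Let λ and μ be gl_n-highest weights with integer entries. The sets A_λ \ A_μ and A_μ \ A_λ are non-crossing if and only if for all pairs of indices 1 ≤ i < j ≤ n one has: either (m_j ∉ ⟨l_j, l_i⟩ and m_i ∉ ⟨l_j, l_i⟩) or (l_j ∉ ⟨m_j, m_i⟩ and l_i ∉ ⟨m_j, m_i⟩). -/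
/-- The shifted weight `l_i = λ_i − i + 1` (with `0`-indexed entries:
`l i = lam i - i`). -/
def lshift (n : ℕ) (lam : Fin n → ℤ) : Fin n → ℤ :=
  fun i => lam i - ((i : ℕ) : ℤ)

/-- The set `A_λ = {λ_1, λ_2 − 1, …, λ_n − n + 1}`. -/
def Aset (n : ℕ) (lam : Fin n → ℤ) : Finset ℤ :=
  Finset.image (lshift n lam) Finset.univ

/-- Two finite subsets `A`, `B` of `ℤ` are crossing if there are
`a₁, a₂ ∈ A` and `b₁, b₂ ∈ B` with `a₁ < b₁ < a₂ < b₂` or `b₁ < a₁ < b₂ < a₂`. -/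
def CrossingSets (A B : Finset ℤ) : Prop :=
  (∃ a₁ ∈ A, ∃ a₂ ∈ A, ∃ b₁ ∈ B, ∃ b₂ ∈ B, a₁ < b₁ ∧ b₁ < a₂ ∧ a₂ < b₂) ∨
  (∃ a₁ ∈ A, ∃ a₂ ∈ A, ∃ b₁ ∈ B, ∃ b₂ ∈ B, b₁ < a₁ ∧ a₁ < b₂ ∧ b₂ < a₂)

/-- The set `⟨l_j, l_i⟩ = {l_j, l_j + 1, …, l_i} \ {l_s : i ≤ s ≤ j}` for a
pair of indices `i < j`. -/
def bracketZ (n : ℕ) (l : Fin n → ℤ) (i j : Fin n) : Set ℤ :=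
  {x | l j ≤ x ∧ x ≤ l i ∧ ∀ s : Fin n, i ≤ s → s ≤ j → x ≠ l s}

/-- The condition `m_j, m_i ∉ ⟨l_j, l_i⟩ or l_j, l_i ∉ ⟨m_j, m_i⟩` for a pair
of indices `i < j`. -/
def SepCondZ (n : ℕ) (lam mu : Fin n → ℤ) (i j : Fin n) : Prop :=
  (lshift n mu j ∉ bracketZ n (lshift n lam) i j ∧
      lshift n mu i ∉ bracketZ n (lshift n lam) i j) ∨
  (lshift n lam j ∉ bracketZ n (lshift n mu) i j ∧
      lshift n lam i ∉ bracketZ n (lshift n mu) i j)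


/-- A configuration of a pair of indices violating the separation condition. -/
def BadPair (n : ℕ) (l m : Fin n → ℤ) (i j : Fin n) : Prop :=
  l j < m j ∧ m j < l i ∧ l i < m i ∧ (∀ s, m j ≠ l s) ∧ (∀ s, l i ≠ m s)

/-- A crossing of two sequences. -/
def CrossPat (n : ℕ) (l m : Fin n → ℤ) : Prop :=
  ∃ a₁ b₁ a₂ b₂ : Fin n, l a₁ < m b₁ ∧ m b₁ < l a₂ ∧ l a₂ < m b₂ ∧
    (∀ s, l a₁ ≠ m s) ∧ (∀ s, m b₁ ≠ l s) ∧ (∀ s, l a₂ ≠ m s) ∧ (∀ s, m b₂ ≠ l s)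

theorem lshift_strictAnti (n : ℕ) (lam : Fin n → ℤ)
    (hlam : ∀ i : Fin n, ∀ h : (i : ℕ) + 1 < n, 0 ≤ lam i - lam ⟨(i : ℕ) + 1, h⟩) :
    StrictAnti (lshift n lam) := by
  have key : ∀ d : ℕ, ∀ i j : Fin n, (j : ℕ) = i + d + 1 → lshift n lam j < lshift n lam i := by
    intro d
    induction d with
    | zero =>
      intro i j hij
      have hj : (i : ℕ) + 1 < n := by have := j.2; omega
      have h := hlam i hj
      have e : j = ⟨(i : ℕ) + 1, hj⟩ := Fin.ext (by simpa using hij)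
      subst e
      simp only [lshift]
      push_cast
      omega
    | succ d ih =>
      intro i j hij
      have hj : (i : ℕ) + d + 1 < n := by have := j.2; omega
      have h1 := ih i ⟨_, hj⟩ rfl
      have h2 : lshift n lam j < lshift n lam ⟨_, hj⟩ := by
        have hj' : ((⟨_, hj⟩ : Fin n) : ℕ) + 1 < n := by have := j.2; simp only; omega
        have h := hlam ⟨_, hj⟩ hj'
        have e : j = ⟨((⟨_, hj⟩ : Fin n) : ℕ) + 1, hj'⟩ := Fin.ext (by simp only; omega)
        subst e
        simp only [lshift] at *
        push_cast at *
        omega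
      exact h2.trans h1
  intro i j hij
  exact key (j - i - 1) i j (by have : (i : ℕ) < j := hij; omega)

theorem bad_to_cross {n : ℕ} {l m : Fin n → ℤ} (hl : StrictAnti l) (hm : StrictAnti m)
    {i j : Fin n} (h : BadPair n l m i j) : CrossPat n l m := by
  obtain ⟨h1, h2, h3, h4, h5⟩ := h
  have e1 : ∃ s, j ≤ s ∧ ∀ t, l s ≠ m t := by
    by_contra! hc
    have hsub : (Finset.Ici j).image l ⊆ (Finset.Ioi j).image m := by
      intro x hx
      simp only [Finset.mem_image, Finset.mem_Ici, Finset.mem_Ioi] at hx ⊢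
      obtain ⟨s, hs, rfl⟩ := hx
      obtain ⟨t, ht⟩ := hc s hs
      refine ⟨t, ?_, ht.symm⟩
      have := hl.antitone hs
      exact hm.lt_iff_gt.1 (by omega)
    have := Finset.card_le_card hsub
    rw [Finset.card_image_of_injective _ hl.injective,
      Finset.card_image_of_injective _ hm.injective, Fin.card_Ici, Fin.card_Ioi] at this
    have := j.2
    omega
  have e2 : ∃ s, s ≤ i ∧ ∀ t, m s ≠ l t := by
    by_contra! hc
    have hsub : (Finset.Iic i).image m ⊆ (Finset.Iio i).image l := by
      intro x hx
      simp only [Finset.mem_image, Finset.mem_Iic, Finset.mem_Iio] at hx ⊢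
      obtain ⟨s, hs, rfl⟩ := hx
      obtain ⟨t, ht⟩ := hc s hs
      refine ⟨t, ?_, ht.symm⟩
      have := hm.antitone hs
      exact hl.lt_iff_gt.1 (by omega)
    have := Finset.card_le_card hsub
    rw [Finset.card_image_of_injective _ hl.injective,
      Finset.card_image_of_injective _ hm.injective, Fin.card_Iic, Fin.card_Iio] at this
    omega
  obtain ⟨s, hs, hs'⟩ := e1
  obtain ⟨t, ht, ht'⟩ := e2
  have := hl.antitone hs
  have := hm.antitone ht
  exact ⟨s, j, i, t, by omega, h2, by omega, hs', h4, h5, ht'⟩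

/-- Number of entries below `x`. -/
def cntBelow (n : ℕ) (l : Fin n → ℤ) (x : ℤ) : ℤ :=
  ((Finset.univ.filter (fun s => l s < x)).card : ℤ)

theorem cntBelow_self {n : ℕ} {l : Fin n → ℤ} (hl : StrictAnti l) (j : Fin n) :
    cntBelow n l (l j) = n - 1 - (j : ℕ) := by
  have : Finset.univ.filter (fun s => l s < l j) = Finset.Ioi j := by
    ext s
    simp [hl.lt_iff_gt]
  rw [cntBelow, this, Fin.card_Ioi]
  have := j.2
  omega

theorem lt_iff_cnt {n : ℕ} {l : Fin n → ℤ} (hl : StrictAnti l) (j : Fin n) (x : ℤ) :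
    l j < x ↔ (n : ℤ) ≤ cntBelow n l x + (j : ℕ) := by
  have := j.2
  constructor
  · intro h
    have hsub : Finset.Ici j ⊆ Finset.univ.filter (fun s => l s < x) := by
      intro s hs
      simp only [Finset.mem_Ici, Finset.mem_filter, Finset.mem_univ, true_and] at hs ⊢
      exact (hl.antitone hs).trans_lt h
    have := Finset.card_le_card hsub
    rw [Fin.card_Ici] at this
    rw [cntBelow]
    omega
  · intro h
    by_contra! hc
    have hsub : Finset.univ.filter (fun s => l s < x) ⊆ Finset.Ioi j := by
      intro s hs
      simp only [Finset.mem_Ioi, Finset.mem_filter, Finset.mem_univ, true_and] at hs ⊢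
      exact hl.lt_iff_gt.1 (hs.trans_le hc)
    have := Finset.card_le_card hsub
    rw [Fin.card_Ioi] at this
    rw [cntBelow] at h
    omega

theorem cntBelow_step {n : ℕ} {l : Fin n → ℤ} (hl : StrictAnti l) (j : Fin n) :
    cntBelow n l (l j + 1) = cntBelow n l (l j) + 1 := by
  have : Finset.univ.filter (fun s => l s < l j + 1) = Finset.Ici j := by
    ext s
    simp [hl.le_iff_ge]
  rw [cntBelow_self hl, cntBelow, this, Fin.card_Ici]
  have := j.2
  omega

theorem cntBelow_flat {n : ℕ} {l : Fin n → ℤ} {x : ℤ} (h : ∀ s, x ≠ l s) :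
    cntBelow n l (x + 1) = cntBelow n l x := by
  have : Finset.univ.filter (fun s => l s < x + 1) = Finset.univ.filter (fun s => l s < x) := by
    ext s
    have := h s
    simp only [Finset.mem_filter, Finset.mem_univ, true_and]
    omega
  rw [cntBelow, this, cntBelow]

theorem upcross (D : ℤ → ℤ) (hD : ∀ x, D (x + 1) ≤ D x + 1) (x y : ℤ) (hxy : x ≤ y)
    (hx : D x ≤ 0) (hy : 0 < D y) : ∃ z, x ≤ z ∧ z < y ∧ D z = 0 ∧ D (z + 1) = 1 := by
  induction y, hxy using Int.leInduction with
  | base => omega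
  | succ y hxy ih =>
    by_cases h : 0 < D y
    · obtain ⟨z, h1, h2, h3⟩ := ih h
      exact ⟨z, h1, by omega, h3⟩
    · have := hD y
      exact ⟨y, hxy, by omega, by omega, by omega⟩

theorem step_cases {n : ℕ} {l m : Fin n → ℤ} (hl : StrictAnti l) (hm : StrictAnti m) (x : ℤ) :
    ((∃ i, x = l i) ∧ (∀ s, x ≠ m s) ∧
      cntBelow n l (x + 1) - cntBelow n m (x + 1) = cntBelow n l x - cntBelow n m x + 1) ∨
    ((∃ j, x = m j) ∧ (∀ s, x ≠ l s) ∧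
      cntBelow n l (x + 1) - cntBelow n m (x + 1) = cntBelow n l x - cntBelow n m x - 1) ∨
    cntBelow n l (x + 1) - cntBelow n m (x + 1) = cntBelow n l x - cntBelow n m x := by
  by_cases h1 : ∃ i, x = l i <;> by_cases h2 : ∃ i, x = m i
  · obtain ⟨i, hi⟩ := h1
    obtain ⟨j, hj⟩ := h2
    have a := cntBelow_step hl i
    have b := cntBelow_step hm j
    rw [← hi] at a
    rw [← hj] at b
    right; right; omega
  · have h2' : ∀ s, x ≠ m s := fun s hs => h2 ⟨s, hs⟩
    obtain ⟨i, hi⟩ := h1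
    have a := cntBelow_step hl i
    have b := cntBelow_flat h2'
    rw [← hi] at a
    left; exact ⟨⟨i, hi⟩, h2', by omega⟩
  · have h1' : ∀ s, x ≠ l s := fun s hs => h1 ⟨s, hs⟩
    obtain ⟨j, hj⟩ := h2
    have a := cntBelow_step hm j
    have b := cntBelow_flat h1'
    rw [← hj] at a
    right; left; exact ⟨⟨j, hj⟩, h1', by omega⟩
  · have a := cntBelow_flat (fun s hs => h1 ⟨s, hs⟩)
    have b := cntBelow_flat (fun s hs => h2 ⟨s, hs⟩)
    right; right; omega

/-- A positive down step followed by a positive up step gives a bad pair. -/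
theorem bad_of_steps {n : ℕ} {l m : Fin n → ℤ} (hl : StrictAnti l) (hm : StrictAnti m)
    (i j : Fin n) (hj : ∀ s, m j ≠ l s) (hi : ∀ s, l i ≠ m s) (h : m j < l i)
    (h1 : cntBelow n m (m j) < cntBelow n l (m j))
    (h2 : cntBelow n m (l i) ≤ cntBelow n l (l i)) : i < j ∧ BadPair n l m i j := by
  have a : l j < m j := by
    rw [lt_iff_cnt hl]
    have := cntBelow_self hm j
    omega
  have b : l i < m i := by
    by_contra! hc
    have hc' : m i < l i := lt_of_le_of_ne hc (fun e => hi i e.symm)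
    rw [lt_iff_cnt hm] at hc'
    have := cntBelow_self hl i
    omega
  exact ⟨hl.lt_iff_gt.1 (a.trans h), a, h, b, hj, hi⟩

theorem cross_to_bad {n : ℕ} {l m : Fin n → ℤ} (hl : StrictAnti l) (hm : StrictAnti m)
    (h : CrossPat n l m) :
    ∃ i j : Fin n, i < j ∧ (BadPair n l m i j ∨ BadPair n m l i j) := by
  obtain ⟨a₁, b₁, a₂, b₂, h1, h2, h3, n1, n2, n3, n4⟩ := h
  by_contra! hc
  have P : ∀ i j : Fin n, (∀ s, m j ≠ l s) → (∀ s, l i ≠ m s) → m j < l i →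
      cntBelow n m (m j) < cntBelow n l (m j) → cntBelow n m (l i) ≤ cntBelow n l (l i) →
      False := fun i j x1 x2 x3 x4 x5 => by
    have := bad_of_steps hl hm i j x1 x2 x3 x4 x5
    exact (hc i j this.1).1 this.2
  have N : ∀ i j : Fin n, (∀ s, l j ≠ m s) → (∀ s, m i ≠ l s) → l j < m i →
      cntBelow n l (l j) < cntBelow n m (l j) → cntBelow n l (m i) ≤ cntBelow n m (m i) →
      False := fun i j x1 x2 x3 x4 x5 => by
    have := bad_of_steps hm hl i j x1 x2 x3 x4 x5
    exact (hc i j this.1).2 this.2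
  -- a positive down step at or before `b₁`
  have S : ∃ j, (∀ s, m j ≠ l s) ∧ m j ≤ m b₁ ∧ cntBelow n m (m j) < cntBelow n l (m j) := by
    by_cases hb : cntBelow n m (m b₁) < cntBelow n l (m b₁)
    · exact ⟨b₁, n2, le_rfl, hb⟩
    have ha : cntBelow n m (l a₁) ≤ cntBelow n l (l a₁) := by
      by_contra! hh
      exact N b₁ a₁ n1 n2 h1 hh (by omega)
    have s1 := cntBelow_step hl a₁
    have s2 := cntBelow_flat n1
    obtain ⟨z, z1, z2, z3, z4⟩ := upcross
      (fun x => 1 - (cntBelow n l x - cntBelow n m x))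
      (fun x => by rcases step_cases hl hm x with h | h | h <;> omega)
      (l a₁ + 1) (m b₁) (by omega) (by omega) (by omega)
    rcases step_cases hl hm z with h | h | h
    · omega
    · obtain ⟨⟨j, rfl⟩, hj, -⟩ := h
      exact ⟨j, hj, z2.le, by omega⟩
    · omega
  obtain ⟨j, j1, j2, j3⟩ := S
  have ha : cntBelow n l (l a₂) < cntBelow n m (l a₂) := by
    by_contra! hh
    exact P a₂ j j1 n3 (by omega) j3 hh
  have hb : cntBelow n m (m b₂) < cntBelow n l (m b₂) := by
    by_contra! hh
    exact N b₂ a₂ n3 n4 h3 ha hh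
  obtain ⟨z, z1, z2, z3, z4⟩ := upcross
    (fun x => cntBelow n l x - cntBelow n m x)
    (fun x => by rcases step_cases hl hm x with h | h | h <;> omega)
    (l a₂) (m b₂) (by omega) (by omega) (by omega)
  rcases step_cases hl hm z with h | h | h
  · obtain ⟨⟨i, rfl⟩, hi, -⟩ := h
    exact P i j j1 hi (by omega) j3 (by omega)
  · omega
  · omega

theorem mem_bracket {n : ℕ} {l : Fin n → ℤ} (hl : StrictAnti l) (i j : Fin n) (x : ℤ) :
    x ∈ bracketZ n l i j ↔ l j < x ∧ x < l i ∧ ∀ s, x ≠ l s := by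
  constructor
  · rintro ⟨h1, h2, h3⟩
    have h4 : ∀ s, x ≠ l s := by
      rintro s rfl
      exact h3 s (hl.le_iff_ge.1 h2) (hl.le_iff_ge.1 h1) rfl
    have := h4 i
    have := h4 j
    exact ⟨by omega, by omega, h4⟩
  · rintro ⟨h1, h2, h3⟩
    exact ⟨h1.le, h2.le, fun s _ _ => h3 s⟩

theorem not_sep_iff {n : ℕ} {lam mu : Fin n → ℤ} (hl : StrictAnti (lshift n lam))
    (hm : StrictAnti (lshift n mu)) (i j : Fin n) :
    ¬ SepCondZ n lam mu i j ↔ BadPair n (lshift n lam) (lshift n mu) i j ∨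
      BadPair n (lshift n mu) (lshift n lam) i j := by
  simp only [SepCondZ, mem_bracket hl, mem_bracket hm, BadPair]
  generalize lshift n lam = l at *
  generalize lshift n mu = m at *
  constructor
  · intro h
    rw [← not_or, ← not_or, not_or, not_not, not_not] at h
    obtain ⟨⟨a, b, c⟩ | ⟨a, b, c⟩, ⟨d, e, f⟩ | ⟨d, e, f⟩⟩ := h
    · omega
    · exact Or.inl ⟨a, b, e, c, f⟩
    · exact Or.inr ⟨d, e, b, f, c⟩
    · omega
  · rintro (⟨a, b, c, d, e⟩ | ⟨a, b, c, d, e⟩) (h | h)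
    · exact h.1 ⟨a, b, d⟩
    · exact h.2 ⟨b, c, e⟩
    · exact h.2 ⟨b, c, e⟩
    · exact h.1 ⟨a, b, d⟩

theorem mem_Aset_sdiff {n : ℕ} {lam mu : Fin n → ℤ} (x : ℤ) :
    x ∈ Aset n lam \ Aset n mu ↔ (∃ s, x = lshift n lam s) ∧ ∀ s, x ≠ lshift n mu s := by
  simp only [Aset, Finset.mem_sdiff, Finset.mem_image, Finset.mem_univ, true_and, not_exists,
    eq_comm, ne_eq]

theorem crossing_iff {n : ℕ} {lam mu : Fin n → ℤ} :
    CrossingSets (Aset n lam \ Aset n mu) (Aset n mu \ Aset n lam) ↔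
      CrossPat n (lshift n lam) (lshift n mu) ∨ CrossPat n (lshift n mu) (lshift n lam) := by
  simp only [CrossingSets, mem_Aset_sdiff, CrossPat]
  constructor
  · rintro (⟨_, ⟨⟨a, rfl⟩, ha⟩, _, ⟨⟨a', rfl⟩, ha'⟩, _, ⟨⟨b, rfl⟩, hb⟩, _, ⟨⟨b', rfl⟩, hb'⟩, h1, h2, h3⟩ |
      ⟨_, ⟨⟨a, rfl⟩, ha⟩, _, ⟨⟨a', rfl⟩, ha'⟩, _, ⟨⟨b, rfl⟩, hb⟩, _, ⟨⟨b', rfl⟩, hb'⟩, h1, h2, h3⟩)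
    · exact Or.inl ⟨a, b, a', b', h1, h2, h3, ha, hb, ha', hb'⟩
    · exact Or.inr ⟨b, a, b', a', h1, h2, h3, hb, ha, hb', ha'⟩
  · rintro (⟨a, b, a', b', h1, h2, h3, ha, hb, ha', hb'⟩ |
      ⟨b, a, b', a', h1, h2, h3, hb, ha, hb', ha'⟩)
    · exact Or.inl ⟨_, ⟨⟨a, rfl⟩, ha⟩, _, ⟨⟨a', rfl⟩, ha'⟩, _, ⟨⟨b, rfl⟩, hb⟩, _,
        ⟨⟨b', rfl⟩, hb'⟩, h1, h2, h3⟩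
    · exact Or.inr ⟨_, ⟨⟨a, rfl⟩, ha⟩, _, ⟨⟨a', rfl⟩, ha'⟩, _, ⟨⟨b, rfl⟩, hb⟩, _,
        ⟨⟨b', rfl⟩, hb'⟩, h1, h2, h3⟩

/-- For `gl_n`-highest weights `λ`, `μ` with integer entries,
the sets `A_λ \ A_μ` and `A_μ \ A_λ` are non-crossing if and only if for all
pairs `i < j` the separation condition holds. -/
theorem nonCrossing_iff_sepCond
    (n : ℕ) (lam mu : Fin n → ℤ)
    (hlam : ∀ i : Fin n, ∀ h : (i : ℕ) + 1 < n, 0 ≤ lam i - lam ⟨(i : ℕ) + 1, h⟩)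
    (hmu : ∀ i : Fin n, ∀ h : (i : ℕ) + 1 < n, 0 ≤ mu i - mu ⟨(i : ℕ) + 1, h⟩) :
    ¬ CrossingSets (Aset n lam \ Aset n mu) (Aset n mu \ Aset n lam) ↔
      ∀ i j : Fin n, i < j → SepCondZ n lam mu i j := by

  have hl := lshift_strictAnti n lam hlam
  have hm := lshift_strictAnti n mu hmu
  rw [crossing_iff]
  constructor
  · intro h i j _
    by_contra hs
    rw [not_sep_iff hl hm] at hs
    rcases hs with hs | hs
    · exact h (Or.inl (bad_to_cross hl hm hs))
    · exact h (Or.inr (bad_to_cross hm hl hs))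
  · rintro h (hc | hc)
    · obtain ⟨i, j, hij, hb⟩ := cross_to_bad hl hm hc
      exact (not_sep_iff hl hm i j).2 hb (h i j hij)
    · obtain ⟨i, j, hij, hb⟩ := cross_to_bad hm hl hc
      exact (not_sep_iff hl hm i j).2 hb.symm (h i j hij)
end

section
/- Let λ and μ be gl_n-highest weights (with arbitrary complex entries). Suppose that for each pair of indices 1 ≤ i < j ≤ n one has: either (m_j ∉ ⟨l_j, l_i⟩ and m_i ∉ ⟨l_j, l_i⟩) or (l_j ∉ ⟨m_j, m_i⟩ and l_i ∉ ⟨m_j, m_i⟩). Then the Y(gl_n)-module L(λ)⊗L(μ) is irreducible. -/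
open scoped TensorProduct

/-- The shifted weight `l_i = λ_i − i + 1` (with `0`-indexed entries:
`l i = lam i - i`). -/
def lshiftC (n : ℕ) (lam : Fin n → ℂ) : Fin n → ℂ :=
  fun i => lam i - ((i : ℕ) : ℂ)

/-- The set `⟨l_j, l_i⟩ = {l_j + t : t ∈ ℤ, 0 ≤ t ≤ l_i − l_j} \ {l_s : i ≤ s ≤ j}`
for a pair of indices `i < j`. -/
def bracketC (n : ℕ) (l : Fin n → ℂ) (i j : Fin n) : Set ℂ :=
  {x | (∃ t : ℕ, x = l j + (t : ℂ)) ∧ (∃ t : ℕ, l i = x + (t : ℂ)) ∧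
    ∀ s : Fin n, i ≤ s → s ≤ j → x ≠ l s}

/-- The condition `m_j, m_i ∉ ⟨l_j, l_i⟩ or l_j, l_i ∉ ⟨m_j, m_i⟩` for a pair
of indices `i < j`. -/
def SepCond (n : ℕ) (lam mu : Fin n → ℂ) (i j : Fin n) : Prop :=
  (lshiftC n mu j ∉ bracketC n (lshiftC n lam) i j ∧
      lshiftC n mu i ∉ bracketC n (lshiftC n lam) i j) ∨
  (lshiftC n lam j ∉ bracketC n (lshiftC n mu) i j ∧
      lshiftC n lam i ∉ bracketC n (lshiftC n mu) i j)

/-! ### General linear systems of operators -/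

namespace YIrr

open Module

section Basics

variable {W : Type} [AddCommGroup W] [Module ℂ W]

/-- The `gl_n` commutation relations, pointwise. -/
def GLRel {n : ℕ} (E : Fin n → Fin n → W →ₗ[ℂ] W) : Prop :=
  ∀ i j k l x, E i j (E k l x) = E k l (E i j x) +
    (if j = k then E i l x else 0) - (if l = i then E k j x else 0)

/-- Singular weight vectors. -/
def Sing {n : ℕ} (E : Fin n → Fin n → W →ₗ[ℂ] W) (r : Fin n → ℂ) (x : W) : Prop :=
  (∀ i j, i < j → E i j x = 0) ∧ ∀ i, E i i x = r i • x

/-- Stability of a subspace. -/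
def Stab {ι : Type} (G : ι → W →ₗ[ℂ] W) (N : Submodule ℂ W) : Prop :=
  ∀ g, ∀ x ∈ N, G g x ∈ N

def Stab2 {n : ℕ} (E : Fin n → Fin n → W →ₗ[ℂ] W) (N : Submodule ℂ W) : Prop :=
  ∀ i j, ∀ x ∈ N, E i j x ∈ N

/-- Simplicity relative to a subspace. -/
def RelSimple {n : ℕ} {ι : Type} (E : Fin n → Fin n → W →ₗ[ℂ] W) (G : ι → W →ₗ[ℂ] W)
    (P : Submodule ℂ W) : Prop :=
  ∀ N ≤ P, Stab2 E N → Stab G N → N = ⊥ ∨ N = P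

/-- Restriction to `gl_{n}` in `gl_{n+1}`. -/
def rst {n : ℕ} (E : Fin (n + 1) → Fin (n + 1) → W →ₗ[ℂ] W) : Fin n → Fin n → W →ₗ[ℂ] W :=
  fun i j => E i.castSucc j.castSucc

lemma GLRel.rst {n : ℕ} {E : Fin (n + 1) → Fin (n + 1) → W →ₗ[ℂ] W} (hE : GLRel E) :
    GLRel (rst E) := by
  intro i j k l x
  have := hE i.castSucc j.castSucc k.castSucc l.castSucc x
  simpa [YIrr.rst] using this

/-- The family `G` commutes with `E`. -/
def Comm {n : ℕ} {ι : Type} (E : Fin n → Fin n → W →ₗ[ℂ] W) (G : ι → W →ₗ[ℂ] W) : Prop :=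
  ∀ g i j x, G g (E i j x) = E i j (G g x)

/-- The tower of subspaces generated from `N` by the lowering operators. -/
def tower {n : ℕ} (E : Fin (n + 1) → Fin (n + 1) → W →ₗ[ℂ] W) (N : Submodule ℂ W) :
    ℕ → Submodule ℂ W
  | 0 => N
  | k + 1 => ⨆ i : Fin n, (tower E N k).map (E (Fin.last n) i.castSucc)

lemma tower_mem_succ {n : ℕ} (E : Fin (n + 1) → Fin (n + 1) → W →ₗ[ℂ] W) (N : Submodule ℂ W)
    (k : ℕ) (i : Fin n) (y : W) (hy : y ∈ tower E N k) :
    E (Fin.last n) i.castSucc y ∈ tower E N (k + 1) :=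
  (le_iSup (fun i : Fin n => (tower E N k).map (E (Fin.last n) i.castSucc)) i)
    (Submodule.mem_map_of_mem hy)

lemma tower_succ_ind {n : ℕ} (E : Fin (n + 1) → Fin (n + 1) → W →ₗ[ℂ] W) (N : Submodule ℂ W)
    (k : ℕ) (Q : Submodule ℂ W)
    (h : ∀ i : Fin n, ∀ y ∈ tower E N k, E (Fin.last n) i.castSucc y ∈ Q) :
    tower E N (k + 1) ≤ Q := by
  refine iSup_le fun i => ?_
  rintro _ ⟨y, hy, rfl⟩
  exact h i y hy

lemma cs_ne_last {n : ℕ} (i : Fin n) : i.castSucc ≠ Fin.last n := (Fin.castSucc_lt_last i).ne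
lemma last_ne_cs {n : ℕ} (i : Fin n) : Fin.last n ≠ i.castSucc := (Fin.castSucc_lt_last i).ne.symm

/-- Data for the core lemma. -/
structure Core {n : ℕ} {ι : Type} (E : Fin (n + 1) → Fin (n + 1) → W →ₗ[ℂ] W)
    (G : ι → W →ₗ[ℂ] W) (P N : Submodule ℂ W) (c : ℂ) : Prop where
  rel : GLRel E
  comm : Comm E G
  pE : Stab2 E P
  pG : Stab G P
  simple : RelSimple E G P
  le : N ≤ P
  ne : N ≠ ⊥
  nE : Stab2 (rst E) N
  nG : Stab G N
  kill : ∀ i : Fin n, ∀ x ∈ N, E i.castSucc (Fin.last n) x = 0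
  eig : ∀ x ∈ N, E (Fin.last n) (Fin.last n) x = c • x

namespace Core

variable {n : ℕ} {ι : Type} {E : Fin (n + 1) → Fin (n + 1) → W →ₗ[ℂ] W}
    {G : ι → W →ₗ[ℂ] W} {P N : Submodule ℂ W} {c : ℂ}

lemma tower_le (C : Core E G P N c) (k : ℕ) : tower E N k ≤ P := by
  induction k with
  | zero => exact C.le
  | succ k ih => exact tower_succ_ind E N k P fun i y hy => C.pE _ _ _ (ih hy)

lemma tower_eig (C : Core E G P N c) (k : ℕ) :
    tower E N k ≤ End.eigenspace (E (Fin.last n) (Fin.last n)) (c + k) := by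
  induction k with
  | zero => intro x hx; simpa using C.eig x hx
  | succ k ih =>
    refine tower_succ_ind E N k _ fun i y hy => ?_
    have h1 := End.mem_eigenspace_iff.1 (ih hy)
    rw [End.mem_eigenspace_iff, C.rel, h1]
    simp [cs_ne_last, map_smul]
    module

lemma tower_rst (C : Core E G P N c) (k : ℕ) : Stab2 (rst E) (tower E N k) := by
  induction k with
  | zero => exact C.nE
  | succ k ih =>
    intro i j
    change tower E N (k + 1) ≤ (tower E N (k + 1)).comap (rst E i j)
    refine tower_succ_ind E N k _ fun a y hy => ?_
    simp only [Submodule.mem_comap, rst]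
    rw [C.rel]
    refine sub_mem (add_mem (tower_mem_succ _ _ _ _ _ (ih i j y hy)) ?_) ?_
    · simp [cs_ne_last]
    · split_ifs
      · exact tower_mem_succ _ _ _ _ _ hy
      · exact zero_mem _

lemma tower_G (C : Core E G P N c) (k : ℕ) : Stab G (tower E N k) := by
  induction k with
  | zero => exact C.nG
  | succ k ih =>
    intro g
    change tower E N (k + 1) ≤ (tower E N (k + 1)).comap (G g)
    refine tower_succ_ind E N k _ fun a y hy => ?_
    simp only [Submodule.mem_comap]
    rw [C.comm]
    exact tower_mem_succ _ _ _ _ _ (ih g y hy)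

lemma tower_raise (C : Core E G P N c) (i : Fin n) (k : ℕ) :
    tower E N (k + 1) ≤ (tower E N k).comap (E i.castSucc (Fin.last n)) := by
  induction k with
  | zero =>
    refine tower_succ_ind E N 0 _ fun a y hy => ?_
    simp only [Submodule.mem_comap]
    rw [C.rel, C.kill i y hy, C.eig y hy]
    have := C.nE i a y hy
    simp only [map_zero, zero_add, if_true]
    refine sub_mem this ?_
    split_ifs
    · exact Submodule.smul_mem _ _ hy
    · exact zero_mem _
  | succ k ih =>
    refine tower_succ_ind E N (k + 1) _ fun a y hy => ?_
    simp only [Submodule.mem_comap]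
    rw [C.rel, End.mem_eigenspace_iff.1 (C.tower_eig _ hy)]
    simp only [if_true]
    refine sub_mem (add_mem (tower_mem_succ _ _ _ _ _ (ih hy)) (C.tower_rst _ i a y hy)) ?_
    split_ifs
    · exact Submodule.smul_mem _ _ hy
    · exact zero_mem _

lemma tower_top (C : Core E G P N c) : ⨆ k, tower E N k = P := by
  have hle : ⨆ k, tower E N k ≤ P := iSup_le C.tower_le
  have hA : Stab2 E (⨆ k, tower E N k) := by
    intro i j
    change ⨆ k, tower E N k ≤ (⨆ k, tower E N k).comap (E i j)
    refine iSup_le fun k x hx => ?_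
    rw [Submodule.mem_comap]
    have key : ∀ k, tower E N k ≤ ⨆ k, tower E N k := le_iSup (tower E N)
    refine Fin.lastCases ?_ (fun i => ?_) i <;> refine Fin.lastCases ?_ (fun j => ?_) j
    · rw [End.mem_eigenspace_iff.1 (C.tower_eig _ hx)]
      exact Submodule.smul_mem _ _ (key k hx)
    · exact key (k + 1) (tower_mem_succ _ _ _ _ _ hx)
    · cases k with
      | zero => rw [C.kill i x hx]; exact zero_mem _
      | succ k => exact key k (C.tower_raise i k hx)
    · exact key k (C.tower_rst k i j x hx)
  have hB : Stab G (⨆ k, tower E N k) := by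
    intro g
    change ⨆ k, tower E N k ≤ (⨆ k, tower E N k).comap (G g)
    refine iSup_le fun k x hx => ?_
    exact le_iSup (tower E N) k (C.tower_G k g x hx)
  rcases C.simple _ hle hA hB with h | h
  · exfalso
    apply C.ne
    rw [eq_bot_iff, ← h]
    exact le_iSup (tower E N) 0
  · exact h

lemma decomp (C : Core E G P N c) {u : W} (hu : u ∈ P) :
    ∃ (K : ℕ) (v : ℕ → W), (∀ k, v k ∈ tower E N k) ∧ u = ∑ k ∈ Finset.range K, v k := by
  classical
  rw [← C.tower_top] at hu
  obtain ⟨f, hf⟩ := (Submodule.mem_iSup_iff_exists_dfinsupp' _ u).1 hu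
  refine ⟨f.support.sup id + 1, fun k => (f k : W), fun k => (f k).2, ?_⟩
  rw [← hf, DFinsupp.sum]
  refine Finset.sum_subset ?_ ?_
  · intro k hk
    exact Finset.mem_range.2 (Nat.lt_succ_of_le (Finset.le_sup (f := id) hk))
  · intro k _ hk
    simpa using hk

lemma phi (C : Core E G P N c) (φ : W →ₗ[ℂ] ℂ)
    (h1 : ∀ i : Fin n, ∀ x ∈ P, φ (E (Fin.last n) i.castSucc x) = 0)
    (h0 : ∀ x ∈ N, φ x = 0) : ∀ x ∈ P, φ x = 0 := by
  have : P ≤ LinearMap.ker φ := by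
    rw [← C.tower_top]
    refine iSup_le fun k => ?_
    cases k with
    | zero => exact fun x hx => h0 x hx
    | succ k => exact tower_succ_ind _ _ _ _ fun i y hy => h1 i y (C.tower_le k hy)
  exact fun x hx => this hx

end Core

/-- Distinct eigenvectors summing to zero all vanish. -/
lemma sum_eig_zero (h : W →ₗ[ℂ] W) (c : ℂ) (v : ℕ → W) (hv : ∀ k, h (v k) = (c + k) • v k)
    (K : ℕ) (hs : ∑ k ∈ Finset.range K, v k = 0) : ∀ k < K, v k = 0 := by
  induction K generalizing v with
  | zero => intro k hk; omega
  | succ K ih =>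
    have h2 : ∑ k ∈ Finset.range (K + 1), ((k : ℂ) - K) • v k = 0 := by
      have e1 := congrArg h hs
      rw [map_sum, map_zero] at e1
      have e2 := congrArg (fun z => (c + K) • z) hs
      simp only [smul_zero, Finset.smul_sum] at e2
      rw [← sub_zero (0 : W)]
      nth_rw 1 [← e1]
      rw [← e2, ← Finset.sum_sub_distrib]
      refine Finset.sum_congr rfl fun k _ => ?_
      rw [hv, ← sub_smul]
      congr 1; ring
    rw [Finset.sum_range_succ, sub_self, zero_smul, add_zero] at h2
    have h3 := ih (fun k => ((k : ℂ) - K) • v k) (fun k => by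
      rw [map_smul, hv, smul_comm]) h2
    have h4 : ∀ k < K, v k = 0 := by
      intro k hk
      have := h3 k hk
      rcases smul_eq_zero.1 this with h5 | h5
      · exfalso
        have : (k : ℂ) = K := sub_eq_zero.1 h5
        have : k = K := by exact_mod_cast this
        omega
      · exact h5
    intro k hk
    rcases Nat.lt_succ_iff_lt_or_eq.1 hk with h5 | rfl
    · exact h4 k h5
    · rw [Finset.sum_range_succ, Finset.sum_eq_zero (fun j hj => h4 j (Finset.mem_range.1 hj)),
        zero_add] at hs
      exact hs

namespace Core

variable {n : ℕ} {ι : Type} {E : Fin (n + 1) → Fin (n + 1) → W →ₗ[ℂ] W}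
    {G : ι → W →ₗ[ℂ] W} {P N : Submodule ℂ W} {c : ℂ}

lemma eig_mem (C : Core E G P N c) {x : W} (hx : x ∈ P)
    (h : E (Fin.last n) (Fin.last n) x = c • x) : x ∈ N := by
  obtain ⟨K, v, hv, hu⟩ := C.decomp hx
  have hv' := fun k => End.mem_eigenspace_iff.1 (C.tower_eig k (hv k))
  have key := sum_eig_zero (E (Fin.last n) (Fin.last n)) c
    (fun k => (k : ℂ) • v k) (fun k => by rw [map_smul, hv', smul_comm]) K (by
      have : E (Fin.last n) (Fin.last n) x - c • x = 0 := by rw [h, sub_self]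
      rw [hu, map_sum, Finset.smul_sum, ← Finset.sum_sub_distrib] at this
      rw [← this]
      refine Finset.sum_congr rfl fun k _ => ?_
      rw [hv', ← sub_smul]; congr 1; ring)
  rw [hu]
  refine sum_mem fun k hk => ?_
  rcases Nat.eq_zero_or_pos k with rfl | hk0
  · exact hv 0
  · have := (smul_eq_zero.1 (key k (Finset.mem_range.1 hk))).resolve_left (by
      exact_mod_cast hk0.ne')
    rw [this]; exact zero_mem _

lemma eig_val (C : Core E G P N c) {x : W} (hx : x ∈ P) (hx0 : x ≠ 0) {a : ℂ}
    (h : E (Fin.last n) (Fin.last n) x = a • x) : ∃ k : ℕ, a = c + k := by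
  by_contra! hne
  obtain ⟨K, v, hv, hu⟩ := C.decomp hx
  have hv' := fun k => End.mem_eigenspace_iff.1 (C.tower_eig k (hv k))
  have key := sum_eig_zero (E (Fin.last n) (Fin.last n)) c
    (fun k => (c + k - a) • v k) (fun k => by rw [map_smul, hv', smul_comm]) K (by
      have : E (Fin.last n) (Fin.last n) x - a • x = 0 := by rw [h, sub_self]
      rw [hu, map_sum, Finset.smul_sum, ← Finset.sum_sub_distrib] at this
      rw [← this]
      refine Finset.sum_congr rfl fun k _ => ?_
      rw [hv', ← sub_smul])
  apply hx0
  rw [hu]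
  refine Finset.sum_eq_zero fun k hk => ?_
  exact (smul_eq_zero.1 (key k (Finset.mem_range.1 hk))).resolve_left
    (fun h0 => hne k (sub_eq_zero.1 h0).symm)

end Core

/-- A system with a distinguished bottom vector. -/
structure Sys {n : ℕ} {ι : Type} (E : Fin n → Fin n → W →ₗ[ℂ] W)
    (G : ι → W →ₗ[ℂ] W) (P : Submodule ℂ W) : Prop where
  rel : GLRel E
  comm : Comm E G
  pE : Stab2 E P
  pG : Stab G P
  simple : RelSimple E G P

/-- The bottom part. -/
def bot {n : ℕ} (E : Fin (n + 1) → Fin (n + 1) → W →ₗ[ℂ] W) (P : Submodule ℂ W) (c : ℂ) :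
    Submodule ℂ W := P ⊓ End.eigenspace (E (Fin.last n) (Fin.last n)) c

namespace Sys

variable {n : ℕ} {ι : Type} {E : Fin (n + 1) → Fin (n + 1) → W →ₗ[ℂ] W}
    {G : ι → W →ₗ[ℂ] W} {P : Submodule ℂ W} {c : ℂ}

lemma rst_comm_h {E : Fin (n + 1) → Fin (n + 1) → W →ₗ[ℂ] W} (h : GLRel E) (i j : Fin n) (x : W) :
    E (Fin.last n) (Fin.last n) (rst E i j x) = rst E i j (E (Fin.last n) (Fin.last n) x) := by
  simp only [rst]; rw [h]; simp [last_ne_cs]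

/-- the subspace of raising-killed eigenvectors gives a core -/
lemma coreK (S : Sys E G P) {ξ : W} (hξP : ξ ∈ P) (hξ : ξ ≠ 0)
    (he : ∀ i : Fin n, E i.castSucc (Fin.last n) ξ = 0)
    (hh : E (Fin.last n) (Fin.last n) ξ = c • ξ) :
    Core E G P (bot E P c ⊓ ⨅ i : Fin n, LinearMap.ker (E i.castSucc (Fin.last n))) c where
  rel := S.rel
  comm := S.comm
  pE := S.pE
  pG := S.pG
  simple := S.simple
  le := inf_le_left.trans inf_le_left
  ne := by
    intro h
    apply hξ
    rw [← Submodule.mem_bot ℂ, ← h]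
    refine ⟨⟨hξP, End.mem_eigenspace_iff.2 hh⟩, ?_⟩
    simpa using he
  nE := by
    rintro i j x ⟨⟨h1, h2⟩, h3⟩
    refine ⟨⟨S.pE _ _ _ h1, ?_⟩, ?_⟩
    · rw [SetLike.mem_coe, End.mem_eigenspace_iff] at h2 ⊢
      rw [rst_comm_h S.rel, h2, map_smul]
    · simp only [SetLike.mem_coe, Submodule.mem_iInf, LinearMap.mem_ker] at h3 ⊢
      intro k
      simp only [rst]
      rw [S.rel, h3, h3]
      simp [last_ne_cs]
  nG := by
    rintro g x ⟨⟨h1, h2⟩, h3⟩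
    refine ⟨⟨S.pG _ _ h1, ?_⟩, ?_⟩
    · rw [SetLike.mem_coe, End.mem_eigenspace_iff] at h2 ⊢
      rw [← S.comm, h2, map_smul]
    · simp only [SetLike.mem_coe, Submodule.mem_iInf, LinearMap.mem_ker] at h3 ⊢
      intro k
      rw [← S.comm, h3, map_zero]
  kill := by
    rintro i x ⟨_, h3⟩
    simp only [SetLike.mem_coe, Submodule.mem_iInf, LinearMap.mem_ker] at h3
    exact h3 i
  eig := by
    rintro x ⟨⟨h1, h2⟩, h3⟩
    exact End.mem_eigenspace_iff.1 h2

lemma bot_kill (S : Sys E G P) {ξ : W} (hξP : ξ ∈ P) (hξ : ξ ≠ 0)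
    (he : ∀ i : Fin n, E i.castSucc (Fin.last n) ξ = 0)
    (hh : E (Fin.last n) (Fin.last n) ξ = c • ξ) {x : W} (hx : x ∈ P)
    (hxe : E (Fin.last n) (Fin.last n) x = c • x) (i : Fin n) :
    E i.castSucc (Fin.last n) x = 0 := by
  have := ((S.coreK hξP hξ he hh).eig_mem hx hxe).2
  simp only [SetLike.mem_coe, Submodule.mem_iInf, LinearMap.mem_ker] at this
  exact this i

/-- Any nonzero stable subspace of the bottom part gives a core. -/
lemma coreN (S : Sys E G P) {ξ : W} (hξP : ξ ∈ P) (hξ : ξ ≠ 0)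
    (he : ∀ i : Fin n, E i.castSucc (Fin.last n) ξ = 0)
    (hh : E (Fin.last n) (Fin.last n) ξ = c • ξ) (N : Submodule ℂ W) (hN : N ≠ ⊥)
    (hle : N ≤ bot E P c) (h1 : Stab2 (rst E) N) (h2 : Stab G N) : Core E G P N c where
  rel := S.rel
  comm := S.comm
  pE := S.pE
  pG := S.pG
  simple := S.simple
  le := hle.trans inf_le_left
  ne := hN
  nE := h1
  nG := h2
  kill := fun i x hx => S.bot_kill hξP hξ he hh (hle hx).1 (End.mem_eigenspace_iff.1 (hle hx).2) i
  eig := fun x hx => End.mem_eigenspace_iff.1 (hle hx).2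

lemma bot_sys (S : Sys E G P) {ξ : W} (hξP : ξ ∈ P) (hξ : ξ ≠ 0)
    (he : ∀ i : Fin n, E i.castSucc (Fin.last n) ξ = 0)
    (hh : E (Fin.last n) (Fin.last n) ξ = c • ξ) : Sys (rst E) G (bot E P c) where
  rel := S.rel.rst
  comm := fun g i j x => S.comm g _ _ x
  pE := by
    rintro i j x ⟨h1, h2⟩
    refine ⟨S.pE _ _ _ h1, ?_⟩
    rw [SetLike.mem_coe, End.mem_eigenspace_iff] at h2 ⊢
    rw [rst_comm_h S.rel, h2, map_smul]
  pG := by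
    rintro g x ⟨h1, h2⟩
    refine ⟨S.pG _ _ h1, ?_⟩
    rw [SetLike.mem_coe, End.mem_eigenspace_iff] at h2 ⊢
    rw [← S.comm, h2, map_smul]
  simple := by
    intro N hN h1 h2
    by_cases hN0 : N = ⊥
    · exact Or.inl hN0
    · right
      refine le_antisymm hN fun x hx => ?_
      exact (S.coreN hξP hξ he hh N hN0 hN h1 h2).eig_mem hx.1 (End.mem_eigenspace_iff.1 hx.2)

lemma core_bot (S : Sys E G P) {ξ : W} (hξP : ξ ∈ P) (hξ : ξ ≠ 0)
    (he : ∀ i : Fin n, E i.castSucc (Fin.last n) ξ = 0)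
    (hh : E (Fin.last n) (Fin.last n) ξ = c • ξ) : Core E G P (bot E P c) c :=
  S.coreN hξP hξ he hh _ (fun h => hξ (by
    rw [← Submodule.mem_bot ℂ, ← h]; exact ⟨hξP, End.mem_eigenspace_iff.2 hh⟩)) le_rfl
    (S.bot_sys hξP hξ he hh).pE (S.bot_sys hξP hξ he hh).pG

/-- raising-killed eigenvectors lie in the bottom part -/
lemma eig_unique (S : Sys E G P) {ξ : W} (hξP : ξ ∈ P) (hξ : ξ ≠ 0)
    (he : ∀ i : Fin n, E i.castSucc (Fin.last n) ξ = 0)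
    (hh : E (Fin.last n) (Fin.last n) ξ = c • ξ)
    {x : W} (hxP : x ∈ P) (hx : x ≠ 0)
    (hxe : ∀ i : Fin n, E i.castSucc (Fin.last n) x = 0) {a : ℂ}
    (hxh : E (Fin.last n) (Fin.last n) x = a • x) : a = c := by
  obtain ⟨k, hk⟩ := (S.coreK hξP hξ he hh).eig_val hxP hx hxh
  obtain ⟨l, hl⟩ := (S.coreK hxP hx hxe hxh).eig_val hξP hξ hh
  have h0 : ((k + l : ℕ) : ℂ) = 0 := by push_cast; linear_combination -hk - hl
  have : k + l = 0 := by exact_mod_cast h0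
  have : k = 0 := by omega
  simp [hk, this]

end Sys

lemma Sing.rst {n : ℕ} {E : Fin (n + 1) → Fin (n + 1) → W →ₗ[ℂ] W} {r : Fin (n + 1) → ℂ} {x : W}
    (h : Sing E r x) : Sing (rst E) (fun i => r i.castSucc) x :=
  ⟨fun i j hij => h.1 _ _ (by simpa using hij), fun i => h.2 _⟩

lemma Sing.raise {n : ℕ} {E : Fin (n + 1) → Fin (n + 1) → W →ₗ[ℂ] W} {r : Fin (n + 1) → ℂ} {x : W}
    (h : Sing E r x) (i : Fin n) : E i.castSucc (Fin.last n) x = 0 :=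
  h.1 _ _ (Fin.castSucc_lt_last i)

/-- Uniqueness of the highest weight. -/
lemma weight_unique {ι : Type} (G : ι → W →ₗ[ℂ] W) (n : ℕ) : ∀ (E : Fin n → Fin n → W →ₗ[ℂ] W)
    (P : Submodule ℂ W), Sys E G P → ∀ (r s : Fin n → ℂ) (x y : W), x ∈ P → y ∈ P → x ≠ 0 → y ≠ 0 →
    Sing E r x → Sing E s y → r = s := by
  induction n with
  | zero => intro E P S r s x y _ _ _ _ _ _; exact Subsingleton.elim _ _
  | succ n ih =>
    intro E P S r s x y hxP hyP hx hy h1 h2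
    have hl : r (Fin.last n) = s (Fin.last n) :=
      S.eig_unique hyP hy h2.raise (h2.2 _) hxP hx h1.raise (h1.2 _)
    have h3 := ih (YIrr.rst E) (bot E P (s (Fin.last n)))
      (S.bot_sys hyP hy h2.raise (h2.2 _)) _ _ x y
      ⟨hxP, End.mem_eigenspace_iff.2 (by rw [h1.2, hl])⟩ ⟨hyP, End.mem_eigenspace_iff.2 (h2.2 _)⟩
      hx hy h1.rst h2.rst
    funext i
    refine Fin.lastCases hl (fun i => congrFun h3 i) i

/-- Subspace of singular vectors of given weight. -/
def hws {n : ℕ} (E : Fin n → Fin n → W →ₗ[ℂ] W) (r : Fin n → ℂ) : Submodule ℂ W where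
  carrier := {x | Sing E r x}
  zero_mem' := ⟨by simp, by simp⟩
  add_mem' := by
    rintro a b ⟨h1, h2⟩ ⟨h3, h4⟩
    exact ⟨fun i j hij => by rw [map_add, h1 i j hij, h3 i j hij, add_zero],
      fun i => by rw [map_add, h2, h4, smul_add]⟩
  smul_mem' := by
    rintro c a ⟨h1, h2⟩
    exact ⟨fun i j hij => by rw [map_smul, h1 i j hij, smul_zero],
      fun i => by rw [map_smul, h2, smul_comm]⟩

lemma mem_hws {n : ℕ} {E : Fin n → Fin n → W →ₗ[ℂ] W} {r : Fin n → ℂ} {x : W} :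
    x ∈ hws E r ↔ Sing E r x := Iff.rfl

lemma hws_simple {ι : Type} (G : ι → W →ₗ[ℂ] W) (n : ℕ) : ∀ (E : Fin n → Fin n → W →ₗ[ℂ] W)
    (P : Submodule ℂ W), Sys E G P → ∀ (r : Fin n → ℂ) (x : W), x ∈ P → x ≠ 0 → Sing E r x →
    (∀ N ≤ P ⊓ hws E r, Stab G N → N = ⊥ ∨ N = P ⊓ hws E r) ∧
    (∀ φ : W →ₗ[ℂ] ℂ, (∀ i j, j < i → ∀ x ∈ P, φ (E i j x) = 0) →
      (∀ x ∈ P ⊓ hws E r, φ x = 0) → ∀ x ∈ P, φ x = 0) := by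
  induction n with
  | zero =>
    intro E P S r x hxP hx h
    have e : hws E r = ⊤ := eq_top_iff.2 fun x _ => ⟨fun i => i.elim0, fun i => i.elim0⟩
    rw [e, inf_top_eq]
    exact ⟨fun N hN hG => S.simple N hN (fun i => i.elim0) hG, fun φ _ h => h⟩
  | succ n ih =>
    intro E P S r x hxP hx h
    have S' := S.bot_sys hxP hx h.raise (h.2 _)
    have e : bot E P (r (Fin.last n)) ⊓ hws (YIrr.rst E) (fun i => r i.castSucc) = P ⊓ hws E r := by
      ext y
      constructor
      · rintro ⟨⟨h1, h2⟩, h3⟩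
        refine ⟨h1, ?_⟩
        have h2' := End.mem_eigenspace_iff.1 h2
        refine ⟨fun i j => ?_, fun i => ?_⟩
        · refine Fin.lastCases ?_ (fun i => ?_) i <;> refine Fin.lastCases ?_ (fun j => ?_) j
          · intro h; exact absurd h (lt_irrefl _)
          · intro h; exact absurd h (Fin.castSucc_lt_last j).asymm
          · intro _
            exact S.bot_kill hxP hx h.raise (h.2 _) h1 h2' i
          · intro h
            exact h3.1 i j (by simpa using h)
        · refine Fin.lastCases h2' (fun i => ?_) i
          exact h3.2 i
      · rintro ⟨h1, h2⟩
        exact ⟨⟨h1, End.mem_eigenspace_iff.2 (h2.2 _)⟩, Sing.rst h2⟩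
    obtain ⟨i1, i2⟩ := ih (YIrr.rst E) _ S' (fun i => r i.castSucc) x
      ⟨hxP, End.mem_eigenspace_iff.2 (h.2 _)⟩ hx h.rst
    rw [e] at i1 i2
    refine ⟨i1, fun φ h1 h2 => ?_⟩
    refine (S.core_bot hxP hx h.raise (h.2 _)).phi φ (fun i x hx => h1 _ _ (Fin.castSucc_lt_last i) x hx) ?_
    exact i2 φ (fun i j hij x hx => h1 _ _ (by simpa using hij) x hx.1) h2

end Basics

end YIrr
namespace YIrr

open Module

section FinDim

variable {W : Type} [AddCommGroup W] [Module ℂ W] [FiniteDimensional ℂ W]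

lemma no_inf (h : W →ₗ[ℂ] W) (a b : ℂ) (hb : b ≠ 0) (v : ℕ → W)
    (hv : ∀ k, h (v k) = (a + b * k) • v k) : ∃ k, v k = 0 := by
  by_contra! hne
  have hli := End.eigenvectors_linearIndependent' h (fun k : ℕ => a + b * k) (by
    intro k l hkl
    have : b * ((k : ℂ) - l) = 0 := by
      simp only at hkl
      linear_combination hkl
    rcases mul_eq_zero.1 this with h1 | h1
    · exact absurd h1 hb
    · exact_mod_cast sub_eq_zero.1 h1) v (fun k => ⟨End.mem_eigenspace_iff.2 (hv k), hne k⟩)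
  exact not_finite_iff_infinite.2 inferInstance hli.finite

lemma exists_last (h : W →ₗ[ℂ] W) (a b : ℂ) (hb : b ≠ 0) (v : ℕ → W)
    (hv : ∀ k, h (v k) = (a + b * k) • v k) (h0 : v 0 ≠ 0) : ∃ k, v k ≠ 0 ∧ v (k + 1) = 0 := by
  obtain ⟨k, hk1, hk2⟩ := Nat.exists_not_and_succ_of_not_zero_of_exists (p := fun k => v k = 0) h0
    (no_inf h a b hb v hv)
  exact ⟨k, hk1, hk2⟩

/-- A nonzero stable subspace has a lowest eigenvalue. -/
lemma exists_low (h : W →ₗ[ℂ] W) (Z : Submodule ℂ W) (hZ : Z ≠ ⊥) (hs : ∀ x ∈ Z, h x ∈ Z) :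
    ∃ c : ℂ, Z ⊓ End.eigenspace h c ≠ ⊥ ∧ Z ⊓ End.eigenspace h (c - 1) = ⊥ := by
  have hn : Nontrivial Z := Submodule.nontrivial_iff_ne_bot.2 hZ
  obtain ⟨a, ha⟩ := End.exists_eigenvalue (h.restrict hs)
  obtain ⟨z, hz⟩ := ha.exists_hasEigenvector
  have hz1 : h (z : W) = a • (z : W) := by
    have := congrArg Subtype.val (End.mem_eigenspace_iff.1 hz.1)
    simpa using this
  have hz0 : (z : W) ≠ 0 := by simpa using hz.2
  by_contra! hcon
  have key : ∀ k : ℕ, Z ⊓ End.eigenspace h (a + (-1) * k) ≠ ⊥ := by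
    intro k
    induction k with
    | zero =>
      intro h0
      apply hz0
      rw [← Submodule.mem_bot ℂ, ← h0]
      exact ⟨z.2, End.mem_eigenspace_iff.2 (by simpa using hz1)⟩
    | succ k ih =>
      have := hcon _ ih
      convert this using 3
      push_cast; ring
  choose v hv using fun k => Submodule.exists_mem_ne_zero_of_ne_bot (key k)
  obtain ⟨k, hk⟩ := no_inf h a (-1) (by norm_num) v
    (fun k => End.mem_eigenspace_iff.1 (hv k).1.2)
  exact (hv k).2 hk

/-- Existence of singular vectors. -/
lemma exists_sing (n : ℕ) : ∀ (E : Fin n → Fin n → W →ₗ[ℂ] W) (_ : GLRel E) (Z : Submodule ℂ W)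
    (_ : Z ≠ ⊥) (_ : Stab2 E Z), ∃ r, ∃ x ∈ Z, x ≠ 0 ∧ Sing E r x := by
  induction n with
  | zero =>
    intro E _ Z hZ _
    obtain ⟨x, hx, hx0⟩ := Submodule.exists_mem_ne_zero_of_ne_bot hZ
    exact ⟨fun _ => 0, x, hx, hx0, fun i => i.elim0, fun i => i.elim0⟩
  | succ n ih =>
    intro E hE Z hZ hs
    obtain ⟨c, h1, h2⟩ := exists_low (E (Fin.last n) (Fin.last n)) Z hZ (hs _ _)
    obtain ⟨r, x, ⟨hxZ, hxe⟩, hx0, hx⟩ := ih (rst E) hE.rst _ h1 (by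
      rintro i j x ⟨h3, h4⟩
      refine ⟨hs _ _ _ h3, ?_⟩
      rw [SetLike.mem_coe, End.mem_eigenspace_iff] at h4 ⊢
      rw [Sys.rst_comm_h hE, h4, map_smul])
    have hxe' := End.mem_eigenspace_iff.1 hxe
    refine ⟨Fin.snoc (α := fun _ => ℂ) r c, x, hxZ, hx0, fun i j => ?_, fun i => ?_⟩
    · refine Fin.lastCases ?_ (fun i => ?_) i <;> refine Fin.lastCases ?_ (fun j => ?_) j
      · intro h; exact absurd h (lt_irrefl _)
      · intro h; exact absurd h (Fin.castSucc_lt_last j).asymm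
      · intro _
        rw [← Submodule.mem_bot ℂ, ← h2]
        refine ⟨hs _ _ _ hxZ, End.mem_eigenspace_iff.2 ?_⟩
        rw [hE, hxe']
        simp [last_ne_cs]
        module
      · intro h
        exact hx.1 i j (by simpa using h)
    · refine Fin.lastCases ?_ (fun i => ?_) i
      · simpa using hxe'
      · simpa [rst] using hx.2 i

variable {n : ℕ} {E : Fin n → Fin n → W →ₗ[ℂ] W}

lemma pow_diag_up (hE : GLRel E) {i j : Fin n} (hij : i ≠ j) {x : W} {b : ℂ}
    (hb : E j j x = b • x) (k : ℕ) :
    E j j ((E j i ^ k) x) = (b + k) • (E j i ^ k) x := by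
  induction k with
  | zero => simpa using hb
  | succ k ih =>
    rw [pow_succ', End.mul_apply, hE, ih]
    simp [hij]
    module

lemma pow_diag_down (hE : GLRel E) {i j : Fin n} (hij : i ≠ j) {x : W} {a : ℂ}
    (ha : E i i x = a • x) (k : ℕ) :
    E i i ((E j i ^ k) x) = (a - k) • (E j i ^ k) x := by
  induction k with
  | zero => simpa using ha
  | succ k ih =>
    rw [pow_succ', End.mul_apply, hE, ih]
    simp [hij]
    module

/-- The basic `sl_2` lemma. -/
lemma sl2 (hE : GLRel E) {i j : Fin n} (hij : i ≠ j) {x : W} (hx : x ≠ 0) (he : E i j x = 0)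
    {a b : ℂ} (ha : E i i x = a • x) (hb : E j j x = b • x) :
    ∃ N : ℕ, a - b = N ∧ (E j i ^ N) x ≠ 0 := by
  obtain ⟨N, hN1, hN2⟩ := exists_last (E j j) b 1 one_ne_zero (fun k => (E j i ^ k) x)
    (fun k => by simpa using pow_diag_up hE hij hb k) (by simpa using hx)
  have key : ∀ k : ℕ, E i j ((E j i ^ (k + 1)) x) = ((k + 1) * (a - b - k)) • (E j i ^ k) x := by
    intro k
    induction k with
    | zero =>
      rw [pow_succ', End.mul_apply, hE]
      simp [he, ha, hb]
      module
    | succ k ih =>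
      rw [pow_succ', End.mul_apply, hE, ih, pow_diag_up hE hij hb, pow_diag_down hE hij ha,
        map_smul, ← End.mul_apply, ← pow_succ']
      simp
      module
  refine ⟨N, ?_, hN1⟩
  have h1 := key N
  rw [hN2, map_zero] at h1
  have h2 := (smul_eq_zero.1 h1.symm).resolve_right hN1
  have h3 := (mul_eq_zero.1 h2).resolve_left (by exact_mod_cast Nat.succ_ne_zero N)
  linear_combination h3

/-- Dominance of the weight of a singular vector. -/
lemma dominant (hE : GLRel E) {x : W} (hx : x ≠ 0) {r : Fin n → ℂ} (h : Sing E r x)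
    {i j : Fin n} (hij : i < j) : ∃ N : ℕ, r i = r j + N := by
  obtain ⟨N, hN, _⟩ := sl2 hE hij.ne hx (h.1 i j hij) (h.2 i) (h.2 j)
  exact ⟨N, by linear_combination hN⟩

end FinDim

section GLpart

variable {W : Type} [AddCommGroup W] [Module ℂ W] [FiniteDimensional ℂ W]
variable {n : ℕ} {ι : Type} {E : Fin (n + 1) → Fin (n + 1) → W →ₗ[ℂ] W}
    {G : ι → W →ₗ[ℂ] W}

/-- Coordinates of all weights are bounded below by the last coordinate of the highest weight. -/
lemma coord_bound (S : Sys E G ⊤) {ξ : W} (hξ : ξ ≠ 0) {lam : Fin (n + 1) → ℂ}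
    (hs : Sing E lam ξ) {y : W} (hy : y ≠ 0) (p : Fin n) {a b : ℂ}
    (ha : E p.castSucc p.castSucc y = a • y) (hb : E (Fin.last n) (Fin.last n) y = b • y) :
    ∃ N : ℕ, a = lam (Fin.last n) + N := by
  have hne := cs_ne_last p
  obtain ⟨k, hk1, hk2⟩ := exists_last (E (Fin.last n) (Fin.last n)) b 1 one_ne_zero
    (fun k => (E (Fin.last n) p.castSucc ^ k) y)
    (fun k => by simpa using pow_diag_up S.rel hne hb k) (by simpa using hy)
  simp only [pow_succ', End.mul_apply] at hk2
  obtain ⟨m, hm1, hm2⟩ := sl2 S.rel hne.symm hk1 hk2 (pow_diag_up S.rel hne hb k)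
    (pow_diag_down S.rel hne ha k)
  have h1 := pow_diag_down S.rel hne.symm (pow_diag_up S.rel hne hb k) m
  obtain ⟨N, hN⟩ := (S.core_bot Submodule.mem_top hξ hs.raise (hs.2 _)).eig_val
    Submodule.mem_top hm2 h1
  exact ⟨N + k, by push_cast; linear_combination hN - hm1⟩

/-- The condition satisfied by the top component. -/
def Qc (E : Fin (n + 1) → Fin (n + 1) → W →ₗ[ℂ] W) (s : ℂ) (v : W) : Prop :=
  ∀ i : Fin n, ∑ a : Fin n, E i.castSucc a.castSucc (E a.castSucc (Fin.last n) v) =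
    s • E i.castSucc (Fin.last n) v

lemma Qc_stab (hE : GLRel E) {s : ℂ} {v : W} (hv : Qc E s v) (k l : Fin n) :
    Qc E s (rst E k l v) := by
  intro i
  have h1 : ∀ a : Fin n, E i.castSucc a.castSucc (E a.castSucc (Fin.last n) (rst E k l v)) =
      rst E k l (E i.castSucc a.castSucc (E a.castSucc (Fin.last n) v))
      - (if l = i then E k.castSucc a.castSucc (E a.castSucc (Fin.last n) v) else 0)
      + ((if a = k then E i.castSucc l.castSucc (E k.castSucc (Fin.last n) v) else 0)
      - (if a = l then E i.castSucc l.castSucc (E k.castSucc (Fin.last n) v) else 0)) := by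
    intro a
    have e1 := hE k.castSucc l.castSucc i.castSucc a.castSucc (E a.castSucc (Fin.last n) v)
    have e2 := hE k.castSucc l.castSucc a.castSucc (Fin.last n) v
    simp only [rst]
    rw [e1, e2]
    simp only [Fin.castSucc_inj, last_ne_cs, if_false, sub_zero, map_add]
    by_cases h2 : a = k
    · subst h2
      by_cases h3 : l = a
      · subst h3; simp only [if_true]; abel
      · have : a ≠ l := fun h => h3 h.symm
        simp only [h3, this, if_true, if_false, map_zero]; abel
    · by_cases h3 : l = a
      · subst h3; simp [h2]
      · have : a ≠ l := fun h => h3 h.symm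
        simp [h2, h3, this]
  rw [Finset.sum_congr rfl fun a _ => h1 a, Finset.sum_add_distrib, Finset.sum_sub_distrib,
    Finset.sum_sub_distrib, ← map_sum, hv i, Finset.sum_ite_eq', Finset.sum_ite_eq']
  have e3 := hE k.castSucc l.castSucc i.castSucc (Fin.last n) v
  simp only [last_ne_cs, if_false, sub_zero, Fin.castSucc_inj] at e3
  simp only [Finset.mem_univ, if_true, sub_self, add_zero, map_smul]
  simp only [rst]
  rw [e3]
  by_cases h : l = i
  · subst h
    simp only [if_true]
    rw [hv k]; module
  · simp [h]

lemma Qc_raise (hE : GLRel E) {s : ℂ} {v : W} (hv : Qc E s v) (p : Fin n) :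
    Qc E (s + 1) (E p.castSucc (Fin.last n) v) := by
  intro i
  have hc : ∀ a : Fin n, E a.castSucc (Fin.last n) (E p.castSucc (Fin.last n) v) =
      E p.castSucc (Fin.last n) (E a.castSucc (Fin.last n) v) := by
    intro a; rw [hE]; simp [last_ne_cs]
  have h1 : ∀ a : Fin n, E i.castSucc a.castSucc (E a.castSucc (Fin.last n)
      (E p.castSucc (Fin.last n) v)) =
      E p.castSucc (Fin.last n) (E i.castSucc a.castSucc (E a.castSucc (Fin.last n) v)) +
      if a = p then E i.castSucc (Fin.last n) (E p.castSucc (Fin.last n) v) else 0 := by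
    intro a
    rw [hc, hE]
    simp only [last_ne_cs, if_false, sub_zero, Fin.castSucc_inj]
    by_cases h : a = p
    · subst h; simp
    · simp [h]
  rw [Finset.sum_congr rfl fun a _ => h1 a, Finset.sum_add_distrib, ← map_sum, hv i,
    Finset.sum_ite_eq', hc i]
  simp only [Finset.mem_univ, if_true, map_smul]
  module

end GLpart
end YIrr
namespace YIrr

open Module

section GLstring

variable {W : Type} [AddCommGroup W] [Module ℂ W] [FiniteDimensional ℂ W]
variable {n : ℕ} {ι : Type} {E : Fin (n + 1) → Fin (n + 1) → W →ₗ[ℂ] W}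
    {G : ι → W →ₗ[ℂ] W}

lemma string_step (S : Sys E G ⊤) {ξ : W} (hξ : ξ ≠ 0) {lam : Fin (n + 1) → ℂ}
    (hs : Sing E lam ξ) (K : ℕ) {s : ℂ} {nu : Fin n → ℂ} {v : W} (hv : v ≠ 0)
    (hsv : Sing (rst E) nu v)
    (hh : E (Fin.last n) (Fin.last n) v = (lam (Fin.last n) + (K + 1 : ℕ)) • v)
    (hQ : Qc E s v) :
    ∃ p : Fin n, s = nu p + ((n : ℂ) - (p : ℕ)) ∧ E p.castSucc (Fin.last n) v ≠ 0 ∧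
      Sing (rst E) (fun i => nu i + if i = p then 1 else 0) (E p.castSucc (Fin.last n) v) ∧
      E (Fin.last n) (Fin.last n) (E p.castSucc (Fin.last n) v) =
        (lam (Fin.last n) + K) • E p.castSucc (Fin.last n) v := by
  have hex : ∃ p : Fin n, E p.castSucc (Fin.last n) v ≠ 0 := by
    by_contra! hcon
    have := S.eig_unique Submodule.mem_top hξ hs.raise (hs.2 _) Submodule.mem_top hv hcon hh
    have h1 : ((K + 1 : ℕ) : ℂ) = 0 := by linear_combination this
    exact absurd h1 (by exact_mod_cast Nat.succ_ne_zero K)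
  obtain ⟨p, hp, hmin⟩ : ∃ p : Fin n, E p.castSucc (Fin.last n) v ≠ 0 ∧
      ∀ i < p, E i.castSucc (Fin.last n) v = 0 := by
    obtain ⟨p, hp⟩ := WellFounded.has_min (wellFounded_lt (α := Fin n))
      {p | E p.castSucc (Fin.last n) v ≠ 0} hex
    exact ⟨p, hp.1, fun i hi => by_contra fun h => hp.2 i h hi⟩
  have hcomm : ∀ i j : Fin n, E i.castSucc j.castSucc (E p.castSucc (Fin.last n) v) =
      E p.castSucc (Fin.last n) (E i.castSucc j.castSucc v) +
        if j = p then E i.castSucc (Fin.last n) v else 0 := by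
    intro i j
    rw [S.rel]; simp [last_ne_cs]
  refine ⟨p, ?_, hp, ⟨?_, ?_⟩, ?_⟩
  · have h1 := hQ p
    have h2 : ∀ a : Fin n, E p.castSucc a.castSucc (E a.castSucc (Fin.last n) v) =
        ((if a = p then nu p else 0) + (if p ≤ a then (1 : ℂ) else 0)) •
          E p.castSucc (Fin.last n) v := by
      intro a
      rcases lt_trichotomy a p with h | h | h
      · rw [hmin a h]; simp [h.ne, h.not_ge]
      · subst h
        have := hsv.2 a
        simp only [rst] at this
        rw [hcomm, this]
        simp only [if_true, le_refl, map_smul]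
        module
      · have := hsv.1 p a h
        simp only [rst] at this
        rw [S.rel, this]
        simp [h.ne', h.le, last_ne_cs]
    rw [Finset.sum_congr rfl fun a _ => h2 a, ← Finset.sum_smul] at h1
    have h3 := smul_left_injective ℂ hp h1
    rw [← h3, Finset.sum_add_distrib, Finset.sum_ite_eq', if_pos (Finset.mem_univ _)]
    congr 1
    rw [Finset.sum_boole]
    have : (Finset.univ.filter fun a : Fin n => p ≤ a) = Finset.Ici p := by ext; simp
    rw [this, Fin.card_Ici, Nat.cast_sub p.2.le]
  · intro i j hij
    have := hsv.1 i j hij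
    simp only [rst] at this ⊢
    rw [hcomm, this, map_zero, zero_add]
    split_ifs with h
    · exact hmin i (h ▸ hij)
    · rfl
  · intro i
    have := hsv.2 i
    simp only [rst] at this ⊢
    rw [hcomm, this, map_smul]
    by_cases h : i = p
    · subst h; simp; module
    · simp [h]
  · rw [S.rel, hh]
    simp [last_ne_cs]
    module

lemma string (S : Sys E G ⊤) {ξ : W} (hξ : ξ ≠ 0) {lam : Fin (n + 1) → ℂ}
    (hs : Sing E lam ξ) (K : ℕ) : ∀ {s : ℂ} {nu : Fin n → ℂ} {v : W} (_ : v ≠ 0)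
    (_ : Sing (rst E) nu v)
    (_ : E (Fin.last n) (Fin.last n) v = (lam (Fin.last n) + (K + 1 : ℕ)) • v)
    (_ : Qc E s v),
    ∃ p : Fin n, s = nu p + ((n : ℂ) - (p : ℕ)) ∧
      ∀ i, lam i.castSucc = nu i + if i = p then ((K + 1 : ℕ) : ℂ) else 0 := by
  induction K with
  | zero =>
    intro s nu v hv hsv hh hQ
    obtain ⟨p, h1, h2, h3, h4⟩ := string_step S hξ hs 0 hv hsv hh hQ
    refine ⟨p, h1, fun i => ?_⟩
    have h5 : lam (Fin.last n) + ((0 : ℕ) : ℂ) = lam (Fin.last n) := by simp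
    rw [h5] at h4
    have := weight_unique G n (rst E) (bot E ⊤ (lam (Fin.last n)))
      (S.bot_sys Submodule.mem_top hξ hs.raise (hs.2 _)) _ _ ξ _
      ⟨Submodule.mem_top, End.mem_eigenspace_iff.2 (hs.2 _)⟩
      ⟨Submodule.mem_top, End.mem_eigenspace_iff.2 h4⟩ hξ h2 hs.rst h3
    simpa using congrFun this i
  | succ K ih =>
    intro s nu v hv hsv hh hQ
    obtain ⟨p, h1, h2, h3, h4⟩ := string_step S hξ hs (K + 1) hv hsv hh hQ
    obtain ⟨q, h5, h6⟩ := ih h2 h3 h4 (Qc_raise S.rel hQ p)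
    have hpq : q = p := by
      by_contra hne
      rw [if_neg hne] at h5
      rcases lt_or_gt_of_ne hne with h | h
      · obtain ⟨N, hN⟩ := dominant S.rel.rst h2 h3 h
        simp only [if_neg hne, if_true] at hN
        have : ((p : ℕ) : ℂ) = ((q : ℕ) : ℂ) - N := by
          linear_combination -hN + h1 - h5
        have : (p : ℕ) + N = q := by
          have h7 : (((p : ℕ) + N : ℕ) : ℂ) = ((q : ℕ) : ℂ) := by push_cast; linear_combination this
          exact_mod_cast h7
        have h8 : (q : ℕ) < p := h
        omega
      · obtain ⟨N, hN⟩ := dominant S.rel.rst h2 h3 h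
        simp only [if_neg hne, if_true] at hN
        have : ((q : ℕ) : ℂ) + N = ((p : ℕ) : ℂ) := by
          linear_combination -hN - h1 + h5
        have : (q : ℕ) + N = p := by exact_mod_cast this
        have h8 : (p : ℕ) < q := h
        omega
    subst hpq
    refine ⟨q, h1, fun i => ?_⟩
    rw [h6]
    by_cases h : i = q
    · simp [h]; ring
    · simp [h]

/-- The key lemma. -/
lemma key (S : Sys E G ⊤) {ξ : W} (hξ : ξ ≠ 0) {lam : Fin (n + 1) → ℂ}
    (hs : Sing E lam ξ) (K : ℕ) {s : ℂ} {v : W} (hv : v ≠ 0)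
    (hh : E (Fin.last n) (Fin.last n) v = (lam (Fin.last n) + (K + 1 : ℕ)) • v)
    (hQ : Qc E s v) :
    s - n ∈ bracketC (n + 1) (lshiftC (n + 1) lam) 0 (Fin.last n) := by
  -- the solution space
  let Z : Submodule ℂ W :=
    { carrier := {x | E (Fin.last n) (Fin.last n) x = (lam (Fin.last n) + (K + 1 : ℕ)) • x ∧
        Qc E s x}
      zero_mem' := ⟨by simp, fun i => by simp⟩
      add_mem' := by
        rintro a b ⟨h1, h2⟩ ⟨h3, h4⟩
        refine ⟨by rw [map_add, h1, h3, smul_add], fun i => ?_⟩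
        simp only [map_add, Finset.sum_add_distrib, h2 i, h4 i, smul_add]
      smul_mem' := by
        rintro c a ⟨h1, h2⟩
        refine ⟨by rw [map_smul, h1, smul_comm], fun i => ?_⟩
        simp only [map_smul, ← Finset.smul_sum, h2 i]
        rw [smul_comm] }
  obtain ⟨nu, x, hxZ, hx0, hx⟩ := exists_sing n (rst E) S.rel.rst Z (by
      intro h
      apply hv
      rw [← Submodule.mem_bot ℂ, ← h]
      exact ⟨hh, hQ⟩) (by
      rintro i j x ⟨h1, h2⟩
      exact ⟨by rw [Sys.rst_comm_h S.rel, h1, map_smul], Qc_stab S.rel h2 i j⟩)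
  obtain ⟨h1, h2⟩ := hxZ
  obtain ⟨p, hp1, hp2⟩ := string S hξ hs K hx0 hx h1 h2
  obtain ⟨B, hB⟩ := coord_bound S hξ hs hx0 p (hx.2 p) h1
  have hpp : lam p.castSucc = nu p + ((K + 1 : ℕ) : ℂ) := by simpa using hp2 p
  have hpn : (p : ℕ) < n := p.2
  have hdom : ∀ i : Fin n, i ≤ p → ∃ N : ℕ, lam i.castSucc = lam p.castSucc + N := by
    intro i hi
    rcases hi.eq_or_lt with rfl | hi
    · exact ⟨0, by simp⟩
    · exact dominant S.rel hξ hs (by simpa using hi)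
  refine ⟨⟨B + (n - p), ?_⟩, ?_, ?_⟩
  · simp only [lshiftC, Fin.val_last]
    push_cast [Nat.cast_sub hpn.le]
    linear_combination hp1 + hB
  · have : (0 : Fin (n + 1)) = (⟨0, by omega⟩ : Fin n).castSucc := rfl
    obtain ⟨N, hN⟩ := hdom ⟨0, by omega⟩ (Fin.le_def.2 (Nat.zero_le _))
    refine ⟨N + (K + 1) + p, ?_⟩
    simp only [lshiftC]
    rw [this, hN]
    push_cast at hpp ⊢
    simp
    linear_combination hpp - hp1
  · intro j _ _
    refine Fin.lastCases ?_ (fun j => ?_) j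
    · intro he
      simp only [lshiftC, Fin.val_last] at he
      have : ((B + n : ℕ) : ℂ) = ((p : ℕ) : ℂ) := by
        push_cast; linear_combination he - hp1 - hB
      have : B + n = p := by exact_mod_cast this
      omega
    · intro he
      simp only [lshiftC, Fin.val_castSucc] at he
      rcases le_or_gt j p with hj | hj
      · obtain ⟨N, hN⟩ := hdom j hj
        have : ((N + (K + 1) + p : ℕ) : ℂ) = ((j : ℕ) : ℂ) := by
          push_cast at hpp ⊢; linear_combination -he + hp1 - hN - hpp
        have : N + (K + 1) + p = j := by exact_mod_cast this
        have h8 : (j : ℕ) ≤ p := hj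
        omega
      · obtain ⟨N, hN⟩ := dominant S.rel.rst hx0 hx hj
        have hjj : lam j.castSucc = nu j := by simpa [hj.ne'] using hp2 j
        have : ((N + j : ℕ) : ℂ) = ((p : ℕ) : ℂ) := by
          push_cast; linear_combination he - hp1 - hN + hjj
        have : N + j = p := by exact_mod_cast this
        have h8 : (p : ℕ) < j := hj
        omega

end GLstring
end YIrr

namespace YIrr

open Module

section Pairs

variable {W : Type} [AddCommGroup W] [Module ℂ W]

/-- A doubly indexed family as a singly indexed one. -/
def fam {n : ℕ} (F : Fin n → Fin n → W →ₗ[ℂ] W) : Fin n × Fin n → W →ₗ[ℂ] W :=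
  fun p => F p.1 p.2

/-- The first Yangian generators. -/
def T1 {n : ℕ} (E F : Fin n → Fin n → W →ₗ[ℂ] W) (i j : Fin n) : W →ₗ[ℂ] W := E i j + F i j

/-- The second Yangian generators. -/
def T2 {n : ℕ} (E F : Fin n → Fin n → W →ₗ[ℂ] W) (i j : Fin n) : W →ₗ[ℂ] W :=
  ∑ a : Fin n, E i a ∘ₗ F a j

/-- A simple module over two commuting copies of `gl_n`, with a highest vector. -/
structure Bi {n : ℕ} (E F : Fin n → Fin n → W →ₗ[ℂ] W) (lam mu : Fin n → ℂ) (w : W) : Prop where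
  relE : GLRel E
  relF : GLRel F
  comm : ∀ i j k l x, F k l (E i j x) = E i j (F k l x)
  simple : ∀ N : Submodule ℂ W, Stab2 E N → Stab2 F N → N = ⊥ ∨ N = ⊤
  ne : w ≠ 0
  sE : Sing E lam w
  sF : Sing F mu w

variable {n : ℕ} {E F : Fin n → Fin n → W →ₗ[ℂ] W} {lam mu : Fin n → ℂ} {w : W}

lemma Bi.swap (h : Bi E F lam mu w) : Bi F E mu lam w :=
  ⟨h.relF, h.relE, fun i j k l x => (h.comm k l i j x).symm, fun N h1 h2 => h.simple N h2 h1,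
    h.ne, h.sF, h.sE⟩

lemma Bi.sys (h : Bi E F lam mu w) : Sys E (fam F) ⊤ where
  rel := h.relE
  comm := fun _ _ _ _ => h.comm _ _ _ _ _
  pE := fun _ _ _ _ => trivial
  pG := fun _ _ _ => trivial
  simple := fun N _ h1 h2 => h.simple N h1 fun i j => h2 (i, j)

lemma T1_apply (i j : Fin n) (x : W) : T1 E F i j x = E i j x + F i j x := rfl
lemma T2_apply (i j : Fin n) (x : W) : T2 E F i j x = ∑ a, E i a (F a j x) := by
  simp [T2]

lemma shift_sum (f : ℕ → W) (N : ℕ) (h0 : f 0 = 0) (hN : f N = 0) :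
    ∑ k ∈ Finset.range N, f k = ∑ k ∈ Finset.range N, f (k + 1) := by
  have h1 := Finset.sum_range_succ f N
  rw [Finset.sum_range_succ', h0, hN, add_zero, add_zero] at h1
  exact h1.symm

end Pairs

section Low

variable {W : Type} [AddCommGroup W] [Module ℂ W] [FiniteDimensional ℂ W]
variable {n : ℕ} {E F : Fin (n + 1) → Fin (n + 1) → W →ₗ[ℂ] W} {lam mu : Fin (n + 1) → ℂ} {w : W}

lemma low_vector (h : Bi E F lam mu w) (U : Submodule ℂ W) (hU : U ≠ ⊥)
    (h1 : Stab2 (T1 E F) U) (h2 : Stab2 (T2 E F) U)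
    (hb : lshiftC (n + 1) mu (Fin.last n) ∉ bracketC (n + 1) (lshiftC (n + 1) lam) 0 (Fin.last n)) :
    ∃ u ∈ U, u ≠ 0 ∧ E (Fin.last n) (Fin.last n) u = lam (Fin.last n) • u ∧
      F (Fin.last n) (Fin.last n) u = mu (Fin.last n) • u := by
  set z := Fin.last n with hz
  obtain ⟨c, hc1, hc2⟩ := exists_low (T1 E F z z) U hU (h1 z z)
  obtain ⟨u, ⟨huU, huc⟩, hu0⟩ := Submodule.exists_mem_ne_zero_of_ne_bot hc1
  have huc : T1 E F z z u = c • u := End.mem_eigenspace_iff.1 huc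
  have low : ∀ y ∈ U, T1 E F z z y = (c - 1) • y → y = 0 := by
    intro y hy hy2
    rw [← Submodule.mem_bot ℂ, ← hc2]
    exact ⟨hy, End.mem_eigenspace_iff.2 hy2⟩
  have k1 : ∀ i : Fin n, T1 E F i.castSucc z u = 0 := by
    intro i
    refine low _ (h1 _ _ _ huU) ?_
    have e1 : T1 E F z z (T1 E F i.castSucc z u) =
        T1 E F i.castSucc z (T1 E F z z u) - T1 E F i.castSucc z u := by
      simp only [T1_apply, map_add]
      rw [h.relE z z i.castSucc z u, h.relF z z i.castSucc z u, h.comm, ← h.comm z z i.castSucc z]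
      simp [hz, last_ne_cs]
      abel
    rw [e1, huc, map_smul]; module
  have k2 : ∀ i : Fin n, T2 E F i.castSucc z u = 0 := by
    intro i
    refine low _ (h2 _ _ _ huU) ?_
    have e1 : T1 E F z z (T2 E F i.castSucc z u) =
        T2 E F i.castSucc z (T1 E F z z u) - T2 E F i.castSucc z u := by
      have e2 : ∀ a, T1 E F z z (E i.castSucc a (F a z u)) =
          E i.castSucc a (F a z (T1 E F z z u)) + ((if a = z then - E i.castSucc z (F z z u) else 0)
          + (if a = z then E i.castSucc z (F z z u) else 0)) - E i.castSucc a (F a z u) := by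
        intro a
        simp only [T1_apply, map_add]
        rw [h.relE z z i.castSucc a (F a z u), h.comm i.castSucc a z z, h.relF z z a z u,
          h.comm]
        by_cases ha : a = z
        · subst ha
          simp [hz, last_ne_cs]
          abel
        · have ha' : z ≠ a := Ne.symm ha
          have hi : z ≠ i.castSucc := last_ne_cs i
          simp only [ha, ha', hi, if_true, if_false, map_add, map_sub, map_zero]
          abel
      simp only [T2_apply, map_sum]
      rw [Finset.sum_congr rfl fun a _ => e2 a, Finset.sum_sub_distrib, Finset.sum_add_distrib,
        Finset.sum_add_distrib]
      simp
    rw [e1, huc, map_smul]; module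
  have S := h.sys
  have S' := h.swap.sys
  have C := S.core_bot (ξ := w) trivial h.ne h.sE.raise (h.sE.2 _)
  obtain ⟨N, v0, hv0, hu⟩ := C.decomp (u := u) trivial
  -- truncated pieces
  obtain ⟨v, hv, hvN, hus⟩ : ∃ v : ℕ → W, (∀ k, v k ∈ tower E (bot E ⊤ (lam z)) k) ∧
      (∀ k, N ≤ k → v k = 0) ∧ u = ∑ k ∈ Finset.range N, v k := by
    refine ⟨fun k => if k < N then v0 k else 0, fun k => ?_, fun k hk => ?_, ?_⟩
    · dsimp only
      split_ifs
      · exact hv0 k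
      · exact zero_mem _
    · exact if_neg (by omega)
    · rw [hu]
      refine Finset.sum_congr rfl fun k hk => ?_
      exact (if_pos (Finset.mem_range.1 hk)).symm
  have hE : ∀ k, E z z (v k) = (lam z + k) • v k := fun k =>
    End.mem_eigenspace_iff.1 (C.tower_eig k (hv k))
  have hF : ∀ k, F z z (v k) = (c - lam z - k) • v k := by
    intro k
    by_cases hk : k < N
    · have := sum_eig_zero (E z z) (lam z) (fun k => F z z (v k) - (c - lam z - k) • v k) (fun k => by
        rw [map_sub, ← h.comm, hE, map_smul, map_smul, hE, smul_sub, smul_comm]) N (by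
          have e := huc
          rw [hus, map_sum, Finset.smul_sum, ← sub_eq_zero, ← Finset.sum_sub_distrib] at e
          rw [← e]
          refine Finset.sum_congr rfl fun k _ => ?_
          rw [T1_apply, hE]; module) k hk
      exact sub_eq_zero.1 this
    · rw [hvN k (by omega)]; simp
  have hlow : ∀ (i : Fin n) (k : ℕ), E z z (E i.castSucc z (v (k + 1))) =
      (lam z + k) • E i.castSucc z (v (k + 1)) := by
    intro i k
    rw [h.relE, hE]
    simp [hz, last_ne_cs]
    module
  have hv00 : ∀ i : Fin n, E i.castSucc z (v 0) = 0 := fun i =>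
    S.bot_kill (ξ := w) trivial h.ne h.sE.raise (h.sE.2 _) trivial (by simpa using hE 0) i
  have hEF : ∀ (i : Fin n) (k : ℕ), F i.castSucc z (v k) = - E i.castSucc z (v (k + 1)) := by
    intro i k
    by_cases hk : k < N
    · have := sum_eig_zero (E z z) (lam z) (fun k => F i.castSucc z (v k) + E i.castSucc z (v (k + 1)))
        (fun k => by rw [map_add, ← h.comm, hE, hlow, map_smul, smul_add]) N (by
          have e := k1 i
          rw [T1_apply, hus, map_sum, map_sum,
            shift_sum (fun k => E i.castSucc z (v k)) N (hv00 i)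
              (by rw [hvN N le_rfl, map_zero]), add_comm,
            ← Finset.sum_add_distrib] at e
          exact e) k hk
      exact eq_neg_of_add_eq_zero_left this
    · rw [hvN k (by omega), hvN (k + 1) (by omega)]; simp
  have hQ : ∀ k, Qc E (c - lam z - (k + 1 : ℕ)) (v (k + 1)) := by
    intro k i
    by_cases hk : k < N
    · have := sum_eig_zero (E z z) (lam z) (fun k =>
        (∑ a : Fin n, E i.castSucc a.castSucc (F a.castSucc z (v k))) +
          E i.castSucc z (F z z (v (k + 1))))
        (fun k => by
          have e : ∀ a : Fin n, E z z (E i.castSucc a.castSucc (F a.castSucc z (v k))) =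
              (lam z + k) • (E i.castSucc a.castSucc (F a.castSucc z (v k))) := by
            intro a
            rw [h.relE, ← h.comm z z, hE, map_smul, map_smul]
            simp [hz, last_ne_cs]
          rw [map_add, map_sum, hF, map_smul, map_smul, hlow, smul_add, Finset.smul_sum,
            Finset.sum_congr rfl fun a _ => e a, smul_comm]) N (by
          have e := k2 i
          rw [T2_apply, Fin.sum_univ_castSucc, hus] at e
          simp only [map_sum] at e
          rw [Finset.sum_comm, shift_sum (fun k => E i.castSucc z (F z z (v k))) N
            (by rw [hF, map_smul, hv00, smul_zero])
              (by rw [hvN N le_rfl, map_zero, map_zero]), 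
            ← Finset.sum_add_distrib] at e
          exact e) k hk
      rw [hF, map_smul] at this
      simp only [hEF, map_neg, Finset.sum_neg_distrib] at this
      rw [neg_add_eq_zero] at this
      exact this
    · rw [hvN (k + 1) (by omega)]; simp
  -- the top piece
  have hex : ∃ k, v k ≠ 0 := by
    by_contra! hall
    exact hu0 (by rw [hus]; simp [hall])
  obtain ⟨K, hK, hK1⟩ : ∃ K, v K ≠ 0 ∧ ∀ k, K < k → v k = 0 := by
    classical
    obtain ⟨k0, hk0⟩ := hex
    have hk0N : k0 ≤ N := by
      by_contra hh
      exact hk0 (hvN _ (by omega))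
    refine ⟨Nat.findGreatest (fun k => v k ≠ 0) N,
      Nat.findGreatest_spec (P := fun k => v k ≠ 0) hk0N hk0, fun k hk => ?_⟩
    by_cases hkN : k ≤ N
    · exact not_not.1 (Nat.findGreatest_is_greatest hk hkN)
    · exact hvN _ (by omega)
  have hmu : c - lam z - K = mu z :=
    S'.eig_unique (ξ := w) trivial h.ne h.sF.raise (h.sF.2 _) (x := v K) trivial hK
      (fun i => by rw [← hz, hEF, hK1 _ (Nat.lt_succ_self _), map_zero, neg_zero]) (hF K)
  cases K with
  | zero =>
    have hu1 : u = v 0 := by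
      rw [hus]
      have hN : 0 < N := by
        by_contra hh
        exact hK (hvN _ (by omega))
      rw [Finset.sum_eq_single_of_mem 0 (Finset.mem_range.2 hN)]
      intro k _ hk
      exact hK1 k (Nat.pos_of_ne_zero hk)
    refine ⟨u, huU, hu0, ?_, ?_⟩
    · rw [hu1, hE]; simp
    · rw [hu1, hF, hmu]
  | succ K =>
    exfalso
    apply hb
    have hq := hQ K
    rw [hmu] at hq
    have := key S h.ne h.sE K hK (hE _) hq
    simpa [lshiftC, hz] using this

end Low

end YIrr

namespace YIrr

open Module

/-- The abstract irreducibility theorem for a given rank. -/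
def TT (n : ℕ) : Prop :=
  ∀ (W : Type) [AddCommGroup W] [Module ℂ W] [FiniteDimensional ℂ W]
    (E F : Fin n → Fin n → W →ₗ[ℂ] W) (lam mu : Fin n → ℂ) (w : W), Bi E F lam mu w →
    (∀ i j, i < j → SepCond n lam mu i j) →
    ∀ U : Submodule ℂ W, Stab2 (T1 E F) U → Stab2 (T2 E F) U → U = ⊥ ∨ U = ⊤

lemma bracket_cs (n : ℕ) (lam : Fin (n + 1) → ℂ) (i j : Fin n) :
    bracketC (n + 1) (lshiftC (n + 1) lam) i.castSucc j.castSucc =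
      bracketC n (lshiftC n fun i => lam i.castSucc) i j := by
  ext x
  unfold bracketC
  refine and_congr (Iff.rfl : _ ↔ _) (and_congr (Iff.rfl : _ ↔ _) ⟨fun h s h1 h2 => ?_, fun h s h1 h2 => ?_⟩)
  · exact h s.castSucc (by simpa using h1) (by simpa using h2)
  · revert h1 h2
    refine Fin.lastCases ?_ (fun s => ?_) s
    · intro _ h2
      exact absurd h2 (not_le.2 (Fin.castSucc_lt_last j))
    · intro h1 h2
      exact h s (by simpa using h1) (by simpa using h2)

lemma sep_cs (n : ℕ) (lam mu : Fin (n + 1) → ℂ) (i j : Fin n)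
    (h : SepCond (n + 1) lam mu i.castSucc j.castSucc) :
    SepCond n (fun i => lam i.castSucc) (fun i => mu i.castSucc) i j := by
  unfold SepCond at h ⊢
  rw [bracket_cs, bracket_cs] at h
  exact h

section Res

variable {W : Type} [AddCommGroup W] [Module ℂ W]
variable {n : ℕ}

/-- Restriction of a family to a stable subspace. -/
def res (E : Fin n → Fin n → W →ₗ[ℂ] W) (P : Submodule ℂ W) (h : Stab2 E P) :
    Fin n → Fin n → P →ₗ[ℂ] P := fun i j => (E i j).restrict (h i j)

lemma res_apply (E : Fin n → Fin n → W →ₗ[ℂ] W) (P : Submodule ℂ W) (h : Stab2 E P) (i j : Fin n)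
    (x : P) : (res E P h i j x : W) = E i j x := rfl

lemma res_rel {E : Fin n → Fin n → W →ₗ[ℂ] W} {P : Submodule ℂ W} (h : Stab2 E P) (hE : GLRel E) :
    GLRel (res E P h) := by
  intro i j k l x
  apply Subtype.ext
  have := hE i j k l x
  simp only [Submodule.coe_sub, Submodule.coe_add, res_apply, this]
  congr 2 <;> split_ifs <;> rfl

lemma res_sing {E : Fin n → Fin n → W →ₗ[ℂ] W} {P : Submodule ℂ W} (h : Stab2 E P)
    {r : Fin n → ℂ} {x : P} (hx : Sing E r (x : W)) : Sing (res E P h) r x :=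
  ⟨fun i j hij => Subtype.ext (hx.1 i j hij), fun i => Subtype.ext (hx.2 i)⟩

lemma res_bi {E F : Fin n → Fin n → W →ₗ[ℂ] W} {P : Submodule ℂ W} (hE : Stab2 E P)
    (S : Sys F (fam E) P) (rE : GLRel E) {lam mu : Fin n → ℂ} {w : W} (hw : w ∈ P)
    (hw0 : w ≠ 0) (sE : Sing E lam w) (sF : Sing F mu w) :
    Bi (res E P hE) (res F P S.pE) lam mu ⟨w, hw⟩ where
  relE := res_rel _ rE
  relF := res_rel _ S.rel
  comm := fun i j k l x => Subtype.ext (S.comm (i, j) k l x).symm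
  simple := by
    intro N h1 h2
    have := S.simple (N.map P.subtype) (Submodule.map_subtype_le P N)
      (by
        rintro i j _ ⟨x, hx, rfl⟩
        exact ⟨_, h2 i j x hx, rfl⟩)
      (by
        rintro ⟨i, j⟩ _ ⟨x, hx, rfl⟩
        exact ⟨_, h1 i j x hx, rfl⟩)
    rcases this with h | h
    · left
      rw [eq_bot_iff]
      intro x hx
      have : (x : W) ∈ N.map P.subtype := ⟨x, hx, rfl⟩
      rw [h, Submodule.mem_bot] at this
      exact Subtype.ext this
    · right
      rw [eq_top_iff]
      intro x _
      have hx : (x : W) ∈ N.map P.subtype := by rw [h]; exact x.2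
      obtain ⟨y, hy, hyx⟩ := hx
      have : y = x := Subtype.ext hyx
      exact this ▸ hy
  ne := fun h => hw0 (congrArg Subtype.val h)
  sE := res_sing _ sE
  sF := res_sing _ sF

end Res

section Main1

variable {W : Type} [AddCommGroup W] [Module ℂ W] [FiniteDimensional ℂ W]
variable {n : ℕ} {E F : Fin (n + 1) → Fin (n + 1) → W →ₗ[ℂ] W} {lam mu : Fin (n + 1) → ℂ} {w : W}

lemma main1 (ht : TT n) (h : Bi E F lam mu w)
    (hsep : ∀ i j : Fin (n + 1), i < j → SepCond (n + 1) lam mu i j)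
    (hb : lshiftC (n + 1) mu (Fin.last n) ∉ bracketC (n + 1) (lshiftC (n + 1) lam) 0 (Fin.last n))
    (U : Submodule ℂ W) (hU : U ≠ ⊥)
    (h1 : Stab2 (T1 E F) U) (h2 : Stab2 (T2 E F) U) : w ∈ U := by
  obtain ⟨u, huU, hu0, hu1, hu2⟩ := low_vector h U hU h1 h2 hb
  have S := h.sys
  set Q := bot E ⊤ (lam (Fin.last n)) with hQ
  have S1 : Sys (rst E) (fam F) Q :=
    S.bot_sys (ξ := w) trivial h.ne h.sE.raise (h.sE.2 _)
  have S2 : Sys F (fam (rst E)) Q :=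
    ⟨h.relF, fun g i j x => h.swap.comm _ _ _ _ _, fun i j => S1.pG (i, j), fun g => S1.pE g.1 g.2,
      fun N hN a b => S1.simple N hN (fun i j => b (i, j)) (fun g => a g.1 g.2)⟩
  have hwQ : w ∈ Q := ⟨trivial, End.mem_eigenspace_iff.2 (h.sE.2 _)⟩
  set P := bot F Q (mu (Fin.last n)) with hP
  have S3 : Sys (rst F) (fam (rst E)) P :=
    S2.bot_sys hwQ h.ne h.sF.raise (h.sF.2 _)
  have hwP : w ∈ P := ⟨hwQ, End.mem_eigenspace_iff.2 (h.sF.2 _)⟩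
  have hEP : Stab2 (rst E) P := fun i j => S3.pG (i, j)
  have B := res_bi hEP S3 h.relE.rst hwP h.ne h.sE.rst h.sF.rst
  have huP : u ∈ P := ⟨⟨trivial, End.mem_eigenspace_iff.2 hu1⟩, End.mem_eigenspace_iff.2 hu2⟩
  have key := ht P _ _ _ _ _ B (fun i j hij => sep_cs n lam mu i j (hsep _ _ (by simpa using hij)))
    (U.comap P.subtype)
    (by
      intro i j x hx
      exact h1 i.castSucc j.castSucc x hx)
    (by
      intro i j x hx
      have e := h2 i.castSucc j.castSucc x hx
      rw [T2_apply, Fin.sum_univ_castSucc] at e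
      have e0 : E i.castSucc (Fin.last n) (F (Fin.last n) j.castSucc (x : W)) = 0 := by
        rw [← h.comm, S.bot_kill (ξ := w) trivial h.ne h.sE.raise (h.sE.2 _) trivial
          (End.mem_eigenspace_iff.1 x.2.1.2), map_zero]
      rw [e0, add_zero] at e
      rw [Submodule.mem_comap, T2_apply, map_sum]
      exact e)
  rcases key with k | k
  · exfalso
    have : (⟨u, huP⟩ : P) ∈ U.comap P.subtype := huU
    rw [k, Submodule.mem_bot] at this
    exact hu0 (congrArg Subtype.val this)
  · have : (⟨w, hwP⟩ : P) ∈ U.comap P.subtype := by rw [k]; trivial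
    exact this

end Main1

end YIrr

namespace YIrr

open Module

section Dual

variable {W : Type} [AddCommGroup W] [Module ℂ W]
variable {n : ℕ}

/-- Transposed dual. -/
def dT (E : Fin n → Fin n → W →ₗ[ℂ] W) (i j : Fin n) : Dual ℂ W →ₗ[ℂ] Dual ℂ W :=
  (E j i).dualMap

/-- Reversed contragredient dual. -/
def dR (E : Fin n → Fin n → W →ₗ[ℂ] W) (i j : Fin n) : Dual ℂ W →ₗ[ℂ] Dual ℂ W :=
  -(E i.rev j.rev).dualMap

lemma dT_apply (E : Fin n → Fin n → W →ₗ[ℂ] W) (i j : Fin n) (f : Dual ℂ W) (x : W) :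
    dT E i j f x = f (E j i x) := rfl

lemma dR_apply (E : Fin n → Fin n → W →ₗ[ℂ] W) (i j : Fin n) (f : Dual ℂ W) (x : W) :
    dR E i j f x = - f (E i.rev j.rev x) := rfl

lemma dT_rel {E : Fin n → Fin n → W →ₗ[ℂ] W} (h : GLRel E) : GLRel (dT E) := by
  intro i j k l f
  ext x
  have := h l k j i x
  simp only [LinearMap.sub_apply, LinearMap.add_apply, dT_apply, this, map_add, map_sub]
  simp only [eq_comm (a := k) (b := j), eq_comm (a := i) (b := l)]
  by_cases hjk : j = k <;> by_cases hli : l = i <;> simp [hjk, hli, dT_apply]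

lemma dR_rel {E : Fin n → Fin n → W →ₗ[ℂ] W} (h : GLRel E) : GLRel (dR E) := by
  intro i j k l f
  ext x
  have := h k.rev l.rev i.rev j.rev x
  simp only [LinearMap.sub_apply, LinearMap.add_apply, dR_apply, this, map_add, map_sub, neg_neg]
  by_cases hjk : j = k <;> by_cases hli : l = i <;>
    simp [hjk, hli, Fin.rev_inj, dR_apply] <;> ring

lemma exists_phi [FiniteDimensional ℂ W] {E F : Fin n → Fin n → W →ₗ[ℂ] W} {lam mu : Fin n → ℂ}
    {w : W} (h : Bi E F lam mu w) :
    ∃ f : Dual ℂ W, f w ≠ 0 ∧ Sing (dT E) lam f ∧ Sing (dT F) mu f := by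
  have hne : (⊤ : Submodule ℂ (Dual ℂ W)) ≠ ⊥ := by
    intro h0
    have : ∀ f : Dual ℂ W, f w = 0 := by
      intro f
      have : f ∈ (⊤ : Submodule ℂ (Dual ℂ W)) := trivial
      rw [h0, Submodule.mem_bot] at this
      rw [this]; rfl
    exact h.ne ((Module.forall_dual_apply_eq_zero_iff ℂ w).1 this)
  obtain ⟨r, f0, _, hf0, hf1⟩ := exists_sing n (dT E) (dT_rel h.relE) ⊤ hne
    (fun _ _ _ _ => trivial)
  have hcomm : ∀ i j k l f, dT F k l (dT E i j f) = dT E i j (dT F k l f) := by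
    intro i j k l f
    ext x
    simp only [dT_apply]
    rw [h.comm]
  obtain ⟨s, f, hfr, hf, hfs⟩ := exists_sing n (dT F) (dT_rel h.relF) (hws (dT E) r)
    (fun h0 => hf0 (by
      have : f0 ∈ hws (dT E) r := hf1
      rwa [h0, Submodule.mem_bot] at this))
    (by
      rintro k l x ⟨h1, h2⟩
      refine ⟨fun i j hij => ?_, fun i => ?_⟩
      · rw [← hcomm, h1 i j hij, map_zero]
      · rw [← hcomm, h2 i, map_smul])
  have hfr : Sing (dT E) r f := hfr
  have hlowE : ∀ i j, j < i → ∀ x, f (E i j x) = 0 := fun i j hij x => by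
    have := LinearMap.congr_fun (hfr.1 j i hij) x
    exact this
  have hlowF : ∀ i j, j < i → ∀ x, f (F i j x) = 0 := fun i j hij x => by
    have := LinearMap.congr_fun (hfs.1 j i hij) x
    exact this
  have hfw : f w ≠ 0 := by
    intro hfw
    apply hf
    have S := h.sys
    obtain ⟨a1, a2⟩ := hws_simple (fam F) n E ⊤ S lam w trivial h.ne h.sE
    set Q := (⊤ : Submodule ℂ W) ⊓ hws E lam with hQ
    have S2 : Sys F (fun e : Empty => (e.elim : W →ₗ[ℂ] W)) Q :=
      { rel := h.relF
        comm := fun e => e.elim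
        pE := by
          rintro k l x ⟨_, h1, h2⟩
          refine ⟨trivial, fun i j hij => ?_, fun i => ?_⟩
          · rw [← h.comm, h1 i j hij, map_zero]
          · rw [← h.comm, h2 i, map_smul]
        pG := fun e => e.elim
        simple := fun N hN hF _ => a1 N hN fun g => hF g.1 g.2 }
    have hwQ : w ∈ Q := ⟨trivial, h.sE⟩
    obtain ⟨b1, b2⟩ := hws_simple _ n F Q S2 mu w hwQ h.ne h.sF
    have hspan : Submodule.span ℂ {w} = Q ⊓ hws F mu := by
      refine (b1 (Submodule.span ℂ {w}) ?_ (fun e => e.elim)).resolve_left ?_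
      · rw [Submodule.span_le, Set.singleton_subset_iff]
        exact ⟨hwQ, h.sF⟩
      · rw [Submodule.span_singleton_eq_bot]
        exact h.ne
    ext x
    refine a2 f (fun i j hij x _ => hlowE i j hij x) (b2 f (fun i j hij x _ => hlowF i j hij x) ?_) x trivial
    intro y hy
    rw [← hspan, Submodule.mem_span_singleton] at hy
    obtain ⟨c, rfl⟩ := hy
    rw [map_smul, hfw, smul_zero]
  have hr : r = lam := by
    funext i
    have := LinearMap.congr_fun (hfr.2 i) w
    rw [dT_apply, h.sE.2, map_smul] at this
    exact (mul_right_cancel₀ hfw this).symm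
  have hs : s = mu := by
    funext i
    have := LinearMap.congr_fun (hfs.2 i) w
    rw [dT_apply, h.sF.2, map_smul] at this
    exact (mul_right_cancel₀ hfw this).symm
  subst hr hs
  exact ⟨f, hfw, hfr, hfs⟩

variable [FiniteDimensional ℂ W] {E F : Fin n → Fin n → W →ₗ[ℂ] W} {lam mu : Fin n → ℂ} {w : W}

lemma dT_bi (h : Bi E F lam mu w) {f : Dual ℂ W} (hf : f ≠ 0) (h1 : Sing (dT E) lam f)
    (h2 : Sing (dT F) mu f) : Bi (dT E) (dT F) lam mu f where
  relE := dT_rel h.relE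
  relF := dT_rel h.relF
  comm := by
    intro i j k l f
    ext x
    simp only [dT_apply]
    rw [h.comm]
  simple := by
    intro N h1 h2
    have e := Subspace.dualCoannihilator_dualAnnihilator_eq (W := N)
    rcases h.simple N.dualCoannihilator
      (fun i j x hx => by
        rw [Submodule.mem_dualCoannihilator] at hx ⊢
        exact fun g hg => hx _ (h1 j i g hg))
      (fun i j x hx => by
        rw [Submodule.mem_dualCoannihilator] at hx ⊢
        exact fun g hg => hx _ (h2 j i g hg)) with h | h
    · right
      rw [← e, h, Submodule.dualAnnihilator_bot]
    · left
      rw [← e, h, Submodule.dualAnnihilator_top]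
  ne := hf
  sE := h1
  sF := h2

lemma dR_sing {r : Fin n → ℂ} {f : Dual ℂ W} (h : Sing (dT E) r f) :
    Sing (dR E) (fun i => - r i.rev) f := by
  refine ⟨fun i j hij => ?_, fun i => ?_⟩
  · have := h.1 j.rev i.rev (Fin.rev_lt_rev.2 hij)
    change - dT E j.rev i.rev f = 0
    rw [this, neg_zero]
  · have := h.2 i.rev
    change - dT E i.rev i.rev f = _
    rw [this, neg_smul]

lemma dR_stab {N : Submodule ℂ (Dual ℂ W)} (h : Stab2 (dR E) N) : Stab2 (dT E) N := by
  intro i j f hf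
  have := h j.rev i.rev f hf
  rw [← neg_neg (dT E i j f)]
  refine neg_mem ?_
  convert this using 1
  simp [dR, dT]

lemma dR_bi (h : Bi E F lam mu w) {f : Dual ℂ W} (hf : f ≠ 0) (h1 : Sing (dT E) lam f)
    (h2 : Sing (dT F) mu f) :
    Bi (dR E) (dR F) (fun i => - lam i.rev) (fun i => - mu i.rev) f where
  relE := dR_rel h.relE
  relF := dR_rel h.relF
  comm := by
    intro i j k l f
    ext x
    simp only [dR_apply]
    rw [h.comm]
  simple := fun N a b => (dT_bi h hf h1 h2).simple N (dR_stab a) (dR_stab b)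
  ne := hf
  sE := dR_sing h1
  sF := dR_sing h2

lemma ann_dR (h : Bi E F lam mu w) {U : Submodule ℂ W} (h1 : Stab2 (T1 E F) U)
    (h2 : Stab2 (T2 E F) U) :
    Stab2 (T1 (dR E) (dR F)) U.dualAnnihilator ∧ Stab2 (T2 (dR E) (dR F)) U.dualAnnihilator := by
  constructor
  · intro i j f hf
    rw [Submodule.mem_dualAnnihilator] at hf ⊢
    intro x hx
    have := hf _ (h1 i.rev j.rev x hx)
    rw [T1_apply, map_add] at this
    rw [T1_apply, LinearMap.add_apply, dR_apply, dR_apply]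
    linear_combination -this
  · intro i j f hf
    rw [Submodule.mem_dualAnnihilator] at hf ⊢
    intro x hx
    have := hf _ (h2 i.rev j.rev x hx)
    rw [T2_apply, map_sum] at this
    rw [T2_apply, LinearMap.sum_apply, ← this, ← Equiv.sum_comp Fin.revPerm]
    refine Finset.sum_congr rfl fun a _ => ?_
    simp only [dR_apply, Fin.revPerm_apply, Fin.rev_rev, neg_neg]
    rw [h.comm]

lemma ann_dT {U : Submodule ℂ W} (h1 : Stab2 (T1 E F) U)
    (h2 : Stab2 (T2 E F) U) :
    Stab2 (T1 (dT F) (dT E)) U.dualAnnihilator ∧ Stab2 (T2 (dT F) (dT E)) U.dualAnnihilator := by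
  constructor
  · intro i j f hf
    rw [Submodule.mem_dualAnnihilator] at hf ⊢
    intro x hx
    have := hf _ (h1 j i x hx)
    rw [T1_apply, map_add] at this
    rw [T1_apply, LinearMap.add_apply, dT_apply, dT_apply]
    linear_combination this
  · intro i j f hf
    rw [Submodule.mem_dualAnnihilator] at hf ⊢
    intro x hx
    have := hf _ (h2 j i x hx)
    rw [T2_apply, map_sum] at this
    rw [T2_apply, LinearMap.sum_apply, ← this]
    exact Finset.sum_congr rfl fun a _ => rfl

end Dual

lemma bracket_rev (n : ℕ) (l l' : Fin n → ℂ) (d : ℂ) (h : ∀ i, l' i = d - l i.rev) (i j : Fin n)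
    (x : ℂ) : x ∈ bracketC n l' i j ↔ d - x ∈ bracketC n l j.rev i.rev := by
  unfold bracketC
  constructor
  · rintro ⟨⟨t, ht⟩, ⟨t', ht'⟩, hs⟩
    refine ⟨⟨t', ?_⟩, ⟨t, ?_⟩, fun s h1 h2 he => hs s.rev ?_ ?_ ?_⟩
    · rw [h] at ht'; linear_combination ht'
    · rw [h] at ht; linear_combination ht
    · exact Fin.le_rev_iff.2 h2
    · exact Fin.rev_le_iff.2 h1
    · rw [h, Fin.rev_rev]; linear_combination -he
  · rintro ⟨⟨t, ht⟩, ⟨t', ht'⟩, hs⟩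
    refine ⟨⟨t', ?_⟩, ⟨t, ?_⟩, fun s h1 h2 he => hs s.rev ?_ ?_ ?_⟩
    · rw [h]; linear_combination ht'
    · rw [h]; linear_combination ht
    · exact Fin.rev_le_rev.2 h2
    · exact Fin.rev_le_rev.2 h1
    · rw [h] at he; linear_combination -he

lemma lshift_rev (n : ℕ) (lam : Fin n → ℂ) (i : Fin n) :
    lshiftC n (fun i => - lam i.rev) i = (1 - n : ℂ) - lshiftC n lam i.rev := by
  have : ((i.rev : ℕ) : ℂ) = n - 1 - (i : ℕ) := by
    rw [Fin.val_rev, Nat.cast_sub (by omega)]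
    push_cast; ring
  simp only [lshiftC, this]
  ring

lemma mem_rev (n : ℕ) (lam mu : Fin n → ℂ) (i j k : Fin n) :
    lshiftC n (fun i => - mu i.rev) k ∈ bracketC n (lshiftC n fun i => - lam i.rev) i j ↔
      lshiftC n mu k.rev ∈ bracketC n (lshiftC n lam) j.rev i.rev := by
  rw [bracket_rev n (lshiftC n lam) _ (1 - n) (lshift_rev n lam), lshift_rev, sub_sub_cancel]

lemma sep_rev (n : ℕ) (lam mu : Fin n → ℂ) (i j : Fin n) (h : SepCond n lam mu j.rev i.rev) :
    SepCond n (fun i => - lam i.rev) (fun i => - mu i.rev) i j := by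
  unfold SepCond at h ⊢
  rw [mem_rev, mem_rev, mem_rev, mem_rev]
  tauto

section Step

variable {W : Type} [AddCommGroup W] [Module ℂ W] [FiniteDimensional ℂ W]
variable {n : ℕ} {E F : Fin (n + 1) → Fin (n + 1) → W →ₗ[ℂ] W} {lam mu : Fin (n + 1) → ℂ} {w : W}

lemma ann_bot {U : Submodule ℂ W} (h : U.dualAnnihilator = ⊥) : U = ⊤ := by
  have e := Subspace.dualAnnihilator_dualCoannihilator_eq (W := U)
  rw [← e, h]
  simp

lemma ann_top {U : Submodule ℂ W} (h : U.dualAnnihilator = ⊤) : U = ⊥ := by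
  have e := Subspace.dualAnnihilator_dualCoannihilator_eq (W := U)
  rw [← e, h]
  simp

lemma alt1 (ht : TT n) (h : Bi E F lam mu w)
    (hsep : ∀ i j : Fin (n + 1), i < j → SepCond (n + 1) lam mu i j)
    (hb : lshiftC (n + 1) mu (Fin.last n) ∉ bracketC (n + 1) (lshiftC (n + 1) lam) 0 (Fin.last n))
    (hb' : lshiftC (n + 1) mu 0 ∉ bracketC (n + 1) (lshiftC (n + 1) lam) 0 (Fin.last n))
    (U : Submodule ℂ W) (h1 : Stab2 (T1 E F) U) (h2 : Stab2 (T2 E F) U) : U = ⊥ ∨ U = ⊤ := by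
  by_cases hU : U = ⊥
  · exact Or.inl hU
  by_cases hU' : U.dualAnnihilator = ⊥
  · exact Or.inr (ann_bot hU')
  exfalso
  obtain ⟨f, hfw, f1, f2⟩ := exists_phi h
  have hf : f ≠ 0 := by rintro rfl; exact hfw rfl
  obtain ⟨a1, a2⟩ := ann_dR h h1 h2
  have m1 := main1 ht h hsep hb U hU h1 h2
  have m2 := main1 ht (dR_bi h hf f1 f2)
    (fun i j hij => sep_rev _ _ _ _ _ (hsep _ _ (Fin.rev_lt_rev.2 hij)))
    (by rw [mem_rev]; simpa using hb') _ hU' a1 a2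
  rw [Submodule.mem_dualAnnihilator] at m2
  exact hfw (m2 w m1)

lemma bracket_one (l : Fin 1 → ℂ) (x : ℂ) : x ∉ bracketC 1 l 0 (Fin.last 0) := by
  rintro ⟨⟨t, ht⟩, ⟨t', ht'⟩, hs⟩
  have e : (Fin.last 0 : Fin 1) = 0 := rfl
  rw [e] at ht
  have h0 : ((t + t' : ℕ) : ℂ) = 0 := by push_cast; linear_combination -ht - ht'
  have h1 : t + t' = 0 := by exact_mod_cast h0
  have h2 : t = 0 := by omega
  exact hs 0 le_rfl le_rfl (by rw [ht, h2]; simp)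

lemma sep_end (hsep : ∀ i j : Fin (n + 1), i < j → SepCond (n + 1) lam mu i j) :
    SepCond (n + 1) lam mu 0 (Fin.last n) := by
  cases n with
  | zero => exact Or.inl ⟨bracket_one _ _, bracket_one _ _⟩
  | succ n => exact hsep _ _ (Fin.last_pos)

end Step

theorem TT_all (n : ℕ) : TT n := by
  induction n with
  | zero =>
    intro W _ _ _ E F lam mu w h _ U _ _
    exact h.simple U (fun i => i.elim0) (fun i => i.elim0)
  | succ n ih =>
    intro W _ _ _ E F lam mu w h hsep U h1 h2
    rcases sep_end hsep with hs | hs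
    · exact alt1 ih h hsep hs.1 hs.2 U h1 h2
    · obtain ⟨f, hfw, f1, f2⟩ := exists_phi h
      have hf : f ≠ 0 := by rintro rfl; exact hfw rfl
      obtain ⟨a1, a2⟩ := ann_dT h1 h2
      rcases alt1 ih (dT_bi h hf f1 f2).swap (fun i j hij => (hsep i j hij).symm) hs.1 hs.2 _ a1 a2
        with h3 | h3
      · exact Or.inr (ann_bot h3)
      · exact Or.inl (ann_top h3)

end YIrr

namespace YIrr

open Module

section Tensor

variable {n : ℕ} {lam mu : Fin n → ℂ}

lemma rep_rel (A : GLRep n lam) : GLRel A.E := by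
  intro i j k l x
  have := LinearMap.congr_fun (A.commRel i j k l) x
  simp only [LinearMap.sub_apply, LinearMap.comp_apply] at this
  rw [sub_eq_iff_eq_add] at this
  rw [this]
  have e1 : (if j = k then A.E i l else 0) x = if j = k then A.E i l x else 0 := by
    split_ifs <;> rfl
  have e2 : (if l = i then A.E k j else 0) x = if l = i then A.E k j x else 0 := by
    split_ifs <;> rfl
  rw [e1, e2]
  abel

lemma rep_sing (A : GLRep n lam) : Sing A.E lam A.hv := ⟨A.hv_upper, A.hv_diag⟩

lemma rep_sys (A : GLRep n lam) : Sys A.E (fun e : Empty => (e.elim : A.V →ₗ[ℂ] A.V)) ⊤ where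
  rel := rep_rel A
  comm := fun e => e.elim
  pE := fun _ _ _ _ => trivial
  pG := fun e => e.elim
  simple := fun N _ h _ => A.irreducible N h

lemma rep_hv (A : GLRep n lam) {r : Fin n → ℂ} {x : A.V} (h : Sing A.E r x) :
    ∃ c : ℂ, x = c • A.hv := by
  by_cases hx : x = 0
  · exact ⟨0, by simp [hx]⟩
  have hr : r = lam := weight_unique _ n A.E ⊤ (rep_sys A) r lam x A.hv trivial trivial hx A.hv_ne h
    (rep_sing A)
  subst hr
  obtain ⟨a1, _⟩ := hws_simple _ n A.E ⊤ (rep_sys A) r A.hv trivial A.hv_ne (rep_sing A)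
  have hspan := (a1 (Submodule.span ℂ {A.hv}) (by
    rw [Submodule.span_le, Set.singleton_subset_iff]
    exact ⟨trivial, rep_sing A⟩) (fun e => e.elim)).resolve_left (by
      rw [Submodule.span_singleton_eq_bot]; exact A.hv_ne)
  have : x ∈ Submodule.span ℂ {A.hv} := by rw [hspan]; exact ⟨trivial, h⟩
  obtain ⟨c, hc⟩ := Submodule.mem_span_singleton.1 this
  exact ⟨c, hc.symm⟩

/-- The first factor acting on the tensor product. -/
noncomputable def tE (A : GLRep n lam) (B : GLRep n mu) (i j : Fin n) :
    A.V ⊗[ℂ] B.V →ₗ[ℂ] A.V ⊗[ℂ] B.V := TensorProduct.map (A.E i j) LinearMap.id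

/-- The second factor acting on the tensor product. -/
noncomputable def tF (A : GLRep n lam) (B : GLRep n mu) (i j : Fin n) :
    A.V ⊗[ℂ] B.V →ₗ[ℂ] A.V ⊗[ℂ] B.V := TensorProduct.map LinearMap.id (B.E i j)

lemma tE_tmul (A : GLRep n lam) (B : GLRep n mu) (i j : Fin n) (a : A.V) (b : B.V) :
    tE A B i j (a ⊗ₜ b) = A.E i j a ⊗ₜ b := rfl

lemma tF_tmul (A : GLRep n lam) (B : GLRep n mu) (i j : Fin n) (a : A.V) (b : B.V) :
    tF A B i j (a ⊗ₜ b) = a ⊗ₜ B.E i j b := rfl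

lemma tE_rel (A : GLRep n lam) (B : GLRep n mu) : GLRel (tE A B) := by
  intro i j k l x
  induction x using TensorProduct.induction_on with
  | zero => simp
  | tmul a b =>
    simp only [tE_tmul]
    rw [rep_rel A i j k l a, TensorProduct.sub_tmul, TensorProduct.add_tmul]
    congr 2 <;> split_ifs <;> simp
  | add x y hx hy =>
    simp only [map_add]
    rw [hx, hy]
    split_ifs <;> abel

lemma tF_rel (A : GLRep n lam) (B : GLRep n mu) : GLRel (tF A B) := by
  intro i j k l x
  induction x using TensorProduct.induction_on with
  | zero => simp
  | tmul a b =>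
    simp only [tF_tmul]
    rw [rep_rel B i j k l b, TensorProduct.tmul_sub, TensorProduct.tmul_add]
    congr 2 <;> split_ifs <;> simp
  | add x y hx hy =>
    simp only [map_add]
    rw [hx, hy]
    split_ifs <;> abel

/-- Contraction of the second factor. -/
noncomputable def contr (A : GLRep n lam) (B : GLRep n mu) (g : Dual ℂ B.V) :
    A.V ⊗[ℂ] B.V →ₗ[ℂ] A.V :=
  (TensorProduct.rid ℂ A.V).toLinearMap ∘ₗ TensorProduct.map LinearMap.id g

lemma contr_tmul (A : GLRep n lam) (B : GLRep n mu) (g : Dual ℂ B.V) (a : A.V) (b : B.V) :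
    contr A B g (a ⊗ₜ b) = g b • a := by
  simp [contr]

lemma contr_tE (A : GLRep n lam) (B : GLRep n mu) (g : Dual ℂ B.V) (i j : Fin n)
    (x : A.V ⊗[ℂ] B.V) : contr A B g (tE A B i j x) = A.E i j (contr A B g x) := by
  induction x using TensorProduct.induction_on with
  | zero => simp
  | tmul a b => rw [tE_tmul, contr_tmul, contr_tmul, map_smul]
  | add x y hx hy => simp only [map_add, hx, hy]

lemma contr_sum (A : GLRep n lam) (B : GLRep n mu) {κ : Type} [Fintype κ] (b : Basis κ ℂ B.V)
    (x : A.V ⊗[ℂ] B.V) : x = ∑ k, contr A B (b.coord k) x ⊗ₜ b k := by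
  induction x using TensorProduct.induction_on with
  | zero => simp
  | tmul a y =>
    simp only [contr_tmul, TensorProduct.smul_tmul]
    rw [← TensorProduct.tmul_sum]
    congr 1
    exact (b.sum_repr y).symm
  | add x y hx hy =>
    simp only [map_add, TensorProduct.add_tmul, Finset.sum_add_distrib]
    rw [← hx, ← hy]

lemma sing_tmul (A : GLRep n lam) (B : GLRep n mu) {r : Fin n → ℂ} {x : A.V ⊗[ℂ] B.V}
    (h : Sing (tE A B) r x) : ∃ y : B.V, x = A.hv ⊗ₜ y := by
  let b := Module.finBasis ℂ B.V
  have h1 : ∀ k, ∃ c : ℂ, contr A B (b.coord k) x = c • A.hv := by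
    intro k
    refine rep_hv A (r := r) ⟨fun i j hij => ?_, fun i => ?_⟩
    · rw [← contr_tE, h.1 i j hij, map_zero]
    · rw [← contr_tE, h.2 i, map_smul]
  choose c hc using h1
  refine ⟨∑ k, c k • b k, ?_⟩
  rw [contr_sum A B b x, TensorProduct.tmul_sum]
  refine Finset.sum_congr rfl fun k _ => ?_
  rw [hc, TensorProduct.smul_tmul]

lemma tensor_simple (A : GLRep n lam) (B : GLRep n mu) (U : Submodule ℂ (A.V ⊗[ℂ] B.V))
    (h1 : Stab2 (tE A B) U) (h2 : Stab2 (tF A B) U) : U = ⊥ ∨ U = ⊤ := by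
  by_cases hU : U = ⊥
  · exact Or.inl hU
  right
  obtain ⟨r, x, hxU, hx0, hx⟩ := exists_sing n (tE A B) (tE_rel A B) U hU h1
  obtain ⟨y, rfl⟩ := sing_tmul A B hx
  have hy0 : y ≠ 0 := by rintro rfl; exact hx0 (TensorProduct.tmul_zero _ _)
  have hB : U.comap (TensorProduct.mk ℂ A.V B.V A.hv) = ⊤ := by
    refine (B.irreducible _ fun i j b hb => ?_).resolve_left fun h0 => hy0 ?_
    · exact h2 i j _ hb
    · have : y ∈ U.comap (TensorProduct.mk ℂ A.V B.V A.hv) := hxU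
      rwa [h0, Submodule.mem_bot] at this
  have hA : ∀ b : B.V, U.comap ((TensorProduct.mk ℂ A.V B.V).flip b) = ⊤ := by
    intro b
    refine (A.irreducible _ fun i j a ha => ?_).resolve_left fun h0 => A.hv_ne ?_
    · exact h1 i j _ ha
    · have h3 : b ∈ U.comap (TensorProduct.mk ℂ A.V B.V A.hv) := by rw [hB]; trivial
      have : A.hv ∈ U.comap ((TensorProduct.mk ℂ A.V B.V).flip b) := h3
      rwa [h0, Submodule.mem_bot] at this
  rw [eq_top_iff]
  intro x _
  induction x using TensorProduct.induction_on with
  | zero => exact zero_mem _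
  | tmul a b =>
    have : a ∈ U.comap ((TensorProduct.mk ℂ A.V B.V).flip b) := by rw [hA]; trivial
    exact this
  | add x y hx hy => exact add_mem (hx trivial) (hy trivial)

lemma tensor_bi (A : GLRep n lam) (B : GLRep n mu) :
    Bi (tE A B) (tF A B) lam mu (A.hv ⊗ₜ B.hv) where
  relE := tE_rel A B
  relF := tF_rel A B
  comm := by
    intro i j k l x
    induction x using TensorProduct.induction_on with
    | zero => simp
    | tmul a b => rfl
    | add x y hx hy => simp only [map_add, hx, hy]
  simple := tensor_simple A B
  ne := by
    obtain ⟨g, hg⟩ : ∃ g : Dual ℂ B.V, g B.hv ≠ 0 := by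
      by_contra! hall
      exact B.hv_ne ((Module.forall_dual_apply_eq_zero_iff ℂ _).1 hall)
    intro h0
    have := congrArg (contr A B g) h0
    rw [contr_tmul, map_zero] at this
    exact (smul_ne_zero hg A.hv_ne) this
  sE := ⟨fun i j hij => by rw [tE_tmul, A.hv_upper i j hij, TensorProduct.zero_tmul],
    fun i => by rw [tE_tmul, A.hv_diag, TensorProduct.smul_tmul']⟩
  sF := ⟨fun i j hij => by rw [tF_tmul, B.hv_upper i j hij, TensorProduct.tmul_zero],
    fun i => by rw [tF_tmul, B.hv_diag, TensorProduct.tmul_smul]⟩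

end Tensor

end YIrr

/-- If for each pair of indices `i < j` the separation condition
holds, then the `Y(gl_n)`-module `L(λ) ⊗ L(μ)` is irreducible. -/
theorem tensorEval_irreducible_of_sepCond
    (n : ℕ) (lam mu : Fin n → ℂ)
    (hlam : IsGLHighestWeight n lam) (hmu : IsGLHighestWeight n mu)
    (hsep : ∀ i j : Fin n, i < j → SepCond n lam mu i j)
    (A : GLRep n lam) (B : GLRep n mu) :
    YangianIrred2 A B := by
  intro U h1 h2
  refine YIrr.TT_all n _ _ _ lam mu _ (YIrr.tensor_bi A B) hsep U h1 ?_
  intro i j x hx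
  have e : YIrr.T2 (YIrr.tE A B) (YIrr.tF A B) i j = t2 A B i j := by
    unfold YIrr.T2 t2
    refine Finset.sum_congr rfl fun a _ => ?_
    exact TensorProduct.ext' fun a b => rfl
  rw [e]
  exact h2 i j x hx
end
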